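/- Let U(R) = 10(1+R²/3)^{−2} − (20R²/3)(1+R²/3)^{−3}, let φ(·,ξ) be the solution of −φ'' − 5(1+R²/3)^{−2} φ = ξφ with φ(0,ξ)=0, ∂_Rφ(0,ξ)=1, and define F(ξ,η) = ∫₀^∞ U(R) φ(R,ξ) φ(R,η) dR for ξ, η > 0. Then F is symmetric (F(ξ,η) = F(η,ξ)), of class C² on (0,∞) × (0,∞), and for every integer N there is a constant C_N such that: |F(ξ,η)| ≤ C_N (ξ+η) when ξ+η ≤ 1 and |F(ξ,η)| ≤ C_N (ξ+η)^{−1} (1+|√ξ−√η|)^{−N} when ξ+η ≥ 1; |∂_ξ F| + |∂_η F| ≤ C_N when ξ+η ≤ 1 and ≤ C_N (ξ+η)^{−3/2} (1+|√ξ−√η|)^{−N} when ξ+η ≥ 1; and all second derivatives ∂^j_ξ ∂^k_η F with j+k = 2 are bounded by C_N (ξ+η)^{−1/2} when ξ+η ≤ 1 and by C_N (ξ+η)^{−2} (1+|√ξ−√η|)^{−N} when ξ+η ≥ 1. -/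

import Mathlib

/-!
`U = 20 w³ - 10 w²` with `w = (1 + R² / 3)⁻¹`, so `F` and its derivatives are combinations of
weighted pairings `∫ wⁿ ∂_ξ^j φ(R, ξ) ∂_η^l φ(R, η) dR`. The double commutator of `𝓛` with `wⁿ`
turns `(ξ - η)²` times such a pairing into pairings of higher weight or with fewer derivatives. At
high energy, iterating this identity gives arbitrary decay off the diagonal, whereas near the
diagonal a priori bounds for the equation `𝓛 φ = ξ φ` and its `ξ`-derivatives suffice.

At low energy, `F` vanishes at `(0, 0)` by the virial identity `⟨U φ, φ⟩ = 0` for the zero-energy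
resonance, which gives `F = O(ξ + η)`. The second derivatives are split at `R ~ (ξ + η)^(-1/2)`:
inside, the jet grows as it does at zero energy; outside, either `ξ` and `η` are comparable and the
oscillatory regime gives the bound, or the commutator identity applies.
-/

open MeasureTheory

noncomputable section

namespace TransferenceKernel

/-- `U(R) = 10(1+R²/3)^{-2} - (20R²/3)(1+R²/3)^{-3}`, from `[𝓛, R∂_R] = 2𝓛 + U`. -/
def U (R : ℝ) : ℝ := 10 / (1 + R ^ 2 / 3) ^ 2 - (20 * R ^ 2 / 3) / (1 + R ^ 2 / 3) ^ 3

open Set Filter Topology Asymptotics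

/-! ### Linear differential equations -/

section LinearGrowth

variable {E : Type*} [NormedAddCommGroup E] [NormedSpace ℝ E] [FiniteDimensional ℝ E]
  {v : E → E} {K : ℝ}

theorem exists_isMIntegralCurveOn_of_linear_growth (hv : ContDiff ℝ 1 v) (hK : 0 < K)
    (hgrowth : ∀ x, ‖v x‖ ≤ K * (1 + ‖x‖)) (x : E) :
    ∃ γ : ℝ → E, γ 0 = x ∧
      IsMIntegralCurveOn (I := modelWithCornersSelf ℝ E) γ v (Ioo (-(2 * K)⁻¹) (2 * K)⁻¹) := by
  set a : ℝ := 1 + ‖x‖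
  have ha0 : 0 < a := by positivity
  have hbound : ∀ y ∈ Metric.closedBall x a, ‖v y‖ ≤ K * (2 * a) := fun y hy => by
    have hy' : ‖y‖ ≤ ‖x‖ + a := norm_le_of_mem_closedBall hy
    exact (hgrowth y).trans (by gcongr; linarith)
  obtain ⟨L, hL⟩ := hv.locallyLipschitz.locallyLipschitzOn.exists_lipschitzOnWith_of_compact
    (isCompact_closedBall x a)
  have : 0 < (2 * K)⁻¹ := by positivity
  have hpl : IsPicardLindelof (fun _ => v) (tmin := -(2 * K)⁻¹) (tmax := (2 * K)⁻¹)
      ⟨0, by simpa using hK.le⟩ x ⟨a, ha0.le⟩ 0 ⟨K * (2 * a), by positivity⟩ L := by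
    refine .of_time_independent hbound hL ?_
    rw [sub_zero, zero_sub, neg_neg, max_self, NNReal.coe_zero, sub_zero]
    change K * (2 * a) * (2 * K)⁻¹ ≤ a
    exact le_of_eq (by field_simp)
  obtain ⟨γ, hγ0, hγ⟩ := hpl.exists_eq_forall_mem_Icc_hasDerivWithinAt₀
  refine ⟨γ, hγ0, fun t ht => ?_⟩
  exact (hγ t (Ioo_subset_Icc_self ht)).hasFDerivWithinAt.mono Ioo_subset_Icc_self
    |>.hasMFDerivWithinAt

theorem exists_integralCurve_of_linear_growth (hv : ContDiff ℝ 1 v) (hK : 0 < K)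
    (hgrowth : ∀ x, ‖v x‖ ≤ K * (1 + ‖x‖)) (x : E) :
    ∃ γ : ℝ → E, γ 0 = x ∧ ∀ t, HasDerivAt γ (v (γ t)) t := by
  obtain ⟨γ, hγ0, hγ⟩ := exists_isMIntegralCurve_of_isMIntegralCurveOn
    (I := modelWithCornersSelf ℝ E) (contMDiff_vectorSpace_iff_contDiff.2 hv)
    (by positivity) (exists_isMIntegralCurveOn_of_linear_growth hv hK hgrowth) x
  exact ⟨γ, hγ0, fun t => hasDerivAt_iff_hasFDerivAt.2 (hγ t).hasFDerivAt⟩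

end LinearGrowth

section Gronwall

variable {E E' α α' : ℝ → ℝ} {a b β : ℝ}

theorem le_exp_sub_mul_of_deriv_le (hab : a ≤ b) (hE : ∀ x ∈ Icc a b, HasDerivAt E (E' x) x)
    (hα : ∀ x ∈ Icc a b, HasDerivAt α (α' x) x) (hα' : ∀ x ∈ Icc a b, 0 ≤ α' x) (hβ : 0 ≤ β)
    (h : ∀ x ∈ Icc a b, E' x ≤ α' x * E x + β) :
    E b ≤ Real.exp (α b - α a) * (E a + β * (b - a)) := by
  have hmono : MonotoneOn α (Icc a b) := monotoneOn_of_deriv_nonneg (convex_Icc a b)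
    (fun x hx => (hα x hx).continuousAt.continuousWithinAt)
    (fun x hx => (hα x (interior_subset hx)).differentiableAt.differentiableWithinAt)
    fun x hx => (hα x (interior_subset hx)).deriv ▸ hα' x (interior_subset hx)
  let G x := Real.exp (α a - α x) * E x - β * (x - a)
  have hG : ∀ x ∈ Icc a b,
      HasDerivAt G (Real.exp (α a - α x) * (E' x - α' x * E x) - β) x := fun x hx =>
    ((((hα x hx).const_sub (α a)).exp.mul (hE x hx)).sub
      (((hasDerivAt_id x).sub_const a).const_mul β)).congr_deriv (by ring)
  have hanti : AntitoneOn G (Icc a b) := by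
    refine antitoneOn_of_deriv_nonpos (convex_Icc a b)
      (fun x hx => (hG x hx).continuousAt.continuousWithinAt)
      (fun x hx => (hG x (interior_subset hx)).differentiableAt.differentiableWithinAt)
      fun x hx => ?_
    have hx := interior_subset hx
    rw [(hG x hx).deriv, sub_nonpos]
    have hexp : Real.exp (α a - α x) ≤ 1 := Real.exp_le_one_iff.2
      (sub_nonpos.2 (hmono (left_mem_Icc.2 hab) hx hx.1))
    calc _ ≤ Real.exp (α a - α x) * β := by gcongr; linarith [h x hx]
      _ ≤ β := mul_le_of_le_one_left hβ hexp
  have hGb : Real.exp (α a - α b) * E b ≤ E a + β * (b - a) := by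
    have := hanti (left_mem_Icc.2 hab) (right_mem_Icc.2 hab) hab
    simp only [G, sub_self, Real.exp_zero, one_mul, mul_zero, sub_zero] at this
    linarith
  calc E b = Real.exp (α b - α a) * (Real.exp (α a - α b) * E b) := by
        rw [← mul_assoc, ← Real.exp_add]; simp
    _ ≤ _ := by gcongr

end Gronwall

/-- `v = u'` and `u'' + Q u + f = 0` on the whole line. -/
structure IsSolution (Q u v f : ℝ → ℝ) : Prop where
  hasDerivAt (R : ℝ) : HasDerivAt u (v R) R
  hasDerivAt_deriv (R : ℝ) : HasDerivAt v (-Q R * u R - f R) R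

namespace IsSolution

variable {Q u v f : ℝ → ℝ} {B M : ℝ}

theorem continuous (h : IsSolution Q u v f) : Continuous u :=
  continuous_iff_continuousAt.2 fun R => (h.hasDerivAt R).continuousAt

theorem continuous_deriv (h : IsSolution Q u v f) : Continuous v :=
  continuous_iff_continuousAt.2 fun R => (h.hasDerivAt_deriv R).continuousAt

theorem sq_add_sq_le (h : IsSolution Q u v f) (hQ : ∀ R, |Q R| ≤ B) {b : ℝ} (hb : 0 ≤ b)
    (hf : ∀ R ∈ Icc 0 b, |f R| ≤ M) :
    u b ^ 2 + v b ^ 2 ≤ Real.exp ((2 + B) * b) * (u 0 ^ 2 + v 0 ^ 2 + M ^ 2 * b) := by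
  have hB : 0 ≤ B := (abs_nonneg _).trans (hQ 0)
  have := le_exp_sub_mul_of_deriv_le (E := fun R => u R ^ 2 + v R ^ 2)
    (α := fun R => (2 + B) * R) (α' := fun _ => 2 + B) (β := M ^ 2) hb
    (fun R _ => ((h.hasDerivAt R).pow 2).add ((h.hasDerivAt_deriv R).pow 2))
    (fun R _ => ((hasDerivAt_id R).const_mul (2 + B)).congr_deriv (mul_one _))
    (fun R _ => by positivity) (sq_nonneg M) fun R hR => ?_
  · simpa using this
  have hf2 : f R ^ 2 ≤ M ^ 2 := sq_le_sq' (abs_le.1 (hf R hR)).1 (abs_le.1 (hf R hR)).2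
  have hQ' : -(Q R * (2 * u R * v R)) ≤ B * (u R ^ 2 + v R ^ 2) := by
    refine (neg_le_abs _).trans ?_
    rw [abs_mul]
    gcongr
    · exact hQ R
    · exact abs_le.2 ⟨by nlinarith [sq_nonneg (u R + v R)], by nlinarith [sq_nonneg (u R - v R)]⟩
  simp only [Nat.cast_ofNat, Nat.add_one_sub_one, pow_one]
  nlinarith [sq_nonneg (u R - v R), sq_nonneg (v R + f R)]

theorem abs_le_of_zero_data (h : IsSolution Q u v f) (hQ : ∀ R, |Q R| ≤ B) (hu : u 0 = 0)
    (hv : v 0 = 0) {b : ℝ} (hf : ∀ R ∈ Icc 0 b, |f R| ≤ M) :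
    ∀ R ∈ Icc 0 b, |u R| ≤ √(Real.exp ((2 + B) * b) * b) * M := fun R hR => by
  have hB : 0 ≤ B := (abs_nonneg _).trans (hQ 0)
  have hM : 0 ≤ M := (abs_nonneg _).trans (hf R hR)
  have hb : 0 ≤ b := hR.1.trans hR.2
  rw [← Real.sqrt_sq hM, ← Real.sqrt_mul (by positivity)]
  refine Real.abs_le_sqrt ?_
  have hsol := h.sq_add_sq_le hQ hR.1 fun s hs => hf s ⟨hs.1, hs.2.trans hR.2⟩
  calc u R ^ 2 ≤ Real.exp ((2 + B) * R) * (M ^ 2 * R) := by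
        rw [hu, hv] at hsol; linarith [sq_nonneg (v R)]
    _ ≤ Real.exp ((2 + B) * b) * (M ^ 2 * b) := by
        have := hR.1
        gcongr <;> exact hR.2
    _ = _ := by ring

theorem sub_sub_const_mul {Q₀ u₀ v₀ f₀ u₁ v₁ f₁ : ℝ → ℝ} (h : IsSolution Q u v f)
    (h₀ : IsSolution Q₀ u₀ v₀ f₀) (h₁ : IsSolution Q₀ u₁ v₁ f₁) (c : ℝ) :
    IsSolution Q (fun R => u R - u₀ R - c * u₁ R) (fun R => v R - v₀ R - c * v₁ R)
      (fun R => f R - f₀ R - c * f₁ R + (Q R - Q₀ R) * (u₀ R + c * u₁ R)) where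
  hasDerivAt R :=
    ((h.hasDerivAt R).sub (h₀.hasDerivAt R)).sub ((h₁.hasDerivAt R).const_mul c)
  hasDerivAt_deriv R := (((h.hasDerivAt_deriv R).sub (h₀.hasDerivAt_deriv R)).sub
    ((h₁.hasDerivAt_deriv R).const_mul c)).congr_deriv (by ring)

end IsSolution

section Existence

variable {Q : ℝ → ℝ} {B : ℝ}

theorem exists_isSolution_zero_source (hQ : ContDiff ℝ 1 Q) (hB : ∀ R, |Q R| ≤ B) (a b : ℝ) :
    ∃ u v, IsSolution Q u v 0 ∧ u 0 = a ∧ v 0 = b := by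
  have hB0 : 0 ≤ B := (abs_nonneg _).trans (hB 0)
  let X : ℝ × ℝ × ℝ → ℝ × ℝ × ℝ := fun x => (1, x.2.2, -Q x.1 * x.2.1)
  have hX : ContDiff ℝ 1 X := by fun_prop
  have hgrowth : ∀ x, ‖X x‖ ≤ (1 + B) * (1 + ‖x‖) := fun x => by
    have h₁ : ‖x.2.1‖ ≤ ‖x‖ := (norm_fst_le x.2).trans (norm_snd_le x)
    have h₂ : ‖x.2.2‖ ≤ ‖x‖ := (norm_snd_le x.2).trans (norm_snd_le x)
    have h₃ : ‖-Q x.1 * x.2.1‖ ≤ B * ‖x‖ := by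
      rw [norm_mul, norm_neg]
      exact mul_le_mul (hB _) h₁ (norm_nonneg _) hB0
    have h₀ : 0 ≤ B * ‖x‖ := by positivity
    refine max_le ?_ (max_le ?_ ?_)
    · rw [norm_one]; nlinarith [norm_nonneg x]
    · exact h₂.trans (by nlinarith)
    · exact h₃.trans (by nlinarith [norm_nonneg x])
  obtain ⟨γ, hγ0, hγ⟩ := exists_integralCurve_of_linear_growth hX (by positivity) hgrowth (0, a, b)
  have hd : ∀ t, HasDerivAt (fun t => (γ t).1 - t) 0 t := fun t =>
    ((hγ t).hasFDerivAt.fst.hasDerivAt.congr_deriv (by simp [X])).sub (hasDerivAt_id t)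
      |>.congr_deriv (sub_self 1)
  have hfst : ∀ t, (γ t).1 = t := fun t => by
    simpa [hγ0, sub_eq_zero] using
      is_const_of_deriv_eq_zero (fun t => (hd t).differentiableAt) (fun t => (hd t).deriv) t 0
  refine ⟨fun t => (γ t).2.1, fun t => (γ t).2.2, ⟨fun t => ?_, fun t => ?_⟩, ?_, ?_⟩
  · exact (hγ t).hasFDerivAt.snd.fst.hasDerivAt.congr_deriv (by simp [X])
  · exact (hγ t).hasFDerivAt.snd.snd.hasDerivAt.congr_deriv (by simp [X, hfst])
  · simp [hγ0]
  · simp [hγ0]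

theorem IsSolution.hasDerivAt_wronskian {Q₀ u v f u₀ v₀ : ℝ → ℝ} (h : IsSolution Q u v f)
    (h₀ : IsSolution Q₀ u₀ v₀ 0) (R : ℝ) :
    HasDerivAt (fun R => v R * u₀ R - u R * v₀ R) (-((Q R - Q₀ R) * u R + f R) * u₀ R) R :=
  (((h.hasDerivAt_deriv R).mul (h₀.hasDerivAt R)).sub
    ((h.hasDerivAt R).mul (h₀.hasDerivAt_deriv R))).congr_deriv (by simp only [Pi.zero_apply]; ring)

theorem IsSolution.wronskian_eq {u₁ v₁ u₂ v₂ : ℝ → ℝ} (h₁ : IsSolution Q u₁ v₁ 0)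
    (h₂ : IsSolution Q u₂ v₂ 0) (R : ℝ) :
    v₁ R * u₂ R - u₁ R * v₂ R = v₁ 0 * u₂ 0 - u₁ 0 * v₂ 0 :=
  have hderiv := h₁.hasDerivAt_wronskian h₂
  is_const_of_deriv_eq_zero (fun R => (hderiv R).differentiableAt)
    (fun R => (hderiv R).deriv.trans (by simp)) R 0

theorem exists_isSolution (hQ : ContDiff ℝ 1 Q) (hB : ∀ R, |Q R| ≤ B) {f : ℝ → ℝ}
    (hf : Continuous f) : ∃ u v, IsSolution Q u v f ∧ u 0 = 0 ∧ v 0 = 0 := by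
  obtain ⟨u₁, v₁, h₁, hu₁, hv₁⟩ := exists_isSolution_zero_source hQ hB 0 1
  obtain ⟨u₂, v₂, h₂, hu₂, hv₂⟩ := exists_isSolution_zero_source hQ hB 1 0
  have hwronskian : ∀ R, v₁ R * u₂ R - u₁ R * v₂ R = 1 := fun R => by
    simpa [hu₁, hv₁, hu₂, hv₂] using h₁.wronskian_eq h₂ R
  have hA : ∀ R, HasDerivAt (fun R => ∫ s in (0)..R, u₁ s * f s) (u₁ R * f R) R := fun R =>
    (h₁.continuous.mul hf).integral_hasStrictDerivAt 0 R |>.hasDerivAt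
  have hB : ∀ R, HasDerivAt (fun R => ∫ s in (0)..R, u₂ s * f s) (u₂ R * f R) R := fun R =>
    (h₂.continuous.mul hf).integral_hasStrictDerivAt 0 R |>.hasDerivAt
  refine ⟨fun R => u₂ R * (∫ s in (0)..R, u₁ s * f s) - u₁ R * ∫ s in (0)..R, u₂ s * f s,
    fun R => v₂ R * (∫ s in (0)..R, u₁ s * f s) - v₁ R * ∫ s in (0)..R, u₂ s * f s,
    ⟨fun R => ?_, fun R => ?_⟩, by simp, by simp⟩
  · exact (((h₂.hasDerivAt R).mul (hA R)).sub ((h₁.hasDerivAt R).mul (hB R))).congr_deriv (by ring)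
  · exact (((h₂.hasDerivAt_deriv R).mul (hA R)).sub
      ((h₁.hasDerivAt_deriv R).mul (hB R))).congr_deriv
        (by simp only [Pi.zero_apply]; linear_combination -f R * hwronskian R)

end Existence

/-! ### The spectral jet -/

/-- The weight `(1 + R² / 3)⁻¹`: the potential is `-5 w²` and `U = 20 w³ - 10 w²`. -/
def w (R : ℝ) : ℝ := (1 + R ^ 2 / 3)⁻¹

theorem w_pos (R : ℝ) : 0 < w R := by unfold w; positivity

theorem w_le_one (R : ℝ) : w R ≤ 1 := inv_le_one_of_one_le₀ (by nlinarith [sq_nonneg R])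

theorem w_mul (R : ℝ) : w R * (1 + R ^ 2 / 3) = 1 := inv_mul_cancel₀ (by positivity)

theorem w_zero : w 0 = 1 := by simp [w]

theorem contDiff_w : ContDiff ℝ 1 w :=
  ContDiff.inv (by fun_prop) fun R => (by positivity : 1 + R ^ 2 / 3 ≠ 0)

theorem hasDerivAt_w (R : ℝ) : HasDerivAt w (-(2 / 3) * R * w R ^ 2) R :=
  ((((hasDerivAt_pow 2 R).div_const 3).const_add 1).inv (by positivity)).congr_deriv
    (by simp only [w, Nat.cast_ofNat, Nat.add_one_sub_one, pow_one]; field_simp)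

/-- The coefficient of `u` in the equation `u'' + (5 w² + ξ) u = 0`, that is, in `𝓛 u = ξ u`. -/
def coeff (ξ R : ℝ) : ℝ := 5 * w R ^ 2 + ξ

theorem coeff_eq (ξ R : ℝ) : coeff ξ R = 5 / (1 + R ^ 2 / 3) ^ 2 + ξ := by
  simp only [coeff, w, inv_pow, div_eq_mul_inv (5 : ℝ)]

theorem contDiff_coeff (ξ : ℝ) : ContDiff ℝ 1 (coeff ξ) :=
  ((contDiff_w.pow 2).const_smul (5 : ℝ)).add contDiff_const

theorem abs_coeff_le (ξ R : ℝ) : |coeff ξ R| ≤ 5 + |ξ| := by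
  refine (abs_add_le _ _).trans (add_le_add ?_ le_rfl)
  rw [abs_of_nonneg (by positivity)]
  nlinarith [w_pos R, w_le_one R]

/-- The jet in the spectral parameter of the generalized eigenfunctions: `p j ξ = ∂_ξ^j φ(·, ξ)` and
`q j ξ = ∂_R p j ξ`. For `j = 0` the source `j * p (j - 1) ξ` vanishes, so that the truncated
subtraction is harmless. -/
structure IsSpectralJet (p q : ℕ → ℝ → ℝ → ℝ) : Prop where
  isSolution (j : ℕ) (ξ : ℝ) :
    IsSolution (coeff ξ) (p j ξ) (q j ξ) (fun R => j * p (j - 1) ξ R)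
  apply_zero (j : ℕ) (ξ : ℝ) : p j ξ 0 = 0
  deriv_zero (j : ℕ) (ξ : ℝ) : q j ξ 0 = if j = 0 then 1 else 0

theorem exists_isSpectralJet {φ φ' : ℝ → ℝ → ℝ}
    (hφ : ∀ ξ, IsSolution (coeff ξ) (φ ξ) (φ' ξ) 0) (h0 : ∀ ξ, φ ξ 0 = 0) (h1 : ∀ ξ, φ' ξ 0 = 1) :
    ∃ p q, IsSpectralJet p q ∧ p 0 = φ := by
  have hsolve : ∀ (ξ : ℝ) (f : ℝ → ℝ), ∃ u v : ℝ → ℝ, Continuous f →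
      IsSolution (coeff ξ) u v f ∧ u 0 = 0 ∧ v 0 = 0 := fun ξ f => by
    by_cases hf : Continuous f
    · obtain ⟨u, v, h⟩ := exists_isSolution (contDiff_coeff ξ) (abs_coeff_le ξ) hf
      exact ⟨u, v, fun _ => h⟩
    · exact ⟨0, 0, fun h => absurd h hf⟩
  choose S S' hS using hsolve
  let p : ℕ → ℝ → ℝ → ℝ := fun j ξ =>
    Nat.rec (φ ξ) (fun j u => S ξ fun R => ((j + 1 : ℕ) : ℝ) * u R) j
  have hcont : ∀ j ξ, Continuous (p j ξ) := fun j ξ => by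
    induction j with
    | zero => exact (hφ ξ).continuous
    | succ j ih => exact (hS ξ _ (continuous_const.mul ih)).1.continuous
  have hsucc := fun j ξ => hS ξ (fun R => ((j + 1 : ℕ) : ℝ) * p j ξ R)
    (continuous_const.mul (hcont j ξ))
  refine ⟨p, fun j ξ => Nat.casesOn j (φ' ξ) fun j => S' ξ fun R => ((j + 1 : ℕ) : ℝ) * p j ξ R,
    ⟨?_, ?_, ?_⟩, rfl⟩ <;> rintro (_ | j) ξ
  · simp only [Nat.cast_zero, zero_mul]
    exact hφ ξ
  · exact (hsucc j ξ).1
  · exact h0 ξ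
  · exact (hsucc j ξ).2.1
  · simpa using h1 ξ
  · simpa using (hsucc j ξ).2.2

namespace IsSpectralJet

variable {p q : ℕ → ℝ → ℝ → ℝ} (h : IsSpectralJet p q)
include h

theorem continuous (j : ℕ) (ξ : ℝ) : Continuous (p j ξ) := (h.isSolution j ξ).continuous

theorem continuous_deriv (j : ℕ) (ξ : ℝ) : Continuous (q j ξ) := (h.isSolution j ξ).continuous_deriv

theorem isSolution_remainder (j : ℕ) (ξ ζ : ℝ) :
    IsSolution (coeff ζ) (fun R => p j ζ R - p j ξ R - (ζ - ξ) * p (j + 1) ξ R)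
      (fun R => q j ζ R - q j ξ R - (ζ - ξ) * q (j + 1) ξ R)
      (fun R => j * (p (j - 1) ζ R - p (j - 1) ξ R - (ζ - ξ) * p j ξ R)
        + (ζ - ξ) ^ 2 * p (j + 1) ξ R) := by
  have := (h.isSolution j ζ).sub_sub_const_mul (h.isSolution j ξ) (h.isSolution (j + 1) ξ) (ζ - ξ)
  convert this using 2 with R
  simp only [coeff, Nat.add_sub_cancel, Nat.cast_add, Nat.cast_one]
  ring

theorem exists_abs_remainder_le (ξ b : ℝ) (j : ℕ) :
    ∃ C, ∀ ζ, |ζ - ξ| ≤ 1 → ∀ R ∈ Icc 0 b,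
      |p j ζ R - p j ξ R - (ζ - ξ) * p (j + 1) ξ R| ≤ C * (ζ - ξ) ^ 2 := by
  induction j using Nat.strong_induction_on with | _ j ih
  obtain ⟨C, hC⟩ : ∃ C, ∀ ζ, |ζ - ξ| ≤ 1 → ∀ R ∈ Icc 0 b,
      |j * (p (j - 1) ζ R - p (j - 1) ξ R - (ζ - ξ) * p j ξ R)| ≤ C * (ζ - ξ) ^ 2 := by
    rcases j with _ | j
    · exact ⟨0, by simp⟩
    · obtain ⟨C, hC⟩ := ih j j.lt_succ_self
      refine ⟨(j + 1 : ℕ) * C, fun ζ hζ R hR => ?_⟩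
      rw [abs_mul, Nat.abs_cast, mul_assoc]
      exact mul_le_mul_of_nonneg_left (hC ζ hζ R hR) (Nat.cast_nonneg _)
  obtain ⟨A, hA⟩ := isCompact_Icc.exists_bound_of_continuousOn
    (h.continuous (j + 1) ξ).continuousOn (s := Icc 0 b)
  refine ⟨√(Real.exp ((2 + (5 + (|ξ| + 1))) * b) * b) * (C + A), fun ζ hζ R hR => ?_⟩
  have hζ' : |ζ| ≤ |ξ| + 1 := by linarith [abs_sub_abs_le_abs_sub ζ ξ]
  rw [mul_assoc]
  refine (h.isSolution_remainder j ξ ζ).abs_le_of_zero_data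
    (fun R => (abs_coeff_le ζ R).trans (by linarith)) (by simp [h.apply_zero])
    (by simp [h.deriv_zero]) (fun s hs => ?_) R hR
  refine (abs_add_le _ _).trans ((add_le_add (hC ζ hζ s hs) ?_).trans_eq (add_mul _ _ _).symm)
  rw [abs_mul, abs_of_nonneg (sq_nonneg _), mul_comm]
  exact mul_le_mul_of_nonneg_right (hA s hs) (sq_nonneg _)

theorem hasDerivAt_spectral (j : ℕ) (ξ : ℝ) {R : ℝ} (hR : 0 ≤ R) :
    HasDerivAt (fun ζ => p j ζ R) (p (j + 1) ξ R) ξ := by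
  obtain ⟨C, hC⟩ := h.exists_abs_remainder_le ξ R j
  refine .of_isLittleO ?_
  have hO : (fun ζ => p j ζ R - p j ξ R - (ζ - ξ) * p (j + 1) ξ R)
      =O[𝓝 ξ] fun ζ => (ζ - ξ) ^ 2 := by
    refine .of_bound C (mem_of_superset (Metric.closedBall_mem_nhds ξ one_pos) fun ζ hζ => ?_)
    simpa using hC ζ hζ R (right_mem_Icc.2 hR)
  exact hO.trans_isLittleO (by simpa using isLittleO_pow_sub_sub ξ one_lt_two)

end IsSpectralJet

/-! ### A priori bounds -/

theorem w_mul_one_add_sq_le (R : ℝ) : w R * (1 + R) ^ 2 ≤ 4 := by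
  nlinarith [w_mul R, mul_nonneg (w_pos R).le (sq_nonneg (R - 3))]

section ZeroEnergy

theorem sqrt_w_sq_mul (R : ℝ) : √(w R) ^ 2 * (1 + R ^ 2 / 3) = 1 := by
  rw [Real.sq_sqrt (w_pos R).le, w_mul]

theorem sqrt_w_le_one (R : ℝ) : √(w R) ≤ 1 := Real.sqrt_le_one.2 (w_le_one R)

theorem mul_sqrt_w_le_two (R : ℝ) : R * √(w R) ≤ 2 :=
  le_of_sq_le_sq (by nlinarith [sqrt_w_sq_mul R, sq_nonneg √(w R)]) zero_le_two

theorem one_le_sqrt_w_mul {R : ℝ} (hR : 0 ≤ R) : 1 ≤ √(w R) * (1 + R) :=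
  le_of_sq_le_sq (by nlinarith [sqrt_w_sq_mul R, mul_nonneg (sq_nonneg √(w R)) hR]) (by positivity)

theorem hasDerivAt_sqrt_w (R : ℝ) :
    HasDerivAt (fun R => √(w R)) (-(1 / 3) * R * √(w R) ^ 3) R := by
  have hs : √(w R) ≠ 0 := (Real.sqrt_pos.2 (w_pos R)).ne'
  refine ((hasDerivAt_w R).sqrt (w_pos R).ne').congr_deriv ?_
  rw [div_eq_iff (by positivity)]
  nth_rw 1 [← Real.sq_sqrt (w_pos R).le]
  ring

theorem coeff_zero (R : ℝ) : coeff 0 R = 5 * √(w R) ^ 4 := by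
  rw [coeff, add_zero, ← Real.sq_sqrt (w_pos R).le, Real.sqrt_sq (Real.sqrt_nonneg _), ← pow_mul]

/-- The zero-energy solution of `𝓛 u = 0` vanishing at the origin. That it stays bounded is the
threshold resonance of `𝓛`. -/
def resonance (R : ℝ) : ℝ := (R - R ^ 3 / 3) * √(w R) ^ 3

/-- The derivative of `resonance`. -/
def resonanceDeriv (R : ℝ) : ℝ := (1 - 5 * R ^ 2 / 3) * √(w R) ^ 5

/-- The second, linearly growing, solution of `𝓛 u = 0`. -/
def growing (R : ℝ) : ℝ := (1 - 2 * R ^ 2 + R ^ 4 / 9) * √(w R) ^ 3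

/-- The derivative of `growing`. -/
def growingDeriv (R : ℝ) : ℝ := (-5 * R + 10 * R ^ 3 / 9 + R ^ 5 / 27) * √(w R) ^ 5

theorem isSolution_resonance : IsSolution (coeff 0) resonance resonanceDeriv 0 where
  hasDerivAt R := by
    refine (((hasDerivAt_id R).sub ((hasDerivAt_pow 3 R).div_const 3)).mul
      ((hasDerivAt_sqrt_w R).pow 3)).congr_deriv ?_
    simp only [resonanceDeriv, id, Pi.sub_apply, Pi.pow_apply, Nat.cast_ofNat, Nat.add_one_sub_one]
    linear_combination (-(1 - R ^ 2) * √(w R) ^ 3) * sqrt_w_sq_mul R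
  hasDerivAt_deriv R := by
    have hpoly : HasDerivAt (fun R : ℝ => 1 - 5 * R ^ 2 / 3) (-(10 * R / 3)) R :=
      ((((hasDerivAt_pow 2 R).const_mul 5).div_const 3).const_sub 1).congr_deriv (by norm_num; ring)
    refine (hpoly.mul ((hasDerivAt_sqrt_w R).pow 5)).congr_deriv ?_
    simp only [coeff_zero, resonance, Pi.zero_apply, Pi.pow_apply, Nat.cast_ofNat,
      Nat.add_one_sub_one]
    linear_combination (10 * R / 3 * √(w R) ^ 5) * sqrt_w_sq_mul R

theorem isSolution_growing : IsSolution (coeff 0) growing growingDeriv 0 where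
  hasDerivAt R := by
    have hpoly : HasDerivAt (fun R : ℝ => 1 - 2 * R ^ 2 + R ^ 4 / 9) (-4 * R + 4 * R ^ 3 / 9) R :=
      ((((hasDerivAt_pow 2 R).const_mul 2).const_sub 1).add
        ((hasDerivAt_pow 4 R).div_const 9)).congr_deriv (by norm_num; ring)
    refine (hpoly.mul ((hasDerivAt_sqrt_w R).pow 3)).congr_deriv ?_
    simp only [growingDeriv, Pi.pow_apply, Nat.cast_ofNat, Nat.add_one_sub_one]
    linear_combination (-(-4 * R + 4 * R ^ 3 / 9) * √(w R) ^ 3) * sqrt_w_sq_mul R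
  hasDerivAt_deriv R := by
    have hpoly : HasDerivAt (fun R : ℝ => -5 * R + 10 * R ^ 3 / 9 + R ^ 5 / 27)
        (-5 + 10 * R ^ 2 / 3 + 5 * R ^ 4 / 27) R :=
      ((((hasDerivAt_id R).const_mul (-5)).add
        (((hasDerivAt_pow 3 R).const_mul 10).div_const 9)).add
          ((hasDerivAt_pow 5 R).div_const 27)).congr_deriv (by norm_num; ring)
    refine (hpoly.mul ((hasDerivAt_sqrt_w R).pow 5)).congr_deriv ?_
    simp only [coeff_zero, growing, Pi.zero_apply, Pi.pow_apply, Nat.cast_ofNat,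
      Nat.add_one_sub_one]
    linear_combination (-(-5 + 10 * R ^ 2 / 3 + 5 * R ^ 4 / 27) * √(w R) ^ 5) * sqrt_w_sq_mul R

theorem wronskian_resonance_growing (R : ℝ) :
    resonanceDeriv R * growing R - resonance R * growingDeriv R = 1 := by
  rw [isSolution_resonance.wronskian_eq isSolution_growing R]
  simp [resonance, growing, resonanceDeriv, growingDeriv, w_zero]

theorem abs_resonance_le {R : ℝ} (hR : 0 ≤ R) : |resonance R| ≤ 2 := by
  have hpoly : |R - R ^ 3 / 3| ≤ R * (1 + R ^ 2 / 3) :=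
    abs_le.2 ⟨by nlinarith, by nlinarith [pow_nonneg hR 3]⟩
  rw [resonance, abs_mul, abs_of_nonneg (by positivity : 0 ≤ √(w R) ^ 3)]
  calc _ ≤ R * (1 + R ^ 2 / 3) * √(w R) ^ 3 := by gcongr
    _ = R * √(w R) := by linear_combination (R * √(w R)) * sqrt_w_sq_mul R
    _ ≤ 2 := mul_sqrt_w_le_two R

theorem abs_growing_le {R : ℝ} (hR : 0 ≤ R) : |growing R| ≤ 3 * (1 + R) := by
  have hpoly : |1 - 2 * R ^ 2 + R ^ 4 / 9| ≤ 3 * (1 + R ^ 2 / 3) ^ 2 :=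
    abs_le.2 ⟨by nlinarith [sq_nonneg R, sq_nonneg (R ^ 2)],
      by nlinarith [sq_nonneg R, sq_nonneg (R ^ 2)]⟩
  rw [growing, abs_mul, abs_of_nonneg (by positivity : 0 ≤ √(w R) ^ 3)]
  calc _ ≤ 3 * (1 + R ^ 2 / 3) ^ 2 * √(w R) ^ 3 * 1 := by rw [mul_one]; gcongr
    _ ≤ 3 * (1 + R ^ 2 / 3) ^ 2 * √(w R) ^ 3 * (√(w R) * (1 + R)) := by
      gcongr; exact one_le_sqrt_w_mul hR
    _ = 3 * (1 + R) * (√(w R) ^ 2 * (1 + R ^ 2 / 3)) ^ 2 := by ring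
    _ = 3 * (1 + R) := by rw [sqrt_w_sq_mul]; ring

theorem abs_resonanceDeriv_mul_le {R : ℝ} (hR : 0 ≤ R) : |resonanceDeriv R| * (1 + R) ≤ 15 := by
  have hpoly : |1 - 5 * R ^ 2 / 3| ≤ 5 * (1 + R ^ 2 / 3) :=
    abs_le.2 ⟨by nlinarith [sq_nonneg R], by nlinarith [sq_nonneg R]⟩
  have := Real.sqrt_nonneg (w R)
  rw [resonanceDeriv, abs_mul, abs_of_nonneg (by positivity : 0 ≤ √(w R) ^ 5)]
  calc _ ≤ 5 * (1 + R ^ 2 / 3) * √(w R) ^ 5 * (1 + R) := by gcongr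
    _ = 5 * √(w R) ^ 2 * (√(w R) + R * √(w R)) * (√(w R) ^ 2 * (1 + R ^ 2 / 3)) := by ring
    _ = 5 * √(w R) ^ 2 * (√(w R) + R * √(w R)) := by rw [sqrt_w_sq_mul, mul_one]
    _ ≤ 5 * 1 ^ 2 * (1 + 2) := by
      gcongr; exacts [sqrt_w_le_one R, sqrt_w_le_one R, mul_sqrt_w_le_two R]
    _ = 15 := by norm_num

theorem abs_growingDeriv_le {R : ℝ} (hR : 0 ≤ R) : |growingDeriv R| ≤ 10 := by
  have hpoly : |-5 * R + 10 * R ^ 3 / 9 + R ^ 5 / 27| ≤ 5 * R * (1 + R ^ 2 / 3) ^ 2 :=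
    abs_le.2 ⟨by nlinarith [pow_nonneg hR 3, pow_nonneg hR 5],
      by nlinarith [pow_nonneg hR 3, pow_nonneg hR 5]⟩
  rw [growingDeriv, abs_mul, abs_of_nonneg (by positivity : 0 ≤ √(w R) ^ 5)]
  calc _ ≤ 5 * R * (1 + R ^ 2 / 3) ^ 2 * √(w R) ^ 5 := by gcongr
    _ = 5 * (R * √(w R)) * (√(w R) ^ 2 * (1 + R ^ 2 / 3)) ^ 2 := by ring
    _ ≤ 5 * 2 * 1 ^ 2 := by rw [sqrt_w_sq_mul]; gcongr; exact mul_sqrt_w_le_two R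
    _ = 10 := by norm_num

end ZeroEnergy

namespace IsSolution

variable {k b M : ℝ} {u v f : ℝ → ℝ}

theorem eq_wronskian_mul (u v : ℝ → ℝ) (R : ℝ) :
    u R = (v R * growing R - u R * growingDeriv R) * resonance R
      - (v R * resonance R - u R * resonanceDeriv R) * growing R := by
  linear_combination (-u R) * wronskian_resonance_growing R

theorem deriv_eq_wronskian_mul (u v : ℝ → ℝ) (R : ℝ) :
    v R = (v R * growing R - u R * growingDeriv R) * resonanceDeriv R
      - (v R * resonance R - u R * resonanceDeriv R) * growingDeriv R := by
  linear_combination (-v R) * wronskian_resonance_growing R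

theorem abs_le_wronskians {L R : ℝ} (u v : ℝ → ℝ) (hR : 0 ≤ R) (hL : 1 + R ≤ L) :
    |u R| ≤ 3 * (|v R * growing R - u R * growingDeriv R|
      + |L * (v R * resonance R - u R * resonanceDeriv R)|) := by
  have hu := eq_wronskian_mul u v R
  have hL0 : 0 ≤ L := by linarith
  set a := v R * growing R - u R * growingDeriv R
  set c := v R * resonance R - u R * resonanceDeriv R
  calc |u R| = |a * resonance R - c * growing R| := by rw [← hu]
    _ ≤ |a * resonance R| + |c * growing R| := abs_sub _ _
    _ = |a| * |resonance R| + |c| * |growing R| := by rw [abs_mul, abs_mul]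
    _ ≤ |a| * 3 + |c| * (3 * L) := by
        gcongr
        · exact (abs_resonance_le hR).trans (by norm_num)
        · exact (abs_growing_le hR).trans (by gcongr)
    _ = 3 * (|a| + |L * c|) := by rw [abs_mul L, abs_of_nonneg hL0]; ring

theorem wronskian_source_le {L x S : ℝ} (hL : 0 < L) (hk : 0 ≤ k) (hkL : k * L ≤ 1) (hx : 0 ≤ x)
    (hS : S ≤ M + 3 * k ^ 2 * x) : 6 * L * x * S ≤ 19 / L * x ^ 2 + 9 * L ^ 3 * M ^ 2 := by
  have hkL' : L * k ^ 2 ≤ 1 / L := by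
    rw [le_div_iff₀ hL]; nlinarith [mul_nonneg hk hL.le]
  have hsq : 0 ≤ 1 / L * (x - 3 * L ^ 2 * M) ^ 2 := by positivity
  have hexpand : 1 / L * (x - 3 * L ^ 2 * M) ^ 2
    = 1 / L * x ^ 2 + 9 * L ^ 3 * M ^ 2 - 6 * L * M * x := by field_simp; ring
  calc 6 * L * x * S ≤ 6 * L * x * (M + 3 * k ^ 2 * x) := by gcongr
    _ = 6 * L * M * x + 18 * (L * k ^ 2) * x ^ 2 := by ring
    _ ≤ (1 / L * x ^ 2 + 9 * L ^ 3 * M ^ 2) + 18 * (1 / L) * x ^ 2 := by gcongr; linarith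
    _ = _ := by ring

theorem wronskian_sq_deriv_le {L R : ℝ} (hk : 0 ≤ k) (hkL : k * L ≤ 1) (hR : 0 ≤ R)
    (hL : 1 + R ≤ L) (hf : |f R| ≤ M) {a c S : ℝ}
    (ha : a = v R * growing R - u R * growingDeriv R)
    (hc : c = L * (v R * resonance R - u R * resonanceDeriv R))
    (hS : S = (coeff (k ^ 2) R - coeff 0 R) * u R + f R) :
    2 * (a * (-S * growing R) + c * (L * (-S * resonance R)))
      ≤ 38 / L * (a ^ 2 + c ^ 2) + 9 * L ^ 3 * M ^ 2 := by
  have hL0 : 0 < L := by linarith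
  have hu_le : |u R| ≤ 3 * (|a| + |c|) := by rw [ha, hc]; exact abs_le_wronskians u v hR hL
  have hS_le : |S| ≤ M + 3 * k ^ 2 * (|a| + |c|) := by
    rw [hS, coeff, coeff, add_sub_add_left_eq_sub, sub_zero, add_comm]
    refine (abs_add_le _ _).trans (add_le_add hf ?_)
    rw [abs_mul, abs_of_nonneg (sq_nonneg k)]
    nlinarith [sq_nonneg k]
  have hgrowing : |-S * growing R| ≤ |S| * (3 * L) := by
    rw [abs_mul, abs_neg]
    gcongr
    exact (abs_growing_le hR).trans (by linarith)
  have hresonance : |L * (-S * resonance R)| ≤ |S| * (3 * L) := by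
    rw [abs_mul, abs_mul, abs_neg, abs_of_pos hL0, mul_left_comm, mul_comm L]
    gcongr
    exact (abs_resonance_le hR).trans (by norm_num)
  have hmul {s t : ℝ} (ht : |t| ≤ |S| * (3 * L)) : s * t ≤ |s| * (|S| * (3 * L)) :=
    (le_abs_self _).trans ((abs_mul s t).trans_le (mul_le_mul_of_nonneg_left ht (abs_nonneg s)))
  calc _ ≤ 2 * (|a| * (|S| * (3 * L)) + |c| * (|S| * (3 * L))) := by
        linarith [hmul (s := a) hgrowing, hmul (s := c) hresonance]
    _ = 6 * L * (|a| + |c|) * |S| := by ring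
    _ ≤ 19 / L * (|a| + |c|) ^ 2 + 9 * L ^ 3 * M ^ 2 :=
        wronskian_source_le hL0 hk hkL (by positivity) hS_le
    _ ≤ 19 / L * (2 * (|a| ^ 2 + |c| ^ 2)) + 9 * L ^ 3 * M ^ 2 := by gcongr; exact add_sq_le
    _ = _ := by rw [sq_abs, sq_abs]; ring

-- Variation of constants against the zero-energy solutions: the coefficient of the growing one is
-- scaled by `1 + b`, so that for `k (1 + b) ≤ 1` Grönwall only loses a constant factor.
theorem wronskian_sq_add_sq_le (h : IsSolution (coeff (k ^ 2)) u v f) (hk : 0 ≤ k) (hb : 0 ≤ b)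
    (hkb : k * (1 + b) ≤ 1) (hu : u 0 = 0) (hf : ∀ R ∈ Icc 0 b, |f R| ≤ M) :
    (v b * growing b - u b * growingDeriv b) ^ 2
        + ((1 + b) * (v b * resonance b - u b * resonanceDeriv b)) ^ 2
      ≤ Real.exp 38 * (3 * (|v 0| + (1 + b) ^ 2 * M)) ^ 2 := by
  set L := 1 + b
  have hL0 : 0 < L := by positivity
  have hM : 0 ≤ M := (abs_nonneg _).trans (hf 0 (left_mem_Icc.2 hb))
  let a R := v R * growing R - u R * growingDeriv R
  let c R := L * (v R * resonance R - u R * resonanceDeriv R)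
  have hgronwall := le_exp_sub_mul_of_deriv_le (E := fun R => a R ^ 2 + c R ^ 2)
    (α := fun R => 38 / L * R) (α' := fun _ => 38 / L) (β := 9 * L ^ 3 * M ^ 2) hb
    (fun R _ => ((h.hasDerivAt_wronskian isSolution_growing R).pow 2).add
      (((h.hasDerivAt_wronskian isSolution_resonance R).const_mul L).pow 2))
    (fun R _ => ((hasDerivAt_id R).const_mul _).congr_deriv (mul_one _))
    (fun R _ => by positivity) (by positivity) fun R hR => le_of_eq_of_le
      (by simp only [a, c, Nat.cast_ofNat, Nat.add_one_sub_one, pow_one]; ring)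
      (wronskian_sq_deriv_le hk hkb hR.1 (by linarith [hR.2]) (hf R hR) rfl rfl rfl)
  have hE0 : a 0 ^ 2 + c 0 ^ 2 = |v 0| ^ 2 := by
    simp [a, c, hu, growing, resonance, w_zero]
  calc a b ^ 2 + c b ^ 2 ≤ Real.exp (38 / L * b - 38 / L * 0) *
        (|v 0| ^ 2 + 9 * L ^ 3 * M ^ 2 * (b - 0)) := hE0 ▸ hgronwall
    _ ≤ Real.exp 38 * ((3 * |v 0|) ^ 2 + 9 * L ^ 3 * M ^ 2 * L) := by
      gcongr
      · rw [mul_zero, sub_zero, div_mul_eq_mul_div, div_le_iff₀ hL0]; linarith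
      · linarith [abs_nonneg (v 0)]
      · linarith
    _ ≤ _ := by
      gcongr
      nlinarith [mul_nonneg (abs_nonneg (v 0)) (mul_nonneg (sq_nonneg L) hM)]

theorem low_energy_bound (h : IsSolution (coeff (k ^ 2)) u v f) (hk : 0 ≤ k) (hb : 0 ≤ b)
    (hkb : k * (1 + b) ≤ 1) (hu : u 0 = 0) (hf : ∀ R ∈ Icc 0 b, |f R| ≤ M) :
    |u b| ≤ 75 * Real.exp 19 * (|v 0| + (1 + b) ^ 2 * M) ∧
      |v b| * (1 + b) ≤ 75 * Real.exp 19 * (|v 0| + (1 + b) ^ 2 * M) := by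
  have hM : 0 ≤ M := (abs_nonneg _).trans (hf 0 (left_mem_Icc.2 hb))
  have hE := h.wronskian_sq_add_sq_le hk hb hkb hu hf
  have hu_le := abs_le_wronskians u v hb le_rfl
  have hv_eq := deriv_eq_wronskian_mul u v b
  set a := v b * growing b - u b * growingDeriv b
  set c := v b * resonance b - u b * resonanceDeriv b
  set K := |v 0| + (1 + b) ^ 2 * M
  have hK : 0 ≤ K := by positivity
  rw [show Real.exp 38 = Real.exp 19 ^ 2 by rw [← Real.exp_nat_mul]; norm_num, ← mul_pow] at hE
  have ha : |a| ≤ Real.exp 19 * (3 * K) :=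
    abs_le_of_sq_le_sq (by linarith [sq_nonneg ((1 + b) * c)]) (by positivity)
  have hc : |(1 + b) * c| ≤ Real.exp 19 * (3 * K) :=
    abs_le_of_sq_le_sq (by linarith [sq_nonneg a]) (by positivity)
  have h0 : 0 ≤ Real.exp 19 * K := by positivity
  refine ⟨by linarith, ?_⟩
  calc |v b| * (1 + b) ≤ (|a * resonanceDeriv b| + |c * growingDeriv b|) * (1 + b) := by
        rw [hv_eq]; gcongr; exact abs_sub _ _
    _ = |a| * (|resonanceDeriv b| * (1 + b)) + |(1 + b) * c| * |growingDeriv b| := by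
        rw [abs_mul, abs_mul, abs_mul, abs_of_nonneg (by linarith : 0 ≤ 1 + b)]; ring
    _ ≤ Real.exp 19 * (3 * K) * 15 + Real.exp 19 * (3 * K) * 10 := by
        gcongr; exacts [abs_resonanceDeriv_mul_le hb, abs_growingDeriv_le hb]
    _ = _ := by ring

theorem energy_deriv_le {R L : ℝ} (hL : 0 < L) (hR : 0 ≤ R) (hkR : 1 ≤ k * (1 + R))
    (hf : |f R| ≤ M) :
    2 * (v R * (-coeff (k ^ 2) R * u R - f R) + k * u R * (k * v R))
      ≤ (80 / (1 + R) ^ 2 + 1 / L) * (v R ^ 2 + (k * u R) ^ 2) + L * M ^ 2 := by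
  have hw0 := w_pos R
  have hw : 10 * w R ^ 2 ≤ k * (160 / (1 + R) ^ 2) := by
    have hw1 : w R * (1 + R) ≤ 4 :=
      (le_mul_of_one_le_right (by positivity) (by linarith : 1 ≤ 1 + R)).trans
        (by linarith [w_mul_one_add_sq_le R])
    have hk : 0 < k := pos_of_mul_pos_left (one_pos.trans_le hkR) (by linarith)
    rw [← mul_div_assoc, le_div_iff₀ (by positivity)]
    calc 10 * w R ^ 2 * (1 + R) ^ 2 ≤ 10 * w R ^ 2 * (1 + R) ^ 2 * (k * (1 + R)) :=
          le_mul_of_one_le_right (by positivity) hkR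
      _ = 10 * k * (w R * (1 + R)) * (w R * (1 + R) ^ 2) := by ring
      _ ≤ 10 * k * 4 * 4 := by gcongr; exact w_mul_one_add_sq_le R
      _ = k * 160 := by ring
  have hmix : -(10 * w R ^ 2 * (u R * v R)) ≤ 80 / (1 + R) ^ 2 * (v R ^ 2 + (k * u R) ^ 2) := by
    calc -(10 * w R ^ 2 * (u R * v R)) ≤ 10 * w R ^ 2 * |u R * v R| := by
          rw [← mul_neg]; gcongr; exact neg_le_abs _
      _ ≤ k * (160 / (1 + R) ^ 2) * |u R * v R| := by gcongr
      _ = 80 / (1 + R) ^ 2 * (2 * |v R| * (k * |u R|)) := by rw [abs_mul]; ring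
      _ ≤ 80 / (1 + R) ^ 2 * (|v R| ^ 2 + (k * |u R|) ^ 2) := by
          gcongr; exact two_mul_le_add_sq _ _
      _ = _ := by rw [mul_pow, mul_pow, sq_abs, sq_abs]
  have hsource : -(2 * v R * f R) ≤ 1 / L * v R ^ 2 + L * f R ^ 2 := by
    have hsq : 0 ≤ 1 / L * (v R + L * f R) ^ 2 := by positivity
    have hexpand : 1 / L * (v R + L * f R) ^ 2
      = 1 / L * v R ^ 2 + L * f R ^ 2 + 2 * v R * f R := by field_simp; ring
    linarith
  have hf2 : L * f R ^ 2 ≤ L * M ^ 2 :=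
    mul_le_mul_of_nonneg_left (sq_le_sq' (abs_le.1 hf).1 (abs_le.1 hf).2) hL.le
  have hpos : 0 ≤ 1 / L * (k * u R) ^ 2 := by positivity
  rw [coeff]
  linarith

-- Beyond `R = 1 / k` the energy `v² + k² u²` is almost conserved: the potential contributes the
-- integrable rate `80 / (1 + R)²`.
theorem energy_le {a : ℝ} (h : IsSolution (coeff (k ^ 2)) u v f) (hk : 0 < k) (ha : 0 ≤ a)
    (hab : a ≤ b) (hka : 1 ≤ k * (1 + a)) (hf : ∀ R ∈ Icc a b, |f R| ≤ M) :
    v b ^ 2 + (k * u b) ^ 2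
      ≤ Real.exp 81 * (v a ^ 2 + (k * u a) ^ 2 + ((1 + b) * M) ^ 2) := by
  have hb : 0 < 1 + b := by linarith
  have hα : ∀ R ∈ Icc a b,
      HasDerivAt (fun R => -(80 / (1 + R)) + R / (1 + b)) (80 / (1 + R) ^ 2 + 1 / (1 + b)) R :=
    fun R hR => by
      have hR0 : 1 + R ≠ 0 := by linarith [hR.1]
      exact (((((hasDerivAt_id R).const_add 1).inv hR0).const_mul 80).neg.add
        ((hasDerivAt_id R).div_const (1 + b))).congr_deriv (by simp only [id]; ring)
  have hgronwall := le_exp_sub_mul_of_deriv_le (E := fun R => v R ^ 2 + (k * u R) ^ 2)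
    (β := (1 + b) * M ^ 2) hab
    (fun R _ => ((h.hasDerivAt_deriv R).pow 2).add (((h.hasDerivAt R).const_mul k).pow 2))
    hα (fun R _ => by positivity) (by positivity) fun R hR => le_of_eq_of_le
      (by simp only [Nat.cast_ofNat, Nat.add_one_sub_one, pow_one]; ring)
      (energy_deriv_le hb (ha.trans hR.1) (hka.trans (by gcongr; exact hR.1)) (hf R hR))
  have h₁ : 80 / (1 + a) ≤ 80 := div_le_self (by norm_num) (by linarith)
  have h₂ : b / (1 + b) ≤ 1 := (div_le_one hb).2 (by linarith)
  refine hgronwall.trans ?_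
  gcongr ?_ * (_ + ?_)
  · have h₃ : 0 ≤ 80 / (1 + b) := by positivity
    have h₄ : 0 ≤ a / (1 + b) := by positivity
    exact Real.exp_le_exp.2 (by linarith)
  · nlinarith [mul_nonneg hb.le (sq_nonneg M)]

theorem energy_bound {a X : ℝ} (h : IsSolution (coeff (k ^ 2)) u v f) (hk : 0 < k) (ha : 0 ≤ a)
    (hab : a ≤ b) (hka : 1 ≤ k * (1 + a)) (hM : 0 ≤ M) (hf : ∀ R ∈ Icc a b, |f R| ≤ M)
    (hv : |v a| ≤ X) (hu : k * |u a| ≤ X) :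
    |v b| ≤ Real.exp 41 * (2 * X + (1 + b) * M) ∧
      k * |u b| ≤ Real.exp 41 * (2 * X + (1 + b) * M) := by
  have hX : 0 ≤ X := (abs_nonneg _).trans hv
  have hb : 0 ≤ (1 + b) * M := by have := ha.trans hab; positivity
  have hE : v b ^ 2 + (k * u b) ^ 2 ≤ (Real.exp 41 * (2 * X + (1 + b) * M)) ^ 2 := by
    have hv2 : v a ^ 2 ≤ X ^ 2 := sq_le_sq' (abs_le.1 hv).1 (abs_le.1 hv).2
    have hu2 : (k * u a) ^ 2 ≤ X ^ 2 := by
      rw [← sq_abs, abs_mul, abs_of_pos hk]; gcongr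
    calc _ ≤ Real.exp 81 * (v a ^ 2 + (k * u a) ^ 2 + ((1 + b) * M) ^ 2) :=
          h.energy_le hk ha hab hka hf
      _ ≤ Real.exp (2 * 41) * (2 * X + (1 + b) * M) ^ 2 := by
          gcongr ?_ * ?_
          · norm_num
          · nlinarith [mul_nonneg hX hb]
      _ = _ := by rw [mul_pow, ← Real.exp_nat_mul]; norm_num
  refine ⟨abs_le_of_sq_le_sq (by linarith [sq_nonneg (k * u b)]) (by positivity), ?_⟩
  calc k * |u b| = |k * u b| := by rw [abs_mul, abs_of_pos hk]
    _ ≤ _ := abs_le_of_sq_le_sq (by linarith [sq_nonneg (v b)]) (by positivity)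

theorem exists_energy_start (h : IsSolution (coeff (k ^ 2)) u v f) (hk : 0 < k) (hb : 0 ≤ b)
    (hkb : 1 ≤ k * (1 + b)) (hu : u 0 = 0) (hM : 0 ≤ M) (hf : ∀ R ∈ Icc 0 b, |f R| ≤ M) :
    ∃ a, 0 ≤ a ∧ a ≤ b ∧ 1 ≤ k * (1 + a) ∧
      |v a| ≤ 75 * Real.exp 19 * (min 1 k * |v 0| + (1 + b) * M) ∧
      k * |u a| ≤ 75 * Real.exp 19 * (min 1 k * |v 0| + (1 + b) * M) := by
  rcases le_total 1 k with hk1 | hk1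
  · have h1 : 1 ≤ 75 * Real.exp 19 := by linarith [Real.one_le_exp (by norm_num : (0 : ℝ) ≤ 19)]
    refine ⟨0, le_rfl, hb, by simpa using hk1, ?_, by rw [hu, abs_zero, mul_zero]; positivity⟩
    rw [min_eq_left hk1, one_mul]
    exact (le_add_of_nonneg_right (by positivity)).trans
      (le_mul_of_one_le_left (by positivity) h1)
  · have h1a : 1 + (1 / k - 1) = 1 / k := by ring
    have ha : 0 ≤ 1 / k - 1 := sub_nonneg.2 ((one_le_div hk).2 hk1)
    have hkk : k * (1 / k) = 1 := mul_one_div_cancel hk.ne'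
    have hab : 1 / k ≤ 1 + b := (div_le_iff₀' hk).2 hkb
    obtain ⟨hlow_u, hlow_v⟩ := h.low_energy_bound hk.le ha (by rw [h1a, hkk]) hu
      fun R hR => hf R ⟨hR.1, by linarith [hR.2]⟩
    rw [h1a] at hlow_u hlow_v
    have hle : k * (75 * Real.exp 19 * (|v 0| + (1 / k) ^ 2 * M))
        ≤ 75 * Real.exp 19 * (min 1 k * |v 0| + (1 + b) * M) := by
      calc _ = 75 * Real.exp 19 * (k * |v 0| + k * (1 / k) * (1 / k * M)) := by ring
        _ ≤ _ := by rw [hkk, one_mul, min_eq_right hk1]; gcongr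
    refine ⟨1 / k - 1, ha, by linarith, by rw [h1a, hkk], ?_,
      (mul_le_mul_of_nonneg_left hlow_u hk.le).trans hle⟩
    calc |v (1 / k - 1)| = k * (|v (1 / k - 1)| * (1 / k)) := by rw [mul_left_comm, hkk, mul_one]
      _ ≤ _ := (mul_le_mul_of_nonneg_left hlow_v hk.le).trans hle

theorem high_energy_bound (h : IsSolution (coeff (k ^ 2)) u v f) (hb : 0 ≤ b)
    (hkb : 1 ≤ k * (1 + b)) (hu : u 0 = 0) (hf : ∀ R ∈ Icc 0 b, |f R| ≤ M) :
    |v b| ≤ 151 * Real.exp 60 * (min 1 k * |v 0| + (1 + b) * M) ∧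
      k * |u b| ≤ 151 * Real.exp 60 * (min 1 k * |v 0| + (1 + b) * M) := by
  have hM : 0 ≤ M := (abs_nonneg _).trans (hf 0 (left_mem_Icc.2 hb))
  have hk0 : 0 < k := pos_of_mul_pos_left (one_pos.trans_le hkb) (by linarith)
  obtain ⟨a, ha, hab, hka, hva, hua⟩ := h.exists_energy_start hk0 hb hkb hu hM hf
  set Y := min 1 k * |v 0| + (1 + b) * M
  have hMY : (1 + b) * M ≤ Y := le_add_of_nonneg_left (by positivity)
  have hexp : Real.exp 60 = Real.exp 41 * Real.exp 19 := by rw [← Real.exp_add]; norm_num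
  have hconst : Real.exp 41 * (2 * (75 * Real.exp 19 * Y) + (1 + b) * M)
      ≤ 151 * Real.exp 60 * Y := by
    have hY : Y ≤ Real.exp 19 * Y :=
      le_mul_of_one_le_left (by positivity) (Real.one_le_exp (by norm_num))
    calc _ ≤ Real.exp 41 * (2 * (75 * Real.exp 19 * Y) + Real.exp 19 * Y) := by
          gcongr _ * (_ + ?_); exact hMY.trans hY
      _ = _ := by rw [hexp]; ring
  have := h.energy_bound hk0 ha hab hka hM (fun R hR => hf R ⟨ha.trans hR.1, hR.2⟩) hva hua
  exact ⟨this.1.trans hconst, this.2.trans hconst⟩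

theorem seventyFive_mul_exp_le : 75 * Real.exp 19 ≤ 151 * Real.exp 60 := by
  gcongr <;> norm_num

theorem abs_mul_sqrt_le (h : IsSolution (coeff (k ^ 2)) u v f) (hk : 0 ≤ k) (hb : 0 ≤ b)
    (hu : u 0 = 0) (hf : ∀ R ∈ Icc 0 b, |f R| ≤ M) :
    |u b| * √(1 + k ^ 2) ≤ 302 * Real.exp 60 * (|v 0| + (1 + b) ^ 2 * M) := by
  have hM : 0 ≤ M := (abs_nonneg _).trans (hf 0 (left_mem_Icc.2 hb))
  have hsqrt : √(1 + k ^ 2) ≤ 1 + k :=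
    Real.sqrt_le_iff.2 ⟨by positivity, by nlinarith⟩
  suffices |u b| ≤ 151 * Real.exp 60 * (|v 0| + (1 + b) ^ 2 * M) ∧
      k * |u b| ≤ 151 * Real.exp 60 * (|v 0| + (1 + b) ^ 2 * M) by
    nlinarith [abs_nonneg (u b)]
  rcases le_total (k * (1 + b)) 1 with hkb | hkb
  · have hk1 : k ≤ 1 := by nlinarith
    have hlow := (h.low_energy_bound hk hb hkb hu hf).1.trans
      (mul_le_mul_of_nonneg_right seventyFive_mul_exp_le (by positivity))
    exact ⟨hlow, (mul_le_of_le_one_left (abs_nonneg _) hk1).trans hlow⟩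
  · have hhigh := (h.high_energy_bound hb hkb hu hf).2
    have hk0 : 0 < k := pos_of_mul_pos_left (one_pos.trans_le hkb) (by linarith)
    constructor
    · refine le_of_mul_le_mul_left (hhigh.trans ?_) hk0
      calc _ ≤ 151 * Real.exp 60 * (k * |v 0| + (k * (1 + b)) * ((1 + b) * M)) := by
            gcongr _ * (?_ * _ + ?_)
            · exact min_le_right _ _
            · exact le_mul_of_one_le_left (by positivity) hkb
        _ = _ := by ring
    · refine hhigh.trans ?_
      gcongr
      · exact mul_le_of_le_one_left (abs_nonneg _) (min_le_left _ _)
      · exact le_self_pow₀ (by linarith) two_ne_zero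

theorem mul_abs_le (h : IsSolution (coeff (k ^ 2)) u v f) (hk : 0 ≤ k) (hb : 0 ≤ b)
    (hu : u 0 = 0) (hv : v 0 = 0) (hf : ∀ R ∈ Icc 0 b, |f R| ≤ M) :
    k * |u b| ≤ 151 * Real.exp 60 * ((1 + b) * M) := by
  have hM : 0 ≤ M := (abs_nonneg _).trans (hf 0 (left_mem_Icc.2 hb))
  rcases le_total (k * (1 + b)) 1 with hkb | hkb
  · have hlow := (h.low_energy_bound hk hb hkb hu hf).1
    rw [hv, abs_zero, zero_add] at hlow
    calc k * |u b| ≤ k * (75 * Real.exp 19 * ((1 + b) ^ 2 * M)) := by gcongr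
      _ = 75 * Real.exp 19 * (k * (1 + b)) * ((1 + b) * M) := by ring
      _ ≤ 75 * Real.exp 19 * 1 * ((1 + b) * M) := by gcongr
      _ ≤ _ := by rw [mul_one]; gcongr ?_ * _; exact seventyFive_mul_exp_le
  · simpa [hv] using (h.high_energy_bound hb hkb hu hf).2

theorem abs_deriv_le (h : IsSolution (coeff (k ^ 2)) u v f) (hk : 0 ≤ k) (hb : 0 ≤ b)
    (hu : u 0 = 0) (hf : ∀ R ∈ Icc 0 b, |f R| ≤ M) :
    |v b| ≤ 151 * Real.exp 60 * (|v 0| + (1 + b) * M) := by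
  have hM : 0 ≤ M := (abs_nonneg _).trans (hf 0 (left_mem_Icc.2 hb))
  rcases le_total (k * (1 + b)) 1 with hkb | hkb
  · refine le_of_mul_le_mul_right ((h.low_energy_bound hk hb hkb hu hf).2.trans ?_)
      (by linarith : 0 < 1 + b)
    calc _ ≤ 151 * Real.exp 60 * (|v 0| * (1 + b) + (1 + b) ^ 2 * M) := by
          gcongr ?_ * (?_ + _)
          · exact seventyFive_mul_exp_le
          · exact le_mul_of_one_le_right (abs_nonneg _) (by linarith)
      _ = _ := by ring
  · refine (h.high_energy_bound hb hkb hu hf).1.trans ?_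
    gcongr
    exact mul_le_of_le_one_left (abs_nonneg _) (min_le_left _ _)

end IsSolution

theorem abs_source_le (p : ℕ → ℝ → ℝ → ℝ) {j m : ℕ} {A ξ R : ℝ} (hA : 0 ≤ A)
    (hp : ∀ s, 0 ≤ s → |p j ξ s| ≤ A * (1 + s) ^ m) :
    ∀ s ∈ Icc 0 R, |((j + 1 : ℕ) : ℝ) * p (j + 1 - 1) ξ s| ≤ (j + 1 : ℕ) * (A * (1 + R) ^ m) :=
  fun s hs => by
    have hs0 := hs.1
    rw [abs_mul, Nat.abs_cast, Nat.add_sub_cancel]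
    gcongr
    exact (hp s hs0).trans (by gcongr; exact hs.2)

namespace IsSpectralJet

variable {p q : ℕ → ℝ → ℝ → ℝ} (h : IsSpectralJet p q)
include h

theorem isSolution_sqrt_sq (j : ℕ) {ξ : ℝ} (hξ : 0 ≤ ξ) :
    IsSolution (coeff (√ξ ^ 2)) (p j ξ) (q j ξ) fun R => j * p (j - 1) ξ R := by
  rw [Real.sq_sqrt hξ]; exact h.isSolution j ξ

theorem exists_abs_mul_sqrt_pow_le (j : ℕ) : ∃ C, 0 ≤ C ∧ ∀ ξ, 0 ≤ ξ → ∀ R, 0 ≤ R →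
    |p j ξ R| * √(1 + ξ) ^ (j + 1) ≤ C * (1 + R) ^ (2 * j) := by
  induction j with
  | zero =>
    refine ⟨302 * Real.exp 60, by positivity, fun ξ hξ R hR => ?_⟩
    have := (h.isSolution_sqrt_sq 0 hξ).abs_mul_sqrt_le (M := 0) (Real.sqrt_nonneg ξ) hR
      (h.apply_zero 0 ξ) (by simp)
    simpa [h.deriv_zero, Real.sq_sqrt hξ] using this
  | succ j ih =>
    obtain ⟨C, hC0, hC⟩ := ih
    refine ⟨302 * Real.exp 60 * ((j + 1 : ℕ) * C), by positivity, fun ξ hξ R hR => ?_⟩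
    have : 0 < √(1 + ξ) := Real.sqrt_pos.2 (by linarith)
    have := (h.isSolution_sqrt_sq (j + 1) hξ).abs_mul_sqrt_le (Real.sqrt_nonneg ξ) hR
      (h.apply_zero _ ξ) (abs_source_le p (A := C / √(1 + ξ) ^ (j + 1)) (m := 2 * j)
        (by positivity) fun s hs => by
          rw [div_mul_eq_mul_div, le_div_iff₀ (by positivity)]; exact hC ξ hξ s hs)
    rw [h.deriv_zero, if_neg j.succ_ne_zero, abs_zero, zero_add, Real.sq_sqrt hξ] at this
    calc _ = |p (j + 1) ξ R| * √(1 + ξ) * √(1 + ξ) ^ (j + 1) := by ring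
      _ ≤ 302 * Real.exp 60 * ((1 + R) ^ 2 *
          ((j + 1 : ℕ) * (C / √(1 + ξ) ^ (j + 1) * (1 + R) ^ (2 * j)))) * √(1 + ξ) ^ (j + 1) := by
        gcongr
      _ = _ := by field_simp; ring

theorem exists_abs_mul_sqrt_mul_sqrt_pow_le (j : ℕ) : ∃ C, 0 ≤ C ∧ ∀ ξ, 0 ≤ ξ → ∀ R, 0 ≤ R →
    |p j ξ R| * (√(1 + ξ) * √ξ ^ j) ≤ C * (1 + R) ^ j := by
  induction j with
  | zero => simpa using h.exists_abs_mul_sqrt_pow_le 0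
  | succ j ih =>
    obtain ⟨C, hC0, hC⟩ := ih
    refine ⟨151 * Real.exp 60 * ((j + 1 : ℕ) * C), by positivity, fun ξ hξ R hR => ?_⟩
    rcases hξ.eq_or_lt with rfl | hξ'
    · simpa using by positivity
    have : 0 < √ξ := Real.sqrt_pos.2 hξ'
    have := (h.isSolution_sqrt_sq (j + 1) hξ).mul_abs_le (Real.sqrt_nonneg ξ) hR (h.apply_zero _ ξ)
      (by simp [h.deriv_zero]) (abs_source_le p (A := C / (√(1 + ξ) * √ξ ^ j)) (m := j)
        (by positivity) fun s hs => by
          rw [div_mul_eq_mul_div, le_div_iff₀ (by positivity)]; exact hC ξ hξ s hs)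
    calc _ = √ξ * |p (j + 1) ξ R| * (√(1 + ξ) * √ξ ^ j) := by ring
      _ ≤ 151 * Real.exp 60 * ((1 + R) *
          ((j + 1 : ℕ) * (C / (√(1 + ξ) * √ξ ^ j) * (1 + R) ^ j))) * (√(1 + ξ) * √ξ ^ j) := by
        gcongr
      _ = _ := by field_simp; ring

theorem exists_abs_deriv_mul_sqrt_pow_le (j : ℕ) : ∃ C, 0 ≤ C ∧ ∀ ξ, 0 ≤ ξ → ∀ R, 0 ≤ R →
    |q j ξ R| * √ξ ^ j ≤ C * (1 + R) ^ j := by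
  rcases j with _ | j
  · refine ⟨151 * Real.exp 60, by positivity, fun ξ hξ R hR => ?_⟩
    have := (h.isSolution_sqrt_sq 0 hξ).abs_deriv_le (M := 0) (Real.sqrt_nonneg ξ) hR
      (h.apply_zero 0 ξ) (by simp)
    simpa [h.deriv_zero] using this
  obtain ⟨C, hC0, hC⟩ := h.exists_abs_mul_sqrt_mul_sqrt_pow_le j
  refine ⟨151 * Real.exp 60 * ((j + 1 : ℕ) * C), by positivity, fun ξ hξ R hR => ?_⟩
  rcases hξ.eq_or_lt with rfl | hξ'
  · simpa using by positivity
  have : 0 < √ξ := Real.sqrt_pos.2 hξ'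
  have hle : √ξ ≤ √(1 + ξ) := Real.sqrt_le_sqrt (by linarith)
  have := (h.isSolution_sqrt_sq (j + 1) hξ).abs_deriv_le (Real.sqrt_nonneg ξ) hR (h.apply_zero _ ξ)
    (abs_source_le p (A := C / √ξ ^ (j + 1)) (m := j) (by positivity) fun s hs => by
      rw [div_mul_eq_mul_div, le_div_iff₀ (by positivity)]
      refine le_trans ?_ (hC ξ hξ s hs)
      rw [pow_succ']
      gcongr)
  rw [h.deriv_zero, if_neg j.succ_ne_zero, abs_zero, zero_add] at this
  calc |q (j + 1) ξ R| * √ξ ^ (j + 1) ≤ 151 * Real.exp 60 * ((1 + R) *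
        ((j + 1 : ℕ) * (C / √ξ ^ (j + 1) * (1 + R) ^ j))) * √ξ ^ (j + 1) := by gcongr
    _ = _ := by field_simp; ring

theorem exists_abs_le (j : ℕ) : ∃ C, 0 ≤ C ∧ ∀ ξ, 0 ≤ ξ → ∀ R, 0 ≤ R →
    |p j ξ R| ≤ C * (1 + R) ^ (2 * j) := by
  obtain ⟨C, hC0, hC⟩ := h.exists_abs_mul_sqrt_pow_le j
  refine ⟨C, hC0, fun ξ hξ R hR => (le_mul_of_one_le_right (abs_nonneg _) ?_).trans (hC ξ hξ R hR)⟩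
  exact one_le_pow₀ (Real.one_le_sqrt.2 (by linarith))

theorem exists_abs_deriv_mul_le (j : ℕ) : ∃ C, 0 ≤ C ∧ ∀ ξ, 0 ≤ ξ → ∀ R, 0 ≤ R →
    √ξ * (1 + R) ≤ 1 → |q j ξ R| * (1 + R) ≤ C * (1 + R) ^ (2 * j) := by
  rcases j with _ | j
  · refine ⟨75 * Real.exp 19, by positivity, fun ξ hξ R hR hξR => ?_⟩
    have := (h.isSolution_sqrt_sq 0 hξ).low_energy_bound (M := 0) (Real.sqrt_nonneg ξ) hR hξR
      (h.apply_zero 0 ξ) (by simp)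
    simpa [h.deriv_zero] using this.2
  obtain ⟨C, hC0, hC⟩ := h.exists_abs_le j
  refine ⟨75 * Real.exp 19 * ((j + 1 : ℕ) * C), by positivity, fun ξ hξ R hR hξR => ?_⟩
  have := ((h.isSolution_sqrt_sq (j + 1) hξ).low_energy_bound (Real.sqrt_nonneg ξ) hR hξR
    (h.apply_zero _ ξ) (abs_source_le p hC0 (hC ξ hξ))).2
  rw [h.deriv_zero, if_neg j.succ_ne_zero, abs_zero, zero_add] at this
  exact this.trans_eq (by ring)

end IsSpectralJet

/-! ### Weighted pairings -/

theorem integrableOn_inv_one_add_pow {r : ℝ} (hr : 0 ≤ r) (m : ℕ) :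
    IntegrableOn (fun R : ℝ => ((1 + R) ^ (m + 2))⁻¹) (Ioi r) ∧
      ∫ R in Ioi r, ((1 + R) ^ (m + 2))⁻¹ ≤ ((1 + r) ^ (m + 1))⁻¹ := by
  have hderiv : ∀ x ∈ Ici r, HasDerivAt (fun R : ℝ => -((1 + R) ^ (m + 1))⁻¹ / (m + 1))
      ((1 + x) ^ (m + 2))⁻¹ x := fun x hx => by
    have hx0 : 0 < 1 + x := by linarith [mem_Ici.1 hx]
    refine ((((((hasDerivAt_id x).const_add 1).pow (m + 1)).inv
      (pow_pos hx0 _).ne').neg.div_const ((m : ℝ) + 1))).congr_deriv ?_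
    simp only [id, Nat.add_sub_cancel, Pi.pow_apply]
    push_cast
    field_simp
    ring
  have hlim : Tendsto (fun R : ℝ => -((1 + R) ^ (m + 1))⁻¹ / (m + 1)) atTop (𝓝 0) := by
    simpa using (((tendsto_pow_atTop m.succ_ne_zero).comp
      (tendsto_atTop_add_const_left _ (1 : ℝ) tendsto_id)).inv_tendsto_atTop.neg.div_const
        ((m : ℝ) + 1))
  have hint := integrableOn_Ioi_deriv_of_nonneg' hderiv
    (fun x hx => by have : 0 ≤ x := hr.trans (le_of_lt hx); positivity) hlim
  refine ⟨hint, ?_⟩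
  rw [integral_Ioi_of_hasDerivAt_of_tendsto' hderiv hint hlim, neg_div, sub_neg_eq_add, zero_add]
  exact div_le_self (by positivity) (by linarith [m.cast_nonneg (α := ℝ)])

theorem abs_w_pow_mul_le {n a m : ℕ} {A R x : ℝ} (hR : 0 ≤ R) (h : a + m ≤ 2 * n)
    (hx : |x| ≤ A * (1 + R) ^ a) : |w R ^ n * x| ≤ 4 ^ n * A * ((1 + R) ^ m)⁻¹ := by
  have hw := w_pos R
  have hA : 0 ≤ A := nonneg_of_mul_nonneg_left ((abs_nonneg x).trans hx) (by positivity)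
  rw [abs_mul, abs_of_pos (by positivity), ← div_eq_mul_inv, le_div_iff₀ (by positivity)]
  calc w R ^ n * |x| * (1 + R) ^ m ≤ w R ^ n * (A * (1 + R) ^ a) * (1 + R) ^ m := by gcongr
    _ = w R ^ n * (1 + R) ^ (a + m) * A := by ring
    _ ≤ w R ^ n * (1 + R) ^ (2 * n) * A := by gcongr; linarith
    _ = (w R * (1 + R) ^ 2) ^ n * A := by rw [mul_pow, ← pow_mul]
    _ ≤ 4 ^ n * A := by gcongr; exact w_mul_one_add_sq_le R

theorem integrableOn_w_pow_mul {g : ℝ → ℝ} {n a : ℕ} {A r : ℝ} (hr : 0 ≤ r) (hg : Continuous g)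
    (h : a + 2 ≤ 2 * n) (hA : ∀ R, r ≤ R → |g R| ≤ A * (1 + R) ^ a) :
    IntegrableOn (fun R => w R ^ n * g R) (Ioi r) := by
  refine ((integrableOn_inv_one_add_pow hr 0).1.const_mul (4 ^ n * A)).mono'
    ((contDiff_w.continuous.pow n).mul hg).aestronglyMeasurable ?_
  filter_upwards [ae_restrict_mem measurableSet_Ioi] with R hR
  exact abs_w_pow_mul_le (hr.trans hR.le) h (hA R hR.le)

theorem abs_integral_w_pow_mul_le {g : ℝ → ℝ} {n a m : ℕ} {A r : ℝ} (hr : 0 ≤ r)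
    (h : a + m + 2 ≤ 2 * n) (hA : ∀ R, r ≤ R → |g R| ≤ A * (1 + R) ^ a) :
    |∫ R in Ioi r, w R ^ n * g R| ≤ 4 ^ n * A / (1 + r) ^ (m + 1) := by
  have hA0 : 0 ≤ A := nonneg_of_mul_nonneg_left ((abs_nonneg _).trans (hA r le_rfl)) (by positivity)
  obtain ⟨hint, hle⟩ := integrableOn_inv_one_add_pow hr m
  have hae : ∀ᵐ R ∂volume.restrict (Ioi r),
      ‖w R ^ n * g R‖ ≤ 4 ^ n * A * ((1 + R) ^ (m + 2))⁻¹ := by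
    filter_upwards [ae_restrict_mem measurableSet_Ioi] with R hR
    exact abs_w_pow_mul_le (hr.trans hR.le) (by omega) (hA R hR.le)
  refine (norm_integral_le_of_norm_le (hint.const_mul (4 ^ n * A)) hae).trans ?_
  rw [integral_const_mul, div_eq_mul_inv]
  gcongr

/-- The weighted pairing `∫_r^∞ w^n ∂_ξ^j φ(R, ξ) ∂_η^l φ(R, η) dR` of two entries of a jet. -/
def pairing (p : ℕ → ℝ → ℝ → ℝ) (n : ℕ) (r : ℝ) (j l : ℕ) (ξ η : ℝ) : ℝ :=
  ∫ R in Ioi r, w R ^ n * (p j ξ R * p l η R)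

theorem pairing_comm (p : ℕ → ℝ → ℝ → ℝ) (n : ℕ) (r : ℝ) (j l : ℕ) (ξ η : ℝ) :
    pairing p n r j l ξ η = pairing p n r l j η ξ := by
  simp only [pairing, mul_comm (p j ξ _)]

theorem contDiffOn_succ_of_hasFDerivAt_fst_snd {f a b : ℝ × ℝ → ℝ} {s : Set (ℝ × ℝ)}
    (hs : IsOpen s) {m : ℕ} (h : ∀ x ∈ s, HasFDerivAt f (a x • ContinuousLinearMap.fst ℝ ℝ ℝ +
      b x • ContinuousLinearMap.snd ℝ ℝ ℝ) x)
    (ha : ContDiffOn ℝ m a s) (hb : ContDiffOn ℝ m b s) : ContDiffOn ℝ (m + 1) f s := by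
  rw [contDiffOn_succ_iff_hasFDerivWithinAt_of_uniqueDiffOn hs.uniqueDiffOn]
  exact ⟨fun h => absurd h (by simp), _, (ha.smul contDiffOn_const).add (hb.smul contDiffOn_const),
    fun x hx => (h x hx).hasFDerivWithinAt⟩

theorem setOf_half_min_lt_mem_nhds {x : ℝ × ℝ} (h1 : 0 < x.1) (h2 : 0 < x.2) :
    {y : ℝ × ℝ | min x.1 x.2 / 2 < y.1 ∧ min x.1 x.2 / 2 < y.2} ∈ 𝓝 x :=
  ((isOpen_lt continuous_const continuous_fst).inter
    (isOpen_lt continuous_const continuous_snd)).mem_nhds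
      ⟨(half_lt_self (lt_min h1 h2)).trans_le (min_le_left _ _),
        (half_lt_self (lt_min h1 h2)).trans_le (min_le_right _ _)⟩

namespace IsSpectralJet

variable {p q : ℕ → ℝ → ℝ → ℝ} (h : IsSpectralJet p q)
include h

theorem continuous_mul (j l : ℕ) (ξ η : ℝ) : Continuous fun R => p j ξ R * p l η R :=
  (h.continuous j ξ).mul (h.continuous l η)

theorem aestronglyMeasurable_w_pow_mul (n j l : ℕ) (ξ η : ℝ) {μ : Measure ℝ} :
    AEStronglyMeasurable (fun R => w R ^ n * (p j ξ R * p l η R)) μ :=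
  ((contDiff_w.continuous.pow n).mul (h.continuous_mul j l ξ η)).aestronglyMeasurable

theorem exists_abs_le_of_lt (j : ℕ) {s : ℝ} (hs : 0 < s) : ∃ A, 0 ≤ A ∧ ∀ ξ, s < ξ → ∀ R, 0 ≤ R →
    |p j ξ R| ≤ A * (1 + R) ^ j := by
  obtain ⟨C, hC0, hC⟩ := h.exists_abs_mul_sqrt_mul_sqrt_pow_le j
  refine ⟨C / √s ^ j, by positivity, fun ξ hξ R hR => ?_⟩
  have hs' := Real.sqrt_pos.2 hs
  rw [div_mul_eq_mul_div, le_div_iff₀ (by positivity)]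
  refine le_trans ?_ (hC ξ (hs.trans hξ).le R hR)
  have h1 : 1 ≤ √(1 + ξ) := Real.one_le_sqrt.2 (by linarith)
  have h2 : √s ^ j ≤ √ξ ^ j := by gcongr
  gcongr
  nlinarith [pow_pos hs' j]

theorem exists_abs_mul_le_of_lt (j l : ℕ) {s : ℝ} (hs : 0 < s) : ∃ A, 0 ≤ A ∧ ∀ ξ η, s < ξ →
    s < η → ∀ R, 0 ≤ R → |p j ξ R * p l η R| ≤ A * (1 + R) ^ (j + l) := by
  obtain ⟨A, hA0, hA⟩ := h.exists_abs_le_of_lt j hs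
  obtain ⟨B, hB0, hB⟩ := h.exists_abs_le_of_lt l hs
  refine ⟨A * B, by positivity, fun ξ η hξ hη R hR => ?_⟩
  rw [abs_mul, pow_add, mul_mul_mul_comm]
  gcongr
  exacts [hA ξ hξ R hR, hB η hη R hR]

theorem integrableOn_w_pow_mul {n j l : ℕ} (hn : j + l + 2 ≤ 2 * n) {r ξ η : ℝ} (hr : 0 ≤ r)
    (hξ : 0 < ξ) (hη : 0 < η) : IntegrableOn (fun R => w R ^ n * (p j ξ R * p l η R)) (Ioi r) := by
  obtain ⟨A, -, hA⟩ := h.exists_abs_mul_le_of_lt j l (half_pos (lt_min hξ hη))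
  refine TransferenceKernel.integrableOn_w_pow_mul hr (h.continuous_mul j l ξ η) hn
    fun R hR => hA ξ η ?_ ?_ R (hr.trans hR)
  · exact (half_lt_self (lt_min hξ hη)).trans_le (min_le_left _ _)
  · exact (half_lt_self (lt_min hξ hη)).trans_le (min_le_right _ _)

theorem continuousAt_pairing {n j l : ℕ} (hn : j + l + 2 ≤ 2 * n) {r : ℝ} (hr : 0 ≤ r)
    {x : ℝ × ℝ} (h1 : 0 < x.1) (h2 : 0 < x.2) :
    ContinuousAt (fun x : ℝ × ℝ => pairing p n r j l x.1 x.2) x := by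
  obtain ⟨A, -, hA⟩ := h.exists_abs_mul_le_of_lt j l (half_pos (lt_min h1 h2))
  refine continuousAt_of_dominated
    (Eventually.of_forall fun y => h.aestronglyMeasurable_w_pow_mul n j l y.1 y.2) ?_
    ((integrableOn_inv_one_add_pow hr 0).1.const_mul (4 ^ n * A)) ?_
  · filter_upwards [setOf_half_min_lt_mem_nhds h1 h2] with y hy
    filter_upwards [ae_restrict_mem measurableSet_Ioi] with R hR
    have hR0 := hr.trans (le_of_lt hR)
    exact abs_w_pow_mul_le hR0 hn (hA y.1 y.2 hy.1 hy.2 R hR0)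
  · filter_upwards [ae_restrict_mem measurableSet_Ioi] with R hR
    have hR0 := hr.trans (le_of_lt hR)
    exact continuousAt_const.mul
      (((h.hasDerivAt_spectral j x.1 hR0).continuousAt.comp (f := Prod.fst) continuousAt_fst).mul
        ((h.hasDerivAt_spectral l x.2 hR0).continuousAt.comp (f := Prod.snd) continuousAt_snd))

theorem hasFDerivAt_w_pow_mul (n j l : ℕ) {R : ℝ} (hR : 0 ≤ R) (x : ℝ × ℝ) :
    HasFDerivAt (fun x : ℝ × ℝ => w R ^ n * (p j x.1 R * p l x.2 R))
      ((w R ^ n * (p (j + 1) x.1 R * p l x.2 R)) • ContinuousLinearMap.fst ℝ ℝ ℝ +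
        (w R ^ n * (p j x.1 R * p (l + 1) x.2 R)) • ContinuousLinearMap.snd ℝ ℝ ℝ) x := by
  have hfst : HasFDerivAt (fun x : ℝ × ℝ => p j x.1 R)
      (p (j + 1) x.1 R • ContinuousLinearMap.fst ℝ ℝ ℝ) x :=
    (h.hasDerivAt_spectral j x.1 hR).comp_hasFDerivAt (f := Prod.fst) x hasFDerivAt_fst
  have hsnd : HasFDerivAt (fun x : ℝ × ℝ => p l x.2 R)
      (p (l + 1) x.2 R • ContinuousLinearMap.snd ℝ ℝ ℝ) x :=
    (h.hasDerivAt_spectral l x.2 hR).comp_hasFDerivAt (f := Prod.snd) x hasFDerivAt_snd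
  refine ((hfst.mul hsnd).const_mul (w R ^ n)).congr_fderiv ?_
  ext <;> simp only [ContinuousLinearMap.comp_apply, ContinuousLinearMap.inl_apply,
    ContinuousLinearMap.inr_apply, add_apply, smul_apply,
    ContinuousLinearMap.coe_fst', ContinuousLinearMap.coe_snd', smul_eq_mul] <;> ring

theorem hasFDerivAt_pairing {n j l : ℕ} (hn : j + l + 3 ≤ 2 * n) {r : ℝ} (hr : 0 ≤ r)
    {x : ℝ × ℝ} (h1 : 0 < x.1) (h2 : 0 < x.2) :
    HasFDerivAt (fun x : ℝ × ℝ => pairing p n r j l x.1 x.2)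
      (pairing p n r (j + 1) l x.1 x.2 • ContinuousLinearMap.fst ℝ ℝ ℝ +
        pairing p n r j (l + 1) x.1 x.2 • ContinuousLinearMap.snd ℝ ℝ ℝ) x := by
  obtain ⟨A, -, hA⟩ := h.exists_abs_mul_le_of_lt (j + 1) l (half_pos (lt_min h1 h2))
  obtain ⟨B, -, hB⟩ := h.exists_abs_mul_le_of_lt j (l + 1) (half_pos (lt_min h1 h2))
  have hint := (integrableOn_inv_one_add_pow hr 0).1
  refine (hasFDerivAt_integral_of_dominated_of_fderiv_le (𝕜 := ℝ)
    (F' := fun y R => (w R ^ n * (p (j + 1) y.1 R * p l y.2 R)) • ContinuousLinearMap.fst ℝ ℝ ℝ +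
      (w R ^ n * (p j y.1 R * p (l + 1) y.2 R)) • ContinuousLinearMap.snd ℝ ℝ ℝ)
    (setOf_half_min_lt_mem_nhds h1 h2)
    (Eventually.of_forall fun y => h.aestronglyMeasurable_w_pow_mul n j l y.1 y.2)
    (h.integrableOn_w_pow_mul (by omega) hr h1 h2)
    (((h.aestronglyMeasurable_w_pow_mul n (j + 1) l x.1 x.2).smul_const _).add
      ((h.aestronglyMeasurable_w_pow_mul n j (l + 1) x.1 x.2).smul_const _)) ?_
    ((hint.const_mul (4 ^ n * A)).add (hint.const_mul (4 ^ n * B))) ?_).congr_fderiv ?_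
  · filter_upwards [ae_restrict_mem measurableSet_Ioi] with R hR y hy
    have hR0 := hr.trans (le_of_lt hR)
    refine (norm_add_le _ _).trans (add_le_add ?_ ?_) <;> rw [norm_smul]
    · exact (mul_le_of_le_one_right (norm_nonneg _) (ContinuousLinearMap.norm_fst_le ℝ ℝ ℝ)).trans
        (abs_w_pow_mul_le hR0 (by omega) (hA y.1 y.2 hy.1 hy.2 R hR0))
    · exact (mul_le_of_le_one_right (norm_nonneg _) (ContinuousLinearMap.norm_snd_le ℝ ℝ ℝ)).trans
        (abs_w_pow_mul_le hR0 (by omega) (hB y.1 y.2 hy.1 hy.2 R hR0))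
  · filter_upwards [ae_restrict_mem measurableSet_Ioi] with R hR y _
    exact h.hasFDerivAt_w_pow_mul n j l (hr.trans (le_of_lt hR)) y
  · rw [integral_add, integral_smul_const, integral_smul_const]
    · rfl
    · exact (h.integrableOn_w_pow_mul (by omega) hr h1 h2).smul_const _
    · exact (h.integrableOn_w_pow_mul (by omega) hr h1 h2).smul_const _

theorem contDiffOn_pairing {n : ℕ} {r : ℝ} (hr : 0 ≤ r) (m : ℕ) :
    ∀ {j l : ℕ}, j + l + m + 2 ≤ 2 * n →
    ContDiffOn ℝ m (fun x : ℝ × ℝ => pairing p n r j l x.1 x.2) (Ioi 0 ×ˢ Ioi 0) := by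
  induction m with
  | zero =>
    intro j l hn
    rw [Nat.cast_zero, contDiffOn_zero]
    exact fun x hx => (h.continuousAt_pairing hn hr hx.1 hx.2).continuousWithinAt
  | succ m ih =>
    intro j l hn
    exact contDiffOn_succ_of_hasFDerivAt_fst_snd (isOpen_Ioi.prod isOpen_Ioi)
      (fun x hx => h.hasFDerivAt_pairing (by omega) hr hx.1 hx.2) (ih (by omega)) (ih (by omega))

theorem hasDerivAt_pairing_fst {n j l : ℕ} (hn : j + l + 3 ≤ 2 * n) {r ξ η : ℝ} (hr : 0 ≤ r)
    (hξ : 0 < ξ) (hη : 0 < η) :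
    HasDerivAt (fun ξ => pairing p n r j l ξ η) (pairing p n r (j + 1) l ξ η) ξ := by
  have := (h.hasFDerivAt_pairing hn hr (x := (ξ, η)) hξ hη).comp_hasDerivAt
    (f := fun t : ℝ => (t, η)) ξ ((hasDerivAt_id ξ).prodMk (hasDerivAt_const ξ η))
  exact this.congr_deriv (by simp)

end IsSpectralJet

/-! ### The commutator identity -/

/-- The leading coefficient of `(w ^ n)'' = fstCoeff n * w ^ (n + 1) - sndCoeff n * w ^ (n + 2)`. -/
def fstCoeff (n : ℕ) : ℝ := 2 * n * (2 * n + 1) / 3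

/-- The second coefficient of `(w ^ n)'' = fstCoeff n * w ^ (n + 1) - sndCoeff n * w ^ (n + 2)`. -/
def sndCoeff (n : ℕ) : ℝ := 4 * n * (n + 1) / 3

/-- The derivative of `w ^ n`. -/
def wPowDeriv (n : ℕ) (R : ℝ) : ℝ := -(2 * n / 3) * (R * w R) * w R ^ n

/-- The second derivative of `w ^ n`, as a combination of powers of `w`. -/
def wPowDeriv₂ (n : ℕ) (R : ℝ) : ℝ := fstCoeff n * w R ^ (n + 1) - sndCoeff n * w R ^ (n + 2)

/-- The third derivative of `w ^ n`. -/
def wPowDeriv₃ (n : ℕ) (R : ℝ) : ℝ :=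
  fstCoeff n * wPowDeriv (n + 1) R - sndCoeff n * wPowDeriv (n + 2) R

theorem hasDerivAt_w_pow (n : ℕ) (R : ℝ) : HasDerivAt (fun R => w R ^ n) (wPowDeriv n R) R := by
  refine ((hasDerivAt_w R).pow n).congr_deriv ?_
  rcases n with _ | n
  · simp [wPowDeriv]
  · simp only [wPowDeriv, Nat.add_sub_cancel]; push_cast; ring

theorem hasDerivAt_wPowDeriv (n : ℕ) (R : ℝ) : HasDerivAt (wPowDeriv n) (wPowDeriv₂ n R) R := by
  refine ((((hasDerivAt_id R).mul (hasDerivAt_w R)).const_mul (-(2 * n / 3 : ℝ))).mul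
    (hasDerivAt_w_pow n R)).congr_deriv ?_
  simp only [id, wPowDeriv, wPowDeriv₂, fstCoeff, sndCoeff, Pi.mul_apply]
  linear_combination ((4 * n / 3) * w R ^ (n + 1) + 4 * n ^ 2 / 3 * w R ^ (n + 1)) * w_mul R

theorem hasDerivAt_wPowDeriv₂ (n : ℕ) (R : ℝ) : HasDerivAt (wPowDeriv₂ n) (wPowDeriv₃ n R) R :=
  ((hasDerivAt_w_pow (n + 1) R).const_mul _).sub ((hasDerivAt_w_pow (n + 2) R).const_mul _)

theorem hasDerivAt_wPowDeriv₃ (n : ℕ) (R : ℝ) : HasDerivAt (wPowDeriv₃ n)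
    (fstCoeff n * wPowDeriv₂ (n + 1) R - sndCoeff n * wPowDeriv₂ (n + 2) R) R :=
  ((hasDerivAt_wPowDeriv (n + 1) R).const_mul _).sub
    ((hasDerivAt_wPowDeriv (n + 2) R).const_mul _)

/-- The coefficients `e k` in
`a'''' + 4 V a'' + 2 V' a' = e 0 * w ^ (n + 2) + e 1 * w ^ (n + 3) + e 2 * w ^ (n + 4)`
for `a = w ^ n` and `V = 5 w²`. -/
def commCoeff (n : ℕ) : Fin 3 → ℝ
  | 0 => fstCoeff n * fstCoeff (n + 1)
  | 1 => -fstCoeff n * sndCoeff (n + 1) - sndCoeff n * fstCoeff (n + 2) + 20 * fstCoeff n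
      + 80 * n / 3
  | 2 => sndCoeff n * sndCoeff (n + 2) - 20 * sndCoeff n - 80 * n / 3

/-- The function `a'''' + 4 V a'' + 2 V' a'` for `a = w ^ n` and `V = 5 w²`: what remains of the
double commutator of `𝓛` with `a` besides the terms carrying the energies. -/
def commWeight (n : ℕ) (R : ℝ) : ℝ :=
  commCoeff n 0 * w R ^ (n + 2) + commCoeff n 1 * w R ^ (n + 3) + commCoeff n 2 * w R ^ (n + 4)

/-- The boundary term of the double commutator identity for `w ^ n`, in terms of the values at `R`
of solutions `u` and `v` at energies `ξ` and `η`, of their sources `f` and `g`, and of the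
derivatives of all of these. -/
def boundary (n : ℕ) (ξ η R u u' f f' v v' g g' : ℝ) : ℝ :=
  -(ξ - η) * w R ^ n * (u' * v - u * v') + 2 * wPowDeriv n R * (u' * v')
    - wPowDeriv₂ n R * (u' * v + u * v')
    + (wPowDeriv₃ n R + wPowDeriv n R * (ξ + η + 10 * w R ^ 2)) * (u * v)
    + wPowDeriv n R * (f * v + u * g)
    - w R ^ n * (f' * v - f * v') + w R ^ n * (u' * g - u * g')

theorem hasDerivAt_boundary (n : ℕ) {ξ η : ℝ} {u u' f f' f₂ v v' g g' g₂ : ℝ → ℝ}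
    (hu : IsSolution (coeff ξ) u u' f) (hf : IsSolution (coeff ξ) f f' f₂)
    (hv : IsSolution (coeff η) v v' g) (hg : IsSolution (coeff η) g g' g₂) (R : ℝ) :
    HasDerivAt (fun R => boundary n ξ η R (u R) (u' R) (f R) (f' R) (v R) (v' R) (g R) (g' R))
      (w R ^ n * ((ξ - η) ^ 2 * (u R * v R) + 2 * (ξ - η) * (f R * v R - u R * g R)
          + f₂ R * v R - 2 * (f R * g R) + u R * g₂ R)
        + 2 * wPowDeriv₂ n R * ((ξ + η) * (u R * v R) + f R * v R + u R * g R)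
        + commWeight n R * (u R * v R)) R := by
  have ha := hasDerivAt_w_pow n R
  have ha₁ := hasDerivAt_wPowDeriv n R
  have hu₀ := hu.hasDerivAt R
  have hu₁ := hu.hasDerivAt_deriv R
  have hv₀ := hv.hasDerivAt R
  have hv₁ := hv.hasDerivAt_deriv R
  have hf₀ := hf.hasDerivAt R
  have hg₀ := hg.hasDerivAt R
  have hpot := (((hasDerivAt_w R).pow 2).const_mul 10).const_add (ξ + η)
  refine ((((((((ha.const_mul (-(ξ - η))).mul ((hu₁.mul hv₀).sub (hu₀.mul hv₁))).add
    ((ha₁.const_mul 2).mul (hu₁.mul hv₁))).sub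
    ((hasDerivAt_wPowDeriv₂ n R).mul ((hu₁.mul hv₀).add (hu₀.mul hv₁)))).add
    (((hasDerivAt_wPowDeriv₃ n R).add (ha₁.mul hpot)).mul (hu₀.mul hv₀))).add
    (ha₁.mul ((hf₀.mul hv₀).add (hu₀.mul hg₀)))).sub
    (ha.mul (((hf.hasDerivAt_deriv R).mul hv₀).sub (hf₀.mul hv₁)))).add
    (ha.mul ((hu₁.mul hg₀).sub (hu₀.mul (hg.hasDerivAt_deriv R))))).congr_deriv ?_
  simp only [Pi.mul_apply, Pi.add_apply, Pi.sub_apply, Pi.pow_apply, wPowDeriv, wPowDeriv₂,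
    wPowDeriv₃, coeff, commWeight, commCoeff]
  generalize fstCoeff n = a₀, fstCoeff (n + 1) = a₁, fstCoeff (n + 2) = a₂, sndCoeff n = b₀,
    sndCoeff (n + 1) = b₁, sndCoeff (n + 2) = b₂
  linear_combination (80 * n / 3 * w R ^ (n + 3) * u R * v R) * w_mul R

theorem isBigO_inv_one_add_pow {m k : ℕ} (h : m ≤ k) :
    (fun R : ℝ => ((1 + R) ^ k)⁻¹) =O[𝓟 (Ici 0)] fun R => ((1 + R) ^ m)⁻¹ :=
  isBigO_principal.2 ⟨1, fun R hR => by
    have hR : 0 ≤ R := hR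
    rw [Real.norm_of_nonneg (by positivity), Real.norm_of_nonneg (by positivity), one_mul]
    gcongr
    linarith⟩

theorem isBigO_w_pow (n : ℕ) :
    (fun R => w R ^ n) =O[𝓟 (Ici 0)] fun R => ((1 + R) ^ (2 * n))⁻¹ :=
  isBigO_principal.2 ⟨4 ^ n, fun R hR => by
    have hR : 0 ≤ R := hR
    have := abs_w_pow_mul_le (n := n) (A := 1) (x := 1) (a := 0) (m := 2 * n) hR (by omega)
      (by simp)
    rwa [mul_one, mul_one, ← Real.norm_eq_abs,
      ← Real.norm_of_nonneg (by positivity : 0 ≤ ((1 + R) ^ (2 * n))⁻¹)] at this⟩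

theorem isBigO_wPowDeriv (n : ℕ) :
    wPowDeriv n =O[𝓟 (Ici 0)] fun R => ((1 + R) ^ (2 * n + 1))⁻¹ := by
  have hid : (fun R : ℝ => R) =O[𝓟 (Ici 0)] fun R => 1 + R :=
    isBigO_principal.2 ⟨1, fun R hR => by
      have hR : 0 ≤ R := hR
      rw [Real.norm_of_nonneg hR, Real.norm_of_nonneg (by linarith)]
      linarith⟩
  refine (((hid.mul (isBigO_w_pow 1)).const_mul_left (-(2 * n / 3))).mul
    (isBigO_w_pow n)).congr' (Eventually.of_forall fun R => by simp only [wPowDeriv, pow_one])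
    (eventually_principal.2 fun R hR => ?_)
  have hR : 0 ≤ R := hR
  field_simp
  ring

theorem isBigO_wPowDeriv₂ (n : ℕ) :
    wPowDeriv₂ n =O[𝓟 (Ici 0)] fun R => ((1 + R) ^ (2 * n + 2))⁻¹ :=
  ((isBigO_w_pow (n + 1)).const_mul_left _).sub
    (((isBigO_w_pow (n + 2)).trans (isBigO_inv_one_add_pow (by omega))).const_mul_left _)

theorem isBigO_wPowDeriv₃ (n : ℕ) :
    wPowDeriv₃ n =O[𝓟 (Ici 0)] fun R => ((1 + R) ^ (2 * n + 3))⁻¹ :=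
  ((isBigO_wPowDeriv (n + 1)).const_mul_left _).sub
    (((isBigO_wPowDeriv (n + 2)).trans (isBigO_inv_one_add_pow (by omega))).const_mul_left _)

theorem exists_abs_mul_one_add_pow_le {f : ℝ → ℝ} {m : ℕ}
    (h : f =O[𝓟 (Ici 0)] fun R => ((1 + R) ^ m)⁻¹) :
    ∃ K, 0 ≤ K ∧ ∀ R, 0 ≤ R → |f R * (1 + R) ^ m| ≤ K := by
  obtain ⟨K, hK0, hK⟩ := h.exists_nonneg
  refine ⟨K, hK0, fun R hR => ?_⟩
  have := isBigOWith_principal.1 hK R hR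
  have hpos : 0 < (1 + R) ^ m := by positivity
  rwa [norm_inv, Real.norm_eq_abs, Real.norm_eq_abs, ← div_eq_mul_inv,
    le_div_iff₀ (abs_pos.2 hpos.ne'), ← abs_mul] at this

theorem boundary_mul_pow (n : ℕ) (ξ η R u u' f f' v v' g g' x : ℝ) :
    boundary n ξ η R u u' f f' v v' g g' * x ^ (2 * n + 3) =
      w R ^ n * x ^ (2 * n) * (-(ξ - η) * x ^ 2 * (u' * x * v - u * (v' * x))
        - (f' * x * v - f * (v' * x)) * x ^ 2 + (u' * x * g - u * (g' * x)) * x ^ 2)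
      + wPowDeriv n R * x ^ (2 * n + 1) * (u' * x * (v' * x) + u' * x * (v' * x)
        + ((ξ + η) * x ^ 2 + 10 * w R ^ 2 * x ^ 2) * (u * v) + (f * v + u * g) * x ^ 2)
      - wPowDeriv₂ n R * x ^ (2 * n + 2) * (u' * x * v + u * (v' * x))
      + wPowDeriv₃ n R * x ^ (2 * n + 3) * (u * v) := by
  unfold boundary; ring

theorem abs_add_le_of_abs_le {x y a b : ℝ} (hx : |x| ≤ a) (hy : |y| ≤ b) : |x + y| ≤ a + b :=
  (abs_add_le x y).trans (add_le_add hx hy)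

theorem abs_sub_le_of_abs_le {x y a b : ℝ} (hx : |x| ≤ a) (hy : |y| ≤ b) : |x - y| ≤ a + b :=
  (abs_sub x y).trans (add_le_add hx hy)

theorem abs_mul_le_of_abs_le {x y a b : ℝ} (hx : |x| ≤ a) (hy : |y| ≤ b) : |x * y| ≤ a * b :=
  (abs_mul x y).trans_le (mul_le_mul hx hy (abs_nonneg y) ((abs_nonneg x).trans hx))

theorem exists_abs_boundary_le (n : ℕ) : ∃ K, 0 ≤ K ∧ ∀ {ξ η R u u' f f' v v' g g' a a' b b' : ℝ},
    0 ≤ ξ → 0 ≤ η → 0 ≤ R →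
    |u| ≤ a → |u' * (1 + R)| ≤ a → |f| ≤ a' → |f' * (1 + R)| ≤ a' →
    |v| ≤ b → |v' * (1 + R)| ≤ b → |g| ≤ b' → |g' * (1 + R)| ≤ b' →
    |boundary n ξ η R u u' f f' v v' g g' * (1 + R) ^ (2 * n + 3)| ≤
      K * ((1 + (ξ + η) * (1 + R) ^ 2) * (a * b) + (a' * b + a * b') * (1 + R) ^ 2) := by
  obtain ⟨K₀, hK₀, h₀⟩ := exists_abs_mul_one_add_pow_le (isBigO_w_pow n)
  obtain ⟨K₁, hK₁, h₁⟩ := exists_abs_mul_one_add_pow_le (isBigO_wPowDeriv n)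
  obtain ⟨K₂, hK₂, h₂⟩ := exists_abs_mul_one_add_pow_le (isBigO_wPowDeriv₂ n)
  obtain ⟨K₃, hK₃, h₃⟩ := exists_abs_mul_one_add_pow_le (isBigO_wPowDeriv₃ n)
  refine ⟨4 * K₀ + 44 * K₁ + 2 * K₂ + K₃, by positivity, ?_⟩
  intro ξ η R u u' f f' v v' g g' a a' b b' hξ hη hR hu hu' hf hf' hv hv' hg hg'
  have hw : |10 * w R ^ 2 * (1 + R) ^ 2| ≤ 40 := by
    have := w_pos R
    rw [abs_of_nonneg (by positivity)]
    nlinarith [w_le_one R, w_mul_one_add_sq_le R]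
  have hσ : |(ξ + η) * (1 + R) ^ 2| ≤ (ξ + η) * (1 + R) ^ 2 := (abs_of_nonneg (by positivity)).le
  have hδ : |-(ξ - η) * (1 + R) ^ 2| ≤ (ξ + η) * (1 + R) ^ 2 := by
    rw [abs_mul, abs_neg, abs_of_nonneg (by positivity : 0 ≤ (1 + R) ^ 2)]
    gcongr
    rw [abs_le]; constructor <;> linarith
  have hx : |(1 + R) ^ 2| ≤ (1 + R) ^ 2 := (abs_of_nonneg (by positivity)).le
  set x := 1 + R
  have ha : 0 ≤ a := (abs_nonneg _).trans hu
  have ha' : 0 ≤ a' := (abs_nonneg _).trans hf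
  have hb : 0 ≤ b := (abs_nonneg _).trans hv
  have hb' : 0 ≤ b' := (abs_nonneg _).trans hg
  rw [boundary_mul_pow]
  refine (abs_add_le_of_abs_le (abs_sub_le_of_abs_le (abs_add_le_of_abs_le
    (abs_mul_le_of_abs_le (h₀ R hR) (abs_add_le_of_abs_le (abs_sub_le_of_abs_le
      (abs_mul_le_of_abs_le hδ
        (abs_sub_le_of_abs_le (abs_mul_le_of_abs_le hu' hv) (abs_mul_le_of_abs_le hu hv')))
      (abs_mul_le_of_abs_le
        (abs_sub_le_of_abs_le (abs_mul_le_of_abs_le hf' hv) (abs_mul_le_of_abs_le hf hv')) hx))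
      (abs_mul_le_of_abs_le
        (abs_sub_le_of_abs_le (abs_mul_le_of_abs_le hu' hg) (abs_mul_le_of_abs_le hu hg')) hx)))
    (abs_mul_le_of_abs_le (h₁ R hR) (abs_add_le_of_abs_le (abs_add_le_of_abs_le
      (abs_add_le_of_abs_le (abs_mul_le_of_abs_le hu' hv') (abs_mul_le_of_abs_le hu' hv'))
      (abs_mul_le_of_abs_le (abs_add_le_of_abs_le hσ hw) (abs_mul_le_of_abs_le hu hv)))
      (abs_mul_le_of_abs_le
        (abs_add_le_of_abs_le (abs_mul_le_of_abs_le hf hv) (abs_mul_le_of_abs_le hu hg)) hx))))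
    (abs_mul_le_of_abs_le (h₂ R hR)
      (abs_add_le_of_abs_le (abs_mul_le_of_abs_le hu' hv) (abs_mul_le_of_abs_le hu hv'))))
    (abs_mul_le_of_abs_le (h₃ R hR) (abs_mul_le_of_abs_le hu hv))).trans ?_
  have hab : 0 ≤ a * b := by positivity
  have hσab : 0 ≤ (ξ + η) * x ^ 2 * (a * b) := by positivity
  have hsrc : 0 ≤ (a' * b + a * b') * x ^ 2 := by positivity
  linear_combination 4 * K₀ * hab + 2 * K₀ * hσab + 2 * K₀ * hsrc + 2 * K₁ * hab + 43 * K₁ * hσab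
    + 43 * K₁ * hsrc + 2 * K₂ * hσab + 2 * K₂ * hsrc + K₃ * hσab + K₃ * hsrc

/-- `f` is integrable on `s` with integral `a`. -/
def HasIntegralOn (f : ℝ → ℝ) (s : Set ℝ) (a : ℝ) : Prop :=
  IntegrableOn f s ∧ ∫ x in s, f x = a

namespace HasIntegralOn

variable {f g : ℝ → ℝ} {s : Set ℝ} {a b : ℝ}

theorem add (hf : HasIntegralOn f s a) (hg : HasIntegralOn g s b) :
    HasIntegralOn (fun x => f x + g x) s (a + b) :=
  ⟨hf.1.add hg.1, by rw [integral_add hf.1 hg.1, hf.2, hg.2]⟩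

theorem sub (hf : HasIntegralOn f s a) (hg : HasIntegralOn g s b) :
    HasIntegralOn (fun x => f x - g x) s (a - b) :=
  ⟨hf.1.sub hg.1, by rw [integral_sub hf.1 hg.1, hf.2, hg.2]⟩

theorem const_mul (hf : HasIntegralOn f s a) (c : ℝ) :
    HasIntegralOn (fun x => c * f x) s (c * a) :=
  ⟨hf.1.const_mul c, by rw [integral_const_mul, hf.2]⟩

end HasIntegralOn

/-- The pairing `∫_r^∞ (w^n)'' ∂_ξ^j φ(R, ξ) ∂_η^l φ(R, η) dR`. -/
def pairingDeriv₂ (p : ℕ → ℝ → ℝ → ℝ) (n : ℕ) (r : ℝ) (j l : ℕ) (ξ η : ℝ) : ℝ :=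
  fstCoeff n * pairing p (n + 1) r j l ξ η - sndCoeff n * pairing p (n + 2) r j l ξ η

/-- The pairing `∫_r^∞ commWeight n ∂_ξ^j φ(R, ξ) ∂_η^l φ(R, η) dR`. -/
def commPairing (p : ℕ → ℝ → ℝ → ℝ) (n : ℕ) (r : ℝ) (j l : ℕ) (ξ η : ℝ) : ℝ :=
  commCoeff n 0 * pairing p (n + 2) r j l ξ η + commCoeff n 1 * pairing p (n + 3) r j l ξ η +
    commCoeff n 2 * pairing p (n + 4) r j l ξ η

/-- The part of the double commutator identity that carries one factor `ξ - η`. -/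
def commLinear (p : ℕ → ℝ → ℝ → ℝ) (n : ℕ) (r : ℝ) (j l : ℕ) (ξ η : ℝ) : ℝ :=
  2 * (j * pairing p n r (j - 1) l ξ η - l * pairing p n r j (l - 1) ξ η)

/-- The part of the double commutator identity that carries no factor `ξ - η`. -/
def commConst (p : ℕ → ℝ → ℝ → ℝ) (n : ℕ) (r : ℝ) (j l : ℕ) (ξ η : ℝ) : ℝ :=
  j * (j - 1 : ℕ) * pairing p n r (j - 1 - 1) l ξ η
    - 2 * (j * l) * pairing p n r (j - 1) (l - 1) ξ η
    + l * (l - 1 : ℕ) * pairing p n r j (l - 1 - 1) ξ η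
    + 2 * ((ξ + η) * pairingDeriv₂ p n r j l ξ η + j * pairingDeriv₂ p n r (j - 1) l ξ η
      + l * pairingDeriv₂ p n r j (l - 1) ξ η)
    + commPairing p n r j l ξ η

/-- The boundary term of the double commutator identity for two entries of a jet. -/
def jetBoundary (p q : ℕ → ℝ → ℝ → ℝ) (n j l : ℕ) (ξ η R : ℝ) : ℝ :=
  boundary n ξ η R (p j ξ R) (q j ξ R) (j * p (j - 1) ξ R) (j * q (j - 1) ξ R)
    (p l η R) (q l η R) (l * p (l - 1) η R) (l * q (l - 1) η R)

theorem IsSolution.const_mul {Q u v f : ℝ → ℝ} (h : IsSolution Q u v f) (c : ℝ) :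
    IsSolution Q (fun R => c * u R) (fun R => c * v R) (fun R => c * f R) where
  hasDerivAt R := (h.hasDerivAt R).const_mul c
  hasDerivAt_deriv R := ((h.hasDerivAt_deriv R).const_mul c).congr_deriv (by ring)

namespace IsSpectralJet

variable {p q : ℕ → ℝ → ℝ → ℝ} (h : IsSpectralJet p q)
include h

theorem hasIntegralOn_pairing {n j l : ℕ} (hn : j + l + 2 ≤ 2 * n) {r ξ η : ℝ} (hr : 0 ≤ r)
    (hξ : 0 < ξ) (hη : 0 < η) :
    HasIntegralOn (fun R => w R ^ n * (p j ξ R * p l η R)) (Ioi r) (pairing p n r j l ξ η) :=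
  ⟨h.integrableOn_w_pow_mul hn hr hξ hη, rfl⟩

theorem hasIntegralOn_pairingDeriv₂ {n j l : ℕ} (hn : j + l + 2 ≤ 2 * n) {r ξ η : ℝ} (hr : 0 ≤ r)
    (hξ : 0 < ξ) (hη : 0 < η) :
    HasIntegralOn (fun R => wPowDeriv₂ n R * (p j ξ R * p l η R)) (Ioi r)
      (pairingDeriv₂ p n r j l ξ η) := by
  have hint (k : ℕ) := h.hasIntegralOn_pairing (n := n + k) (j := j) (l := l) (by omega) hr hξ hη
  simpa only [wPowDeriv₂, sub_mul, mul_assoc, pairingDeriv₂] using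
    ((hint 1).const_mul (fstCoeff n)).sub ((hint 2).const_mul (sndCoeff n))

theorem hasIntegralOn_commPairing {n j l : ℕ} (hn : j + l + 2 ≤ 2 * n) {r ξ η : ℝ} (hr : 0 ≤ r)
    (hξ : 0 < ξ) (hη : 0 < η) :
    HasIntegralOn (fun R => commWeight n R * (p j ξ R * p l η R)) (Ioi r)
      (commPairing p n r j l ξ η) := by
  have hint (k : ℕ) := h.hasIntegralOn_pairing (n := n + k) (j := j) (l := l) (by omega) hr hξ hη
  simpa only [commWeight, add_mul, mul_assoc, commPairing] using
    (((hint 2).const_mul (commCoeff n 0)).add ((hint 3).const_mul (commCoeff n 1))).add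
      ((hint 4).const_mul (commCoeff n 2))

theorem hasDerivAt_jetBoundary (n j l : ℕ) (ξ η R : ℝ) :
    HasDerivAt (jetBoundary p q n j l ξ η)
      ((ξ - η) ^ 2 * (w R ^ n * (p j ξ R * p l η R))
        + 2 * (ξ - η) * (j * (w R ^ n * (p (j - 1) ξ R * p l η R))
          - l * (w R ^ n * (p j ξ R * p (l - 1) η R)))
        + j * (j - 1 : ℕ) * (w R ^ n * (p (j - 1 - 1) ξ R * p l η R))
        - 2 * (j * l) * (w R ^ n * (p (j - 1) ξ R * p (l - 1) η R))
        + l * (l - 1 : ℕ) * (w R ^ n * (p j ξ R * p (l - 1 - 1) η R))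
        + 2 * ((ξ + η) * (wPowDeriv₂ n R * (p j ξ R * p l η R))
          + j * (wPowDeriv₂ n R * (p (j - 1) ξ R * p l η R))
          + l * (wPowDeriv₂ n R * (p j ξ R * p (l - 1) η R)))
        + commWeight n R * (p j ξ R * p l η R)) R :=
  (hasDerivAt_boundary n (h.isSolution j ξ) ((h.isSolution (j - 1) ξ).const_mul j)
    (h.isSolution l η) ((h.isSolution (l - 1) η).const_mul l) R).congr_deriv (by ring)

theorem jetBoundary_zero (n j l : ℕ) (ξ η : ℝ) : jetBoundary p q n j l ξ η 0 = 0 := by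
  simp [jetBoundary, boundary, h.apply_zero, wPowDeriv]

theorem exists_abs_mul_le_of_pos (j : ℕ) {ξ : ℝ} (hξ : 0 < ξ) : ∃ C, 0 ≤ C ∧ ∀ R, 0 ≤ R →
    |p j ξ R| ≤ C * (1 + R) ^ (j + 1) ∧ |q j ξ R * (1 + R)| ≤ C * (1 + R) ^ (j + 1) := by
  obtain ⟨A, hA0, hA⟩ := h.exists_abs_le_of_lt j (half_pos hξ)
  obtain ⟨B, hB0, hB⟩ := h.exists_abs_deriv_mul_sqrt_pow_le j
  have := Real.sqrt_pos.2 hξ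
  refine ⟨A + B / √ξ ^ j, by positivity, fun R hR => ⟨?_, ?_⟩⟩
  · calc |p j ξ R| ≤ A * (1 + R) ^ j := hA ξ (half_lt_self hξ) R hR
      _ ≤ (A + B / √ξ ^ j) * (1 + R) ^ (j + 1) := by
        gcongr
        exacts [le_add_of_nonneg_right (by positivity), by linarith, j.le_succ]
  · have hq : |q j ξ R| ≤ B / √ξ ^ j * (1 + R) ^ j := by
      rw [div_mul_eq_mul_div, le_div_iff₀ (by positivity)]
      exact hB ξ hξ.le R hR
    rw [abs_mul, abs_of_nonneg (by positivity : 0 ≤ 1 + R), pow_succ, ← mul_assoc]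
    gcongr
    exact hq.trans (by gcongr; exact le_add_of_nonneg_left hA0)

theorem exists_abs_source_mul_le_of_pos (j : ℕ) {ξ : ℝ} (hξ : 0 < ξ) : ∃ C, 0 ≤ C ∧ ∀ R, 0 ≤ R →
    |j * p (j - 1) ξ R| ≤ C * (1 + R) ^ j ∧ |j * q (j - 1) ξ R * (1 + R)| ≤ C * (1 + R) ^ j := by
  rcases j with _ | j
  · exact ⟨0, le_rfl, by simp⟩
  obtain ⟨C, hC0, hC⟩ := h.exists_abs_mul_le_of_pos j hξ
  refine ⟨(j + 1 : ℕ) * C, by positivity, fun R hR => ⟨?_, ?_⟩⟩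
  · rw [abs_mul, Nat.abs_cast, Nat.add_sub_cancel, mul_assoc]
    gcongr
    exact (hC R hR).1
  · rw [mul_assoc, abs_mul, Nat.abs_cast, Nat.add_sub_cancel, mul_assoc]
    gcongr
    exact (hC R hR).2

theorem tendsto_jetBoundary {n j l : ℕ} (hn : j + l + 2 ≤ 2 * n) {ξ η : ℝ} (hξ : 0 < ξ)
    (hη : 0 < η) : Tendsto (jetBoundary p q n j l ξ η) atTop (𝓝 0) := by
  obtain ⟨K, hK0, hK⟩ := exists_abs_boundary_le n
  obtain ⟨A, hA0, hA⟩ := h.exists_abs_mul_le_of_pos j hξ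
  obtain ⟨A', hA'0, hA'⟩ := h.exists_abs_source_mul_le_of_pos j hξ
  obtain ⟨B, hB0, hB⟩ := h.exists_abs_mul_le_of_pos l hη
  obtain ⟨B', hB'0, hB'⟩ := h.exists_abs_source_mul_le_of_pos l hη
  have hlim : Tendsto (fun R : ℝ => K * ((1 + (ξ + η)) * (A * B) + (A' * B + A * B')) * (1 + R)⁻¹)
      atTop (𝓝 0) := by
    simpa using (tendsto_inv_atTop_zero.comp
      (tendsto_atTop_add_const_left _ (1 : ℝ) tendsto_id)).const_mul
        (K * ((1 + (ξ + η)) * (A * B) + (A' * B + A * B')))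
  refine squeeze_zero_norm' ((eventually_ge_atTop 0).mono fun R hR => ?_) hlim
  have hx : 1 ≤ 1 + R := by linarith
  rw [Real.norm_eq_abs, ← div_eq_mul_inv, le_div_iff₀ (by positivity)]
  refine le_of_mul_le_mul_right ?_ (by positivity : 0 < (1 + R) ^ (2 * n + 2))
  calc |jetBoundary p q n j l ξ η R| * (1 + R) * (1 + R) ^ (2 * n + 2)
      = |jetBoundary p q n j l ξ η R * (1 + R) ^ (2 * n + 3)| := by
        rw [abs_mul, abs_of_nonneg (by positivity : 0 ≤ (1 + R) ^ (2 * n + 3))]; ring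
    _ ≤ K * ((1 + (ξ + η) * (1 + R) ^ 2) * (A * (1 + R) ^ (j + 1) * (B * (1 + R) ^ (l + 1)))
        + (A' * (1 + R) ^ j * (B * (1 + R) ^ (l + 1)) + A * (1 + R) ^ (j + 1) * (B' * (1 + R) ^ l))
          * (1 + R) ^ 2) :=
      hK hξ.le hη.le hR (hA R hR).1 (hA R hR).2 (hA' R hR).1 (hA' R hR).2
        (hB R hR).1 (hB R hR).2 (hB' R hR).1 (hB' R hR).2
    _ = K * ((A * B) * (1 + R) ^ (j + l + 2) + (ξ + η) * (A * B) * (1 + R) ^ (j + l + 4)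
        + (A' * B + A * B') * (1 + R) ^ (j + l + 3)) := by ring
    _ ≤ K * ((A * B) * (1 + R) ^ (2 * n + 2) + (ξ + η) * (A * B) * (1 + R) ^ (2 * n + 2)
        + (A' * B + A * B') * (1 + R) ^ (2 * n + 2)) := by
      gcongr K * (_ * ?_ + _ * ?_ + _ * ?_) <;> exact pow_le_pow_right₀ hx (by omega)
    _ = K * ((1 + (ξ + η)) * (A * B) + (A' * B + A * B')) * (1 + R) ^ (2 * n + 2) := by ring

theorem commutator_identity {n j l : ℕ} (hn : j + l + 2 ≤ 2 * n) {r ξ η : ℝ} (hr : 0 ≤ r)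
    (hξ : 0 < ξ) (hη : 0 < η) :
    (ξ - η) ^ 2 * pairing p n r j l ξ η + (ξ - η) * commLinear p n r j l ξ η
      + commConst p n r j l ξ η = -jetBoundary p q n j l ξ η r := by
  have hI {i k : ℕ} (hik : i + k ≤ j + l) :=
    h.hasIntegralOn_pairing (n := n) (j := i) (l := k) (by omega) hr hξ hη
  have hI₂ {i k : ℕ} (hik : i + k ≤ j + l) :=
    h.hasIntegralOn_pairingDeriv₂ (n := n) (j := i) (l := k) (by omega) hr hξ hη
  have key := ((((((((hI (i := j) (k := l) (by omega)).const_mul ((ξ - η) ^ 2)).add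
    ((((hI (i := j - 1) (k := l) (by omega)).const_mul j).sub
      ((hI (i := j) (k := l - 1) (by omega)).const_mul l)).const_mul (2 * (ξ - η)))).add
    ((hI (i := j - 1 - 1) (k := l) (by omega)).const_mul (j * (j - 1 : ℕ)))).sub
    ((hI (i := j - 1) (k := l - 1) (by omega)).const_mul (2 * (j * l)))).add
    ((hI (i := j) (k := l - 1 - 1) (by omega)).const_mul (l * (l - 1 : ℕ)))).add
    (((((hI₂ (i := j) (k := l) (by omega)).const_mul (ξ + η)).add
      ((hI₂ (i := j - 1) (k := l) (by omega)).const_mul j)).add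
      ((hI₂ (i := j) (k := l - 1) (by omega)).const_mul l)).const_mul 2)).add
    (h.hasIntegralOn_commPairing (j := j) (l := l) hn hr hξ hη))
  have hftc := integral_Ioi_of_hasDerivAt_of_tendsto'
    (fun R _ => h.hasDerivAt_jetBoundary n j l ξ η R) key.1 (h.tendsto_jetBoundary hn hξ hη)
  rw [key.2] at hftc
  unfold commLinear commConst
  linear_combination hftc

end IsSpectralJet

/-! ### High energies -/

theorem abs_pairing_mul_mul_le {p : ℕ → ℝ → ℝ → ℝ} {n a b m j l : ℕ} {r ξ η c d A B : ℝ}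
    (hr : 0 ≤ r) (hc : 0 ≤ c) (hd : 0 ≤ d) (hn : a + b + m + 2 ≤ 2 * n)
    (hA : ∀ R, r ≤ R → |p j ξ R| * c ≤ A * (1 + R) ^ a)
    (hB : ∀ R, r ≤ R → |p l η R| * d ≤ B * (1 + R) ^ b) :
    |pairing p n r j l ξ η| * (c * d) ≤ 4 ^ n * (A * B) / (1 + r) ^ (m + 1) := by
  have hprod (R : ℝ) (hR : r ≤ R) :
      |p j ξ R * p l η R * (c * d)| ≤ A * B * (1 + R) ^ (a + b) := by
    calc |p j ξ R * p l η R * (c * d)| = (|p j ξ R| * c) * (|p l η R| * d) := by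
          rw [abs_mul, abs_mul, abs_of_nonneg (mul_nonneg hc hd)]; ring
      _ ≤ (A * (1 + R) ^ a) * (B * (1 + R) ^ b) :=
        mul_le_mul (hA R hR) (hB R hR) (by positivity)
          ((by positivity : (0 : ℝ) ≤ _).trans (hA R hR))
      _ = A * B * (1 + R) ^ (a + b) := by ring
  refine le_of_eq_of_le ?_ (abs_integral_w_pow_mul_le hr hn hprod)
  simp only [← mul_assoc (w _ ^ n) (p j ξ _ * p l η _), integral_mul_const, abs_mul,
    abs_of_nonneg hc, abs_of_nonneg hd, pairing]

theorem sqrt_add_le_sqrt_add_sqrt {x y : ℝ} (hx : 0 ≤ x) (hy : 0 ≤ y) : √(x + y) ≤ √x + √y := by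
  rw [Real.sqrt_le_left (by positivity), add_sq, Real.sq_sqrt hx, Real.sq_sqrt hy]
  have : 0 ≤ √x * √y := by positivity
  linarith

theorem sqrt_add_le_two_mul_sqrt_add {x y : ℝ} (hx : 0 ≤ x) (hy : 0 ≤ y) :
    √(x + y) ≤ 2 * √x + |√x - √y| := by
  linarith [sqrt_add_le_sqrt_add_sqrt hx hy, neg_abs_le (√x - √y)]

theorem abs_sqrt_sub_sqrt_mul_sqrt_add_le {x y : ℝ} (hx : 0 ≤ x) (hy : 0 ≤ y) :
    |√x - √y| * √(x + y) ≤ |x - y| := by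
  calc |√x - √y| * √(x + y) ≤ |√x - √y| * (√x + √y) := by
        gcongr; exact sqrt_add_le_sqrt_add_sqrt hx hy
    _ = |x - y| := by
      rw [← abs_of_nonneg (by positivity : 0 ≤ √x + √y), ← abs_mul, mul_comm, ← sq_sub_sq,
        Real.sq_sqrt hx, Real.sq_sqrt hy]

theorem sqrt_add_le_mul_sqrt_one_add {x y : ℝ} (hx : 0 ≤ x) (hy : 0 ≤ y) :
    √(x + y) ≤ 2 * (1 + |√x - √y|) * √(1 + x) := by
  have h1 : 1 ≤ √(1 + x) := Real.one_le_sqrt.2 (by linarith)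
  have h2 : √x ≤ √(1 + x) := Real.sqrt_le_sqrt (by linarith)
  nlinarith [sqrt_add_le_two_mul_sqrt_add hx hy, abs_nonneg (√x - √y)]

theorem sqrt_add_le_three_mul_sqrt {x y : ℝ} (hx : 0 ≤ x) (hy : 0 ≤ y) (h : 1 ≤ x + y)
    (hd : |√x - √y| ≤ 1 / 3) : √(x + y) ≤ 3 * √x := by
  linarith [sqrt_add_le_two_mul_sqrt_add hx hy, Real.one_le_sqrt.2 h]

/-- The pairs of positive energies with `ξ + η ≥ 1`. -/
def highEnergies : Set (ℝ × ℝ) := {x | 0 < x.1 ∧ 0 < x.2 ∧ 1 ≤ x.1 + x.2}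

/-- The weight `(1 + |√ξ - √η|)^N (ξ + η)^(M/2)` measuring the size of pairings at high energy. -/
def decayWeight (N M : ℤ) (x : ℝ × ℝ) : ℝ := (1 + |√x.1 - √x.2|) ^ N * √(x.1 + x.2) ^ M

theorem decayWeight_nonneg (N M : ℤ) (x : ℝ × ℝ) : 0 ≤ decayWeight N M x := by
  unfold decayWeight; positivity

theorem isBigO_decayWeight_iff {f : ℝ × ℝ → ℝ} {s : Set (ℝ × ℝ)} (hs : s ⊆ highEnergies)
    {N M : ℤ} : f =O[𝓟 s] decayWeight N M ↔ ∃ C, ∀ x ∈ s,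
      |f x| * (√(x.1 + x.2) ^ (-M) * (1 + |√x.1 - √x.2|) ^ (-N)) ≤ C := by
  rw [isBigO_principal]
  refine exists_congr fun C => forall₂_congr fun x hx => ?_
  have hσ : 0 < √(x.1 + x.2) := Real.sqrt_pos.2 (by linarith [(hs hx).2.2])
  rw [Real.norm_eq_abs, Real.norm_of_nonneg (decayWeight_nonneg N M x), ← div_le_iff₀
    (by unfold decayWeight; positivity), div_eq_mul_inv, decayWeight, mul_inv, ← zpow_neg,
    ← zpow_neg, mul_comm (_ ^ (-N))]

theorem decayWeight_mul {x : ℝ × ℝ} (hx : x ∈ highEnergies) (N M N' M' : ℤ) :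
    decayWeight N M x * decayWeight N' M' x = decayWeight (N + N') (M + M') x := by
  have hσ : 0 < √(x.1 + x.2) := Real.sqrt_pos.2 (by linarith [hx.2.2])
  rw [decayWeight, decayWeight, decayWeight, zpow_add₀ (by positivity), zpow_add₀ hσ.ne',
    mul_mul_mul_comm]

theorem isBigO_decayWeight_of_le {s : Set (ℝ × ℝ)} (hs : s ⊆ highEnergies) {N M N' M' : ℤ}
    (hN : N ≤ N') (hM : M ≤ M') : decayWeight N M =O[𝓟 s] decayWeight N' M' := by
  refine isBigO_principal.2 ⟨1, fun x hx => ?_⟩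
  have hσ : 1 ≤ √(x.1 + x.2) := Real.one_le_sqrt.2 (hs hx).2.2
  have hD : 1 ≤ 1 + |√x.1 - √x.2| := le_add_of_nonneg_right (abs_nonneg _)
  rw [Real.norm_of_nonneg (decayWeight_nonneg _ _ _), Real.norm_of_nonneg
    (decayWeight_nonneg _ _ _), one_mul]
  unfold decayWeight
  gcongr

theorem isBigO_mul_decayWeight {f g : ℝ × ℝ → ℝ} {s : Set (ℝ × ℝ)} (hs : s ⊆ highEnergies)
    {N M N' M' N'' M'' : ℤ} (hf : f =O[𝓟 s] decayWeight N M) (hg : g =O[𝓟 s] decayWeight N' M')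
    (hN : N + N' ≤ N'') (hM : M + M' ≤ M'') :
    (fun x => f x * g x) =O[𝓟 s] decayWeight N'' M'' :=
  ((hf.mul hg).congr' .rfl (eventually_principal.2 fun _ hx => decayWeight_mul (hs hx) ..)).trans
    (isBigO_decayWeight_of_le hs hN hM)

/-- The high energies at which `√ξ` and `√η` are comparable. -/
def nearDiagonal : Set (ℝ × ℝ) := {x ∈ highEnergies | |√x.1 - √x.2| ≤ 1 / 3}

/-- The high energies off the diagonal, where the commutator identity can be divided by
`(ξ - η)²`. -/
def offDiagonal : Set (ℝ × ℝ) := {x ∈ highEnergies | 1 / 3 ≤ |√x.1 - √x.2|}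

theorem nearDiagonal_subset : nearDiagonal ⊆ highEnergies := sep_subset ..

theorem offDiagonal_subset : offDiagonal ⊆ highEnergies := sep_subset ..

theorem swap_mem_nearDiagonal {x : ℝ × ℝ} (hx : x ∈ nearDiagonal) : (x.2, x.1) ∈ nearDiagonal :=
  ⟨⟨hx.1.2.1, hx.1.1, by linarith [hx.1.2.2]⟩, abs_sub_comm (√x.1) (√x.2) ▸ hx.2⟩

theorem isBigO_decayWeight_nearDiagonal (N N' M : ℤ) :
    decayWeight N M =O[𝓟 nearDiagonal] decayWeight N' M := by
  refine isBigO_principal.2 ⟨2 ^ (N - N').toNat, fun x hx => ?_⟩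
  have hD : 1 ≤ 1 + |√x.1 - √x.2| := le_add_of_nonneg_right (abs_nonneg _)
  have hle : (1 + |√x.1 - √x.2|) ^ (N - N') ≤ 2 ^ (N - N').toNat :=
    calc (1 + |√x.1 - √x.2|) ^ (N - N') ≤ (1 + |√x.1 - √x.2|) ^ (N - N').toNat := by
          rw [← zpow_natCast]; exact zpow_le_zpow_right₀ hD (Int.self_le_toNat _)
      _ ≤ 2 ^ (N - N').toNat := by gcongr; linarith [hx.2]
  have hmul := decayWeight_mul hx.1 (N - N') 0 N' M
  rw [sub_add_cancel, zero_add] at hmul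
  rw [← hmul,
    Real.norm_of_nonneg (mul_nonneg (decayWeight_nonneg _ _ _) (decayWeight_nonneg _ _ _)),
    Real.norm_of_nonneg (decayWeight_nonneg _ _ _)]
  refine mul_le_mul_of_nonneg_right ?_ (decayWeight_nonneg _ _ _)
  rwa [decayWeight, zpow_zero, mul_one]

theorem nearDiagonal_union_offDiagonal : nearDiagonal ∪ offDiagonal = highEnergies := by
  simp only [nearDiagonal, offDiagonal, ← sep_or, le_total, sep_true]

theorem isBigO_pairing_of_abs_mul_le {p : ℕ → ℝ → ℝ → ℝ} {s : Set (ℝ × ℝ)}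
    (hs : s ⊆ highEnergies) {n j l a b : ℕ} {A B : ℝ} (hn : a + b + 2 ≤ 2 * n)
    (hA : ∀ x ∈ s, ∀ R, 0 ≤ R →
      |p j x.1 R| * (√(x.1 + x.2) / (1 + |√x.1 - √x.2|)) ^ (j + 1) ≤ A * (1 + R) ^ a)
    (hB : ∀ x ∈ s, ∀ R, 0 ≤ R →
      |p l x.2 R| * (√(x.2 + x.1) / (1 + |√x.2 - √x.1|)) ^ (l + 1) ≤ B * (1 + R) ^ b) :
    (fun x => pairing p n 0 j l x.1 x.2) =O[𝓟 s] decayWeight (2 + j + l) (-(2 + j + l)) := by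
  refine (isBigO_decayWeight_iff hs).2 ⟨4 ^ n * (A * B), fun x hx => ?_⟩
  have hBx := hB x hx
  rw [add_comm x.2, abs_sub_comm] at hBx
  have := abs_pairing_mul_mul_le (m := 0) le_rfl (by positivity) (by positivity) hn
    (hA x hx) hBx
  rw [← pow_add, add_zero, one_pow, div_one, div_pow] at this
  convert this using 2
  rw [neg_neg, zpow_neg, ← div_eq_mul_inv, show (2 + j + l : ℤ) = (j + 1 + (l + 1) : ℕ) by
    push_cast; ring, zpow_natCast, zpow_natCast]

namespace IsSpectralJet

variable {p q : ℕ → ℝ → ℝ → ℝ} (h : IsSpectralJet p q)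
include h

theorem exists_abs_mul_sqrt_add_pow_le (j : ℕ) : ∃ C, 0 ≤ C ∧ ∀ ξ η, 0 ≤ ξ → 0 ≤ η → ∀ R, 0 ≤ R →
    |p j ξ R| * (√(ξ + η) / (1 + |√ξ - √η|)) ^ (j + 1) ≤ C * (1 + R) ^ (2 * j) := by
  obtain ⟨C, hC0, hC⟩ := h.exists_abs_mul_sqrt_pow_le j
  refine ⟨2 ^ (j + 1) * C, by positivity, fun ξ η hξ hη R hR => ?_⟩
  have hle : √(ξ + η) / (1 + |√ξ - √η|) ≤ 2 * √(1 + ξ) := by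
    rw [div_le_iff₀ (by positivity)]
    linarith [sqrt_add_le_mul_sqrt_one_add hξ hη]
  calc |p j ξ R| * (√(ξ + η) / (1 + |√ξ - √η|)) ^ (j + 1)
      ≤ |p j ξ R| * (2 * √(1 + ξ)) ^ (j + 1) := by gcongr
    _ = 2 ^ (j + 1) * (|p j ξ R| * √(1 + ξ) ^ (j + 1)) := by ring
    _ ≤ 2 ^ (j + 1) * C * (1 + R) ^ (2 * j) := by
      rw [mul_assoc]; exact mul_le_mul_of_nonneg_left (hC ξ hξ R hR) (by positivity)

theorem exists_abs_mul_sqrt_add_pow_le_of_nearDiagonal (j : ℕ) : ∃ C, 0 ≤ C ∧ ∀ ξ η,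
    (ξ, η) ∈ nearDiagonal → ∀ R, 0 ≤ R →
    |p j ξ R| * (√(ξ + η) / (1 + |√ξ - √η|)) ^ (j + 1) ≤ C * (1 + R) ^ j := by
  obtain ⟨C, hC0, hC⟩ := h.exists_abs_mul_sqrt_mul_sqrt_pow_le j
  refine ⟨3 ^ (j + 1) * C, by positivity, fun ξ η ⟨⟨hξ, hη, hσ⟩, hd⟩ R hR => ?_⟩
  have hle : √(ξ + η) / (1 + |√ξ - √η|) ≤ 3 * √ξ :=
    (div_le_self (by positivity) (le_add_of_nonneg_right (abs_nonneg _))).trans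
      (sqrt_add_le_three_mul_sqrt hξ.le hη.le hσ hd)
  calc |p j ξ R| * (√(ξ + η) / (1 + |√ξ - √η|)) ^ (j + 1) ≤ |p j ξ R| * (3 * √ξ) ^ (j + 1) := by
        gcongr
    _ = 3 ^ (j + 1) * (|p j ξ R| * (√ξ * √ξ ^ j)) := by ring
    _ ≤ 3 ^ (j + 1) * (|p j ξ R| * (√(1 + ξ) * √ξ ^ j)) := by gcongr; linarith
    _ ≤ 3 ^ (j + 1) * C * (1 + R) ^ j := by
      rw [mul_assoc]; exact mul_le_mul_of_nonneg_left (hC ξ hξ.le R hR) (by positivity)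

theorem isBigO_pairing_highEnergies {n j l : ℕ} (hn : j + l + 1 ≤ n) :
    (fun x => pairing p n 0 j l x.1 x.2) =O[𝓟 highEnergies]
      decayWeight (2 + j + l) (-(2 + j + l)) := by
  obtain ⟨A, -, hA⟩ := h.exists_abs_mul_sqrt_add_pow_le j
  obtain ⟨B, -, hB⟩ := h.exists_abs_mul_sqrt_add_pow_le l
  refine isBigO_pairing_of_abs_mul_le Subset.rfl (a := 2 * j) (b := 2 * l) (by omega)
    (fun x hx => hA x.1 x.2 hx.1.le hx.2.1.le) fun x hx => hB x.2 x.1 hx.2.1.le hx.1.le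

theorem isBigO_pairing_nearDiagonal {n j l : ℕ} (hn : j + l + 2 ≤ 2 * n) (N : ℤ) :
    (fun x => pairing p n 0 j l x.1 x.2) =O[𝓟 nearDiagonal] decayWeight N (-(2 + j + l)) := by
  obtain ⟨A, -, hA⟩ := h.exists_abs_mul_sqrt_add_pow_le_of_nearDiagonal j
  obtain ⟨B, -, hB⟩ := h.exists_abs_mul_sqrt_add_pow_le_of_nearDiagonal l
  exact (isBigO_pairing_of_abs_mul_le nearDiagonal_subset hn (fun x hx => hA x.1 x.2 hx)
    fun x hx => hB x.2 x.1 (swap_mem_nearDiagonal hx)).trans (isBigO_decayWeight_nearDiagonal ..)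

end IsSpectralJet

theorem isBigO_inv_sub_offDiagonal :
    (fun x : ℝ × ℝ => (x.1 - x.2)⁻¹) =O[𝓟 offDiagonal] decayWeight (-1) (-1) := by
  refine (isBigO_decayWeight_iff offDiagonal_subset).2 ⟨4, fun x ⟨⟨h1, h2, _⟩, hd⟩ => ?_⟩
  have hle := abs_sqrt_sub_sqrt_mul_sqrt_add_le h1.le h2.le
  have hpos : 0 < |x.1 - x.2| := lt_of_lt_of_le (by positivity) hle
  rw [neg_neg, zpow_one, zpow_one, abs_inv, inv_mul_le_iff₀ hpos]
  nlinarith [Real.sqrt_nonneg (x.1 + x.2)]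

theorem isBigO_add_highEnergies :
    (fun x : ℝ × ℝ => x.1 + x.2) =O[𝓟 highEnergies] decayWeight 0 2 :=
  .of_bound' <| eventually_principal.2 fun x hx => by
    rw [decayWeight, zpow_zero, one_mul, zpow_ofNat, Real.sq_sqrt (by linarith [hx.2.2])]

section WeightSums

variable {p : ℕ → ℝ → ℝ → ℝ} {n j l : ℕ} {F : Filter (ℝ × ℝ)} {r g : ℝ × ℝ → ℝ}

theorem isBigO_pairingDeriv₂
    (h : ∀ n', n < n' → (fun x => pairing p n' (r x) j l x.1 x.2) =O[F] g) :
    (fun x => pairingDeriv₂ p n (r x) j l x.1 x.2) =O[F] g :=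
  ((h _ (by omega)).const_mul_left _).sub ((h _ (by omega)).const_mul_left _)

theorem isBigO_commPairing
    (h : ∀ n', n + 2 ≤ n' → (fun x => pairing p n' (r x) j l x.1 x.2) =O[F] g) :
    (fun x => commPairing p n (r x) j l x.1 x.2) =O[F] g :=
  (((h _ (by omega)).const_mul_left _).add ((h _ (by omega)).const_mul_left _)).add
    ((h _ (by omega)).const_mul_left _)

end WeightSums

namespace IsSpectralJet

variable {p q : ℕ → ℝ → ℝ → ℝ} (h : IsSpectralJet p q)
include h

theorem pairing_eq_inv_sub_mul {n j l : ℕ} (hn : j + l + 2 ≤ 2 * n) {r ξ η : ℝ} (hr : 0 ≤ r)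
    (hξ : 0 < ξ) (hη : 0 < η) (hne : ξ ≠ η) :
    pairing p n r j l ξ η = -((ξ - η)⁻¹ * commLinear p n r j l ξ η)
      - (ξ - η)⁻¹ * ((ξ - η)⁻¹ * (commConst p n r j l ξ η + jetBoundary p q n j l ξ η r)) := by
  have key := h.commutator_identity hn hr hξ hη
  have := sub_ne_zero.2 hne
  field_simp
  linear_combination key

end IsSpectralJet

theorem isBigO_const_mul_of_ne_zero {α : Type*} {F : Filter α} {f g : α → ℝ} {c : ℝ}
    (h : c ≠ 0 → f =O[F] g) : (fun x => c * f x) =O[F] g := by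
  rcases eq_or_ne c 0 with rfl | hc
  · simpa only [zero_mul] using isBigO_zero g F
  · exact (h hc).const_mul_left c

theorem isBigO_const_mul_of_lower {G : ℕ → ℕ → ℝ × ℝ → ℝ} {m i k : ℕ} {c : ℝ} {M : ℤ} (N : ℤ)
    (hG : ∀ i k, i + k < m → ∀ N : ℤ, G i k =O[𝓟 offDiagonal] decayWeight N (-(2 + i + k)))
    (hc : c ≠ 0 → i + k < m ∧ -(2 + i + k : ℤ) ≤ M) :
    (fun x => c * G i k x) =O[𝓟 offDiagonal] decayWeight N M :=
  isBigO_const_mul_of_ne_zero fun h0 => (hG i k (hc h0).1 N).trans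
    (isBigO_decayWeight_of_le offDiagonal_subset le_rfl (hc h0).2)

namespace IsSpectralJet

variable {p q : ℕ → ℝ → ℝ → ℝ} (h : IsSpectralJet p q)
include h

theorem isBigO_pairing_of_isBigO_lower {n j l : ℕ} {N : ℤ} (hn : j + l + 2 ≤ 2 * n)
    (hlow : ∀ i k, i + k < j + l → ∀ n', n ≤ n' → ∀ N : ℤ,
      (fun x => pairing p n' 0 i k x.1 x.2) =O[𝓟 offDiagonal] decayWeight N (-(2 + i + k)))
    (hweight : ∀ n', n < n' →
      (fun x => pairing p n' 0 j l x.1 x.2) =O[𝓟 offDiagonal] decayWeight N (-(2 + j + l))) :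
    (fun x => pairing p n 0 j l x.1 x.2) =O[𝓟 offDiagonal]
      decayWeight (N - 2) (-(2 + j + l)) := by
  have low₂ (i k : ℕ) (hik : i + k < j + l) (N : ℤ) :
      (fun x : ℝ × ℝ => pairingDeriv₂ p n 0 i k x.1 x.2) =O[𝓟 offDiagonal]
        decayWeight N (-(2 + i + k)) :=
    isBigO_pairingDeriv₂ fun n' hn' => hlow i k hik n' hn'.le N
  replace hlow (i k : ℕ) (hik : i + k < j + l) (N : ℤ) := hlow i k hik n le_rfl N
  have hlinear : (fun x => commLinear p n 0 j l x.1 x.2) =O[𝓟 offDiagonal]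
      decayWeight (N - 1) (-(1 + j + l)) := by
    refine ((isBigO_const_mul_of_lower (N - 1) hlow ?_).sub
      (isBigO_const_mul_of_lower (N - 1) hlow ?_)).const_mul_left 2 <;>
    · intro h0
      have := Nat.cast_ne_zero.1 h0
      omega
  have hconst : (fun x => commConst p n 0 j l x.1 x.2) =O[𝓟 offDiagonal]
      decayWeight N (-(j + l)) := by
    refine ((((isBigO_const_mul_of_lower N hlow ?_).sub (isBigO_const_mul_of_lower N hlow ?_)).add
      (isBigO_const_mul_of_lower N hlow ?_)).add ((((isBigO_mul_decayWeight offDiagonal_subset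
        (isBigO_add_highEnergies.mono (principal_mono.2 offDiagonal_subset))
        (isBigO_pairingDeriv₂ hweight) (by omega) (by omega)).add
      (isBigO_const_mul_of_lower N low₂ ?_)).add
      (isBigO_const_mul_of_lower N low₂ ?_)).const_mul_left 2)).add
      ((isBigO_commPairing fun n' hn' => hweight n' (by omega)).trans
        (isBigO_decayWeight_of_le offDiagonal_subset le_rfl (by omega))) <;>
    · intro h0
      simp only [ne_eq, mul_eq_zero, OfNat.ofNat_ne_zero, Nat.cast_eq_zero, not_or] at h0
      omega
  have hinv := isBigO_inv_sub_offDiagonal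
  have hsub := offDiagonal_subset
  have hquot₁ := isBigO_mul_decayWeight (N'' := N - 2) (M'' := -(2 + j + l)) hsub hinv
    hlinear (by omega) (by omega)
  have hquot₂ := isBigO_mul_decayWeight (N'' := N - 2) (M'' := -(2 + j + l)) hsub hinv
    (isBigO_mul_decayWeight hsub hinv hconst le_rfl le_rfl) (by omega) (by omega)
  refine (hquot₁.neg_left.sub hquot₂).congr' (eventually_principal.2 fun x hx => ?_) .rfl
  have hne : x.1 ≠ x.2 := fun heq => by
    have := hx.2
    rw [heq, sub_self, abs_zero] at this
    norm_num at this
  have key := h.pairing_eq_inv_sub_mul hn le_rfl hx.1.1 hx.1.2.1 hne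
  rw [h.jetBoundary_zero, add_zero] at key
  exact key.symm

theorem isBigO_pairing_offDiagonal_of_lower {j l : ℕ}
    (hlow : ∀ i k, i + k < j + l → ∀ n, 2 ≤ n → i + k ≤ n → ∀ N : ℤ,
      (fun x => pairing p n 0 i k x.1 x.2) =O[𝓟 offDiagonal] decayWeight N (-(2 + i + k)))
    {n : ℕ} (h2 : 2 ≤ n) (hn : j + l ≤ n) (N : ℤ) :
    (fun x => pairing p n 0 j l x.1 x.2) =O[𝓟 offDiagonal] decayWeight N (-(2 + j + l)) := by
  have improve {n : ℕ} (h2 : 2 ≤ n) (hn : j + l ≤ n) {N : ℤ} (hweight : ∀ n', n < n' →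
      (fun x => pairing p n' 0 j l x.1 x.2) =O[𝓟 offDiagonal] decayWeight N (-(2 + j + l))) :
      (fun x => pairing p n 0 j l x.1 x.2) =O[𝓟 offDiagonal] decayWeight (N - 2) (-(2 + j + l)) :=
    h.isBigO_pairing_of_isBigO_lower (by omega) (fun i k hik n' hn' N =>
      hlow i k hik n' (by omega) (by omega) N) hweight
  have iterate (k : ℕ) : ∀ n, 2 ≤ n → j + l + 1 ≤ n →
      (fun x => pairing p n 0 j l x.1 x.2) =O[𝓟 offDiagonal]
        decayWeight (2 + j + l - 2 * k) (-(2 + j + l)) := by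
    induction k with
    | zero =>
      intro n _ hn
      simpa using (h.isBigO_pairing_highEnergies hn).mono (principal_mono.2 offDiagonal_subset)
    | succ k ih =>
      intro n h2 hn
      convert improve h2 (by omega) fun n' hn' => ih n' (by omega) (by omega) using 2
      push_cast
      ring
  have hle := isBigO_decayWeight_of_le offDiagonal_subset
    (by omega : 2 + j + l - 2 * ((2 + j + l - (N + 2)).toNat : ℤ) ≤ N + 2)
    (le_refl (-(2 + j + l : ℤ)))
  simpa using improve h2 hn fun n' hn' => (iterate _ n' (by omega) (by omega)).trans hle

theorem isBigO_pairing_offDiagonal (j l : ℕ) {n : ℕ} (h2 : 2 ≤ n) (hn : j + l ≤ n) (N : ℤ) :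
    (fun x => pairing p n 0 j l x.1 x.2) =O[𝓟 offDiagonal] decayWeight N (-(2 + j + l)) :=
  h.isBigO_pairing_offDiagonal_of_lower
    (fun i k _ _ h2' hn' => isBigO_pairing_offDiagonal i k h2' hn') h2 hn N
termination_by j + l

theorem isBigO_pairing {j l n : ℕ} (h2 : 2 ≤ n) (hn : j + l ≤ n) (N : ℤ) :
    (fun x => pairing p n 0 j l x.1 x.2) =O[𝓟 highEnergies] decayWeight N (-(2 + j + l)) := by
  rw [← nearDiagonal_union_offDiagonal, ← sup_principal, isBigO_sup]
  exact ⟨h.isBigO_pairing_nearDiagonal (by omega) N, h.isBigO_pairing_offDiagonal j l h2 hn N⟩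

end IsSpectralJet

/-! ### Low energies -/

/-- The pairs of positive energies with `ξ + η ≤ 1`. -/
def lowEnergies : Set (ℝ × ℝ) := {x | 0 < x.1 ∧ 0 < x.2 ∧ x.1 + x.2 ≤ 1}

/-- The weight `(ξ + η)^(M/2)` measuring the size of pairings at low energy. -/
def lowWeight (M : ℤ) (x : ℝ × ℝ) : ℝ := √(x.1 + x.2) ^ M

/-- The radius `(ξ + η)^(-1/2) - 1`, up to which the jet still looks like the one at zero energy. -/
def cutoff (x : ℝ × ℝ) : ℝ := (√(x.1 + x.2))⁻¹ - 1

section LowWeight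

variable {x : ℝ × ℝ} {s : Set (ℝ × ℝ)} {f g : ℝ × ℝ → ℝ}

theorem sqrt_add_pos_of_mem_lowEnergies (hx : x ∈ lowEnergies) : 0 < √(x.1 + x.2) :=
  Real.sqrt_pos.2 (add_pos hx.1 hx.2.1)

theorem sqrt_add_le_one_of_mem_lowEnergies (hx : x ∈ lowEnergies) : √(x.1 + x.2) ≤ 1 :=
  Real.sqrt_le_one.2 hx.2.2

theorem one_add_cutoff (x : ℝ × ℝ) : 1 + cutoff x = (√(x.1 + x.2))⁻¹ := by
  rw [cutoff, add_sub_cancel]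

theorem cutoff_nonneg (hx : x ∈ lowEnergies) : 0 ≤ cutoff x :=
  sub_nonneg.2 ((one_le_inv₀ (sqrt_add_pos_of_mem_lowEnergies hx)).2
    (sqrt_add_le_one_of_mem_lowEnergies hx))

theorem isBigO_lowWeight_iff (hs : s ⊆ lowEnergies) {M : ℤ} :
    f =O[𝓟 s] lowWeight M ↔ ∃ C, ∀ x ∈ s, |f x| * √(x.1 + x.2) ^ (-M) ≤ C := by
  rw [isBigO_principal]
  refine exists_congr fun C => forall₂_congr fun x hx => ?_
  have hσ := sqrt_add_pos_of_mem_lowEnergies (hs hx)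
  rw [lowWeight, Real.norm_eq_abs, Real.norm_of_nonneg (by positivity), zpow_neg, ← div_eq_mul_inv,
    div_le_iff₀ (by positivity)]

theorem isBigO_lowWeight_of_le (hs : s ⊆ lowEnergies) {M M' : ℤ} (h : M' ≤ M) :
    lowWeight M =O[𝓟 s] lowWeight M' := by
  refine isBigO_principal.2 ⟨1, fun x hx => ?_⟩
  rw [lowWeight, lowWeight, Real.norm_of_nonneg (by positivity), Real.norm_of_nonneg
    (by positivity), one_mul]
  exact zpow_le_zpow_right_of_le_one₀ (sqrt_add_pos_of_mem_lowEnergies (hs hx))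
    (sqrt_add_le_one_of_mem_lowEnergies (hs hx)) h

theorem isBigO_mul_lowWeight (hs : s ⊆ lowEnergies) {M M' M'' : ℤ} (hf : f =O[𝓟 s] lowWeight M)
    (hg : g =O[𝓟 s] lowWeight M') (h : M'' ≤ M + M') :
    (fun x => f x * g x) =O[𝓟 s] lowWeight M'' :=
  ((hf.mul hg).congr' .rfl (eventually_principal.2 fun _ hx =>
    (zpow_add₀ (sqrt_add_pos_of_mem_lowEnergies (hs hx)).ne' M M').symm)).trans
      (isBigO_lowWeight_of_le hs h)

theorem isBigO_add_lowEnergies : (fun x : ℝ × ℝ => x.1 + x.2) =O[𝓟 lowEnergies] lowWeight 2 :=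
  .of_bound' <| eventually_principal.2 fun x hx => by
    rw [lowWeight, zpow_ofNat, Real.sq_sqrt (add_pos hx.1 hx.2.1).le]

end LowWeight

namespace IsSpectralJet

variable {p q : ℕ → ℝ → ℝ → ℝ} (h : IsSpectralJet p q)
include h

theorem exists_abs_pairing_mul_pow_le {n j l m : ℕ} (hn : 2 * (j + l) + m + 2 ≤ 2 * n) :
    ∃ K, ∀ ξ η r, 0 ≤ ξ → 0 ≤ η → 0 ≤ r → |pairing p n r j l ξ η| * (1 + r) ^ (m + 1) ≤ K := by
  obtain ⟨A, -, hA⟩ := h.exists_abs_le j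
  obtain ⟨B, -, hB⟩ := h.exists_abs_le l
  refine ⟨4 ^ n * (A * B), fun ξ η r hξ hη hr => ?_⟩
  rw [← le_div_iff₀ (by positivity)]
  simpa using abs_pairing_mul_mul_le (c := 1) (d := 1) (a := 2 * j) (b := 2 * l) hr zero_le_one
    zero_le_one (by omega) (fun R hR => by simpa using hA ξ hξ R (hr.trans hR))
    (fun R hR => by simpa using hB η hη R (hr.trans hR))

theorem isBigO_pairing_one {n j l : ℕ} (hn : j + l + 1 ≤ n) :
    (fun x => pairing p n 0 j l x.1 x.2) =O[𝓟 lowEnergies] (1 : ℝ × ℝ → ℝ) := by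
  obtain ⟨K, hK⟩ := h.exists_abs_pairing_mul_pow_le (m := 0)
    (by omega : 2 * (j + l) + 0 + 2 ≤ 2 * n)
  exact isBigO_principal.2 ⟨K, fun x hx => by simpa using hK x.1 x.2 0 hx.1.le hx.2.1.le le_rfl⟩

theorem isBigO_pairing_cutoff {n j l m : ℕ} (hn : 2 * (j + l) + m + 2 ≤ 2 * n) :
    (fun x => pairing p n (cutoff x) j l x.1 x.2) =O[𝓟 lowEnergies] lowWeight (m + 1) := by
  obtain ⟨K, hK⟩ := h.exists_abs_pairing_mul_pow_le hn
  refine (isBigO_lowWeight_iff Subset.rfl).2 ⟨K, fun x hx => ?_⟩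
  have := hK x.1 x.2 (cutoff x) hx.1.le hx.2.1.le (cutoff_nonneg hx)
  rwa [one_add_cutoff, inv_pow, ← zpow_natCast, ← zpow_neg, Nat.cast_succ] at this

theorem exists_abs_sub_zero_le (j : ℕ) : ∃ C, 0 ≤ C ∧ ∀ ξ, 0 ≤ ξ → ∀ R, 0 ≤ R →
    |p j ξ R - p j 0 R| ≤ C * (1 + R) ^ (2 * j + 2) * ξ := by
  obtain ⟨C, hC0, hC⟩ := h.exists_abs_le (j + 1)
  refine ⟨C, hC0, fun ξ hξ R hR => ?_⟩
  simpa [abs_of_nonneg hξ, mul_add] using Convex.norm_image_sub_le_of_norm_hasDerivWithin_le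
    (fun ζ _ => (h.hasDerivAt_spectral j ζ hR).hasDerivWithinAt)
    (fun ζ hζ => hC ζ hζ R hR) (convex_Ici 0) self_mem_Ici hξ

theorem integrableOn_w_pow_mul_of_nonneg {n j l : ℕ} (hn : j + l + 1 ≤ n) {ξ η r : ℝ}
    (hr : 0 ≤ r) (hξ : 0 ≤ ξ) (hη : 0 ≤ η) :
    IntegrableOn (fun R => w R ^ n * (p j ξ R * p l η R)) (Ioi r) := by
  obtain ⟨A, hA0, hA⟩ := h.exists_abs_le j
  obtain ⟨B, -, hB⟩ := h.exists_abs_le l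
  refine TransferenceKernel.integrableOn_w_pow_mul (a := 2 * j + 2 * l) (A := A * B) hr
    (h.continuous_mul j l ξ η) (by omega) fun R hR => ?_
  have hR0 := hr.trans hR
  rw [abs_mul, pow_add, mul_mul_mul_comm]
  gcongr
  exacts [hA ξ hξ R hR0, hB η hη R hR0]

theorem isBigO_pairing_sub_zero {n j l : ℕ} (hn : j + l + 2 ≤ n) :
    (fun x : ℝ × ℝ => pairing p n 0 j l x.1 x.2 - pairing p n 0 j l 0 0)
      =O[𝓟 (Ici 0 ×ˢ Ici 0)] fun x => x.1 + x.2 := by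
  obtain ⟨A, hA0, hA⟩ := h.exists_abs_le j
  obtain ⟨B, hB0, hB⟩ := h.exists_abs_le l
  obtain ⟨A', hA'0, hA'⟩ := h.exists_abs_sub_zero_le j
  obtain ⟨B', hB'0, hB'⟩ := h.exists_abs_sub_zero_le l
  refine isBigO_principal.2 ⟨4 ^ n * (A' * B + A * B'), fun x hx => ?_⟩
  obtain ⟨hξ, hη⟩ : 0 ≤ x.1 ∧ 0 ≤ x.2 := hx
  rw [pairing, pairing, ← integral_sub (h.integrableOn_w_pow_mul_of_nonneg (by omega) le_rfl hξ hη)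
    (h.integrableOn_w_pow_mul_of_nonneg (by omega) le_rfl le_rfl le_rfl)]
  simp only [← mul_sub]
  rw [Real.norm_of_nonneg (add_nonneg hξ hη), Real.norm_eq_abs, mul_assoc]
  refine (abs_integral_w_pow_mul_le (m := 0) (a := 2 * j + 2 * l + 2)
    (A := (A' * B + A * B') * (x.1 + x.2)) le_rfl (by omega) fun R hR => ?_).trans (by simp)
  calc |p j x.1 R * p l x.2 R - p j 0 R * p l 0 R|
      = |(p j x.1 R - p j 0 R) * p l x.2 R + p j 0 R * (p l x.2 R - p l 0 R)| := by
        congr 1; ring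
    _ ≤ A' * (1 + R) ^ (2 * j + 2) * x.1 * (B * (1 + R) ^ (2 * l))
        + A * (1 + R) ^ (2 * j) * (B' * (1 + R) ^ (2 * l + 2) * x.2) := by
      refine (abs_add_le _ _).trans ?_
      rw [abs_mul, abs_mul]
      gcongr
      exacts [hA' _ hξ R hR, hB _ hη R hR, hA 0 le_rfl R hR, hB' _ hη R hR]
    _ = (A' * B * x.1 + A * B' * x.2) * (1 + R) ^ (2 * j + 2 * l + 2) := by ring
    _ ≤ (A' * B + A * B') * (x.1 + x.2) * (1 + R) ^ (2 * j + 2 * l + 2) := by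
      gcongr
      nlinarith [mul_nonneg (mul_nonneg hA'0 hB0) hη, mul_nonneg (mul_nonneg hA0 hB'0) hξ]

theorem hasDerivAt_virial (R : ℝ) :
    HasDerivAt (fun R => R * (q 0 0 R ^ 2 + 5 * w R ^ 2 * p 0 0 R ^ 2) - q 0 0 R * p 0 0 R)
      (20 * (w R ^ 3 * (p 0 0 R * p 0 0 R)) - 10 * (w R ^ 2 * (p 0 0 R * p 0 0 R))) R := by
  have hp := (h.isSolution 0 0).hasDerivAt R
  have hq := (h.isSolution 0 0).hasDerivAt_deriv R
  refine (((hasDerivAt_id R).mul ((hq.pow 2).add ((((hasDerivAt_w R).pow 2).const_mul 5).mul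
    (hp.pow 2)))).sub (hq.mul hp)).congr_deriv ?_
  simp only [id, coeff, Nat.cast_zero, Pi.mul_apply, Pi.pow_apply, Pi.add_apply]
  linear_combination (-20) * w R ^ 2 * p 0 0 R ^ 2 * w_mul R

theorem tendsto_virial :
    Tendsto (fun R => R * (q 0 0 R ^ 2 + 5 * w R ^ 2 * p 0 0 R ^ 2) - q 0 0 R * p 0 0 R)
      atTop (𝓝 0) := by
  obtain ⟨A, _, hA⟩ := h.exists_abs_le 0
  obtain ⟨B, hB0, hB⟩ := h.exists_abs_deriv_mul_le 0
  have hlim : Tendsto (fun R : ℝ => (B ^ 2 + 80 * A ^ 2 + B * A) * (1 + R)⁻¹) atTop (𝓝 0) := by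
    simpa using (tendsto_inv_atTop_zero.comp
      (tendsto_atTop_add_const_left _ (1 : ℝ) tendsto_id)).const_mul (B ^ 2 + 80 * A ^ 2 + B * A)
  refine squeeze_zero_norm' ((eventually_ge_atTop 0).mono fun R hR => ?_) hlim
  have hp : |p 0 0 R| ≤ A := by simpa using hA 0 le_rfl R hR
  have hq : |q 0 0 R| * (1 + R) ≤ B := by simpa using hB 0 le_rfl R hR (by simp)
  have hw := w_mul_one_add_sq_le R
  have hw0 := w_pos R
  rw [Real.norm_eq_abs, ← div_eq_mul_inv, le_div_iff₀ (by positivity)]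
  have hsum : |R * (q 0 0 R ^ 2 + 5 * w R ^ 2 * p 0 0 R ^ 2) - q 0 0 R * p 0 0 R| ≤
      R * (|q 0 0 R| ^ 2 + 5 * w R ^ 2 * |p 0 0 R| ^ 2) + |q 0 0 R| * |p 0 0 R| := by
    rw [sq_abs, sq_abs, ← abs_mul]
    refine (abs_sub _ _).trans_eq ?_
    rw [abs_of_nonneg (by positivity)]
  calc _ ≤ (R * (|q 0 0 R| ^ 2 + 5 * w R ^ 2 * |p 0 0 R| ^ 2) + |q 0 0 R| * |p 0 0 R|)
        * (1 + R) := by gcongr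
    _ ≤ ((1 + R) * (|q 0 0 R| ^ 2 + 5 * w R ^ 2 * |p 0 0 R| ^ 2) + |q 0 0 R| * |p 0 0 R|)
        * (1 + R) := by gcongr; linarith
    _ = (|q 0 0 R| * (1 + R)) ^ 2 + 5 * (w R * (1 + R)) ^ 2 * |p 0 0 R| ^ 2
        + |q 0 0 R| * (1 + R) * |p 0 0 R| := by ring
    _ ≤ B ^ 2 + 5 * 4 ^ 2 * A ^ 2 + B * A := by
      gcongr
      nlinarith
    _ = B ^ 2 + 80 * A ^ 2 + B * A := by ring

-- As `𝓛 φ = 0` at zero energy, `⟨[𝓛, R∂_R] φ, φ⟩ = 0`, that is, `⟨U φ, φ⟩ = 0`.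
theorem virial_zero_energy : 20 * pairing p 3 0 0 0 0 0 - 10 * pairing p 2 0 0 0 0 0 = 0 := by
  have hint (n : ℕ) (hn : 1 ≤ n) := h.integrableOn_w_pow_mul_of_nonneg (n := n) (j := 0) (l := 0)
    (ξ := 0) (η := 0) (by omega) le_rfl le_rfl le_rfl
  have hint₃ := (hint 3 (by norm_num)).const_mul 20
  have hint₂ := (hint 2 (by norm_num)).const_mul 10
  rw [pairing, pairing, ← integral_const_mul, ← integral_const_mul, ← integral_sub hint₃ hint₂,
    integral_Ioi_of_hasDerivAt_of_tendsto' (fun R _ => h.hasDerivAt_virial R) (hint₃.sub hint₂)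
      h.tendsto_virial, h.apply_zero]
  ring

end IsSpectralJet

/-- The low energies with `ξ` and `η` comparable. -/
def lowNearDiagonal : Set (ℝ × ℝ) := {x ∈ lowEnergies | 2 * |x.1 - x.2| ≤ x.1 + x.2}

/-- The low energies off the diagonal, where the commutator identity can be divided by
`(ξ - η)²`. -/
def lowOffDiagonal : Set (ℝ × ℝ) := {x ∈ lowEnergies | x.1 + x.2 ≤ 2 * |x.1 - x.2|}

theorem lowNearDiagonal_subset : lowNearDiagonal ⊆ lowEnergies := sep_subset ..

theorem lowOffDiagonal_subset : lowOffDiagonal ⊆ lowEnergies := sep_subset ..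

theorem lowNearDiagonal_union_lowOffDiagonal : lowNearDiagonal ∪ lowOffDiagonal = lowEnergies := by
  simp only [lowNearDiagonal, lowOffDiagonal, ← sep_or, le_total, sep_true]

theorem swap_mem_lowNearDiagonal {x : ℝ × ℝ} (hx : x ∈ lowNearDiagonal) :
    (x.2, x.1) ∈ lowNearDiagonal :=
  ⟨⟨hx.1.2.1, hx.1.1, by linarith [hx.1.2.2]⟩,
    add_comm x.1 x.2 ▸ abs_sub_comm x.1 x.2 ▸ hx.2⟩

theorem sqrt_add_le_two_mul_sqrt_of_mem_lowNearDiagonal {x : ℝ × ℝ} (hx : x ∈ lowNearDiagonal) :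
    √(x.1 + x.2) ≤ 2 * √x.1 := by
  have hle : x.1 + x.2 ≤ 2 ^ 2 * x.1 := by linarith [neg_abs_le (x.1 - x.2), hx.2]
  simpa using Real.sqrt_le_sqrt hle

theorem ne_of_mem_lowOffDiagonal {x : ℝ × ℝ} (hx : x ∈ lowOffDiagonal) : x.1 ≠ x.2 := fun heq => by
  have := hx.2
  rw [heq, sub_self, abs_zero] at this
  linarith [hx.1.2.1]

theorem isBigO_inv_sub_lowOffDiagonal :
    (fun x : ℝ × ℝ => (x.1 - x.2)⁻¹) =O[𝓟 lowOffDiagonal] lowWeight (-2) := by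
  refine (isBigO_lowWeight_iff lowOffDiagonal_subset).2 ⟨2, fun x hx => ?_⟩
  have hpos : 0 < |x.1 - x.2| := abs_pos.2 (sub_ne_zero.2 (ne_of_mem_lowOffDiagonal hx))
  rw [neg_neg, zpow_ofNat, Real.sq_sqrt (add_pos hx.1.1 hx.1.2.1).le, abs_inv,
    inv_mul_le_iff₀ hpos, mul_comm]
  exact hx.2

namespace IsSpectralJet

variable {p q : ℕ → ℝ → ℝ → ℝ} (h : IsSpectralJet p q)
include h

theorem isBigO_pairing_cutoff_lowNearDiagonal {n j l : ℕ} (h2 : 2 ≤ n) (hn : j + l ≤ n) :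
    (fun x => pairing p n (cutoff x) j l x.1 x.2) =O[𝓟 lowNearDiagonal] lowWeight (-1) := by
  have hdecay (j : ℕ) : ∃ C, ∀ x ∈ lowNearDiagonal, ∀ R, 0 ≤ R →
      |p j x.1 R| * √(x.1 + x.2) ^ j ≤ C * (1 + R) ^ j := by
    obtain ⟨C, _, hC⟩ := h.exists_abs_mul_sqrt_mul_sqrt_pow_le j
    refine ⟨2 ^ j * C, fun x hx R hR => ?_⟩
    calc |p j x.1 R| * √(x.1 + x.2) ^ j ≤ |p j x.1 R| * (1 * (2 * √x.1) ^ j) := by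
          rw [one_mul]; gcongr; exact sqrt_add_le_two_mul_sqrt_of_mem_lowNearDiagonal hx
      _ ≤ |p j x.1 R| * (√(1 + x.1) * (2 * √x.1) ^ j) := by
        gcongr; exact Real.one_le_sqrt.2 (by linarith [hx.1.1])
      _ = 2 ^ j * (|p j x.1 R| * (√(1 + x.1) * √x.1 ^ j)) := by ring
      _ ≤ 2 ^ j * C * (1 + R) ^ j := by
        rw [mul_assoc]; exact mul_le_mul_of_nonneg_left (hC x.1 hx.1.1.le R hR) (by positivity)
  obtain ⟨A, hA⟩ := hdecay j
  obtain ⟨B, hB⟩ := hdecay l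
  have hsub := lowNearDiagonal_subset
  suffices hO : (fun x => pairing p n (cutoff x) j l x.1 x.2) =O[𝓟 lowNearDiagonal]
      lowWeight ((n - 1 : ℕ) - (j + l : ℕ)) from hO.trans (isBigO_lowWeight_of_le hsub (by omega))
  refine (isBigO_lowWeight_iff hsub).2 ⟨4 ^ n * (A * B), fun x hx => ?_⟩
  have hr := cutoff_nonneg (hsub hx)
  have hσ := sqrt_add_pos_of_mem_lowEnergies (hsub hx)
  have key := abs_pairing_mul_mul_le (m := n - 2) hr (by positivity) (by positivity)
    (by omega : j + l + (n - 2) + 2 ≤ 2 * n) (fun R hR => hA x hx R (hr.trans hR))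
    (fun R hR => hB _ (swap_mem_lowNearDiagonal hx) R (hr.trans hR))
  rw [add_comm x.2, ← pow_add, one_add_cutoff, inv_pow, div_inv_eq_mul,
    show n - 2 + 1 = n - 1 by omega] at key
  rwa [neg_sub, zpow_sub₀ hσ.ne', zpow_natCast, zpow_natCast, ← mul_div_assoc,
    div_le_iff₀ (by positivity)]

theorem exists_abs_le_and_abs_deriv_mul_le (j : ℕ) : ∃ C, 0 ≤ C ∧ ∀ ξ, 0 ≤ ξ → ∀ R, 0 ≤ R →
    √ξ * (1 + R) ≤ 1 → |p j ξ R| ≤ C * (1 + R) ^ (2 * j) ∧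
      |q j ξ R * (1 + R)| ≤ C * (1 + R) ^ (2 * j) := by
  obtain ⟨A, hA0, hA⟩ := h.exists_abs_le j
  obtain ⟨B, hB0, hB⟩ := h.exists_abs_deriv_mul_le j
  refine ⟨A + B, by positivity, fun ξ hξ R hR hle => ⟨?_, ?_⟩⟩
  · exact (hA ξ hξ R hR).trans (by gcongr; linarith)
  · rw [abs_mul, abs_of_nonneg (by positivity : 0 ≤ 1 + R)]
    exact (hB ξ hξ R hR hle).trans (by gcongr; linarith)

theorem exists_abs_source_le_div_sq (j : ℕ) : ∃ C, 0 ≤ C ∧ ∀ ξ, 0 ≤ ξ → ∀ R, 0 ≤ R →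
    √ξ * (1 + R) ≤ 1 → |j * p (j - 1) ξ R| ≤ C * (1 + R) ^ (2 * j) / (1 + R) ^ 2 ∧
      |j * q (j - 1) ξ R * (1 + R)| ≤ C * (1 + R) ^ (2 * j) / (1 + R) ^ 2 := by
  rcases j with _ | j
  · exact ⟨0, le_rfl, by simp⟩
  obtain ⟨C, hC0, hC⟩ := h.exists_abs_le_and_abs_deriv_mul_le j
  refine ⟨(j + 1 : ℕ) * C, by positivity, fun ξ hξ R hR hle => ?_⟩
  obtain ⟨hp, hq⟩ := hC ξ hξ R hR hle
  rw [Nat.add_sub_cancel, mul_add 2 j, mul_one, pow_add, ← mul_assoc,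
    mul_div_cancel_right₀ _ (by positivity), mul_assoc _ (q j ξ R), abs_mul, abs_mul, Nat.abs_cast,
    mul_assoc]
  exact ⟨by gcongr, by gcongr⟩

theorem exists_abs_jetBoundary_mul_pow_le (n j l : ℕ) : ∃ K, 0 ≤ K ∧ ∀ ξ η, 0 ≤ ξ → 0 ≤ η →
    ∀ R, 0 ≤ R → √ξ * (1 + R) ≤ 1 → √η * (1 + R) ≤ 1 →
      |jetBoundary p q n j l ξ η R| * (1 + R) ^ (2 * n + 3) ≤ K * (1 + R) ^ (2 * (j + l)) := by
  obtain ⟨K, hK0, hK⟩ := exists_abs_boundary_le n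
  obtain ⟨A, hA0, hA⟩ := h.exists_abs_le_and_abs_deriv_mul_le j
  obtain ⟨B, hB0, hB⟩ := h.exists_abs_le_and_abs_deriv_mul_le l
  obtain ⟨A', hA'0, hA'⟩ := h.exists_abs_source_le_div_sq j
  obtain ⟨B', hB'0, hB'⟩ := h.exists_abs_source_le_div_sq l
  refine ⟨K * (3 * (A * B) + (A' * B + A * B')), by positivity, fun ξ η hξ hη R hR hξR hηR => ?_⟩
  have hsq {ζ : ℝ} (hζ : 0 ≤ ζ) (hle : √ζ * (1 + R) ≤ 1) : ζ * (1 + R) ^ 2 ≤ 1 := by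
    rw [← Real.sq_sqrt hζ, ← mul_pow]
    exact pow_le_one₀ (by positivity) hle
  have hξη : 1 + (ξ + η) * (1 + R) ^ 2 ≤ 3 := by linarith [hsq hξ hξR, hsq hη hηR]
  have hbd := hK hξ hη hR (hA ξ hξ R hR hξR).1 (hA ξ hξ R hR hξR).2
    (hA' ξ hξ R hR hξR).1 (hA' ξ hξ R hR hξR).2 (hB η hη R hR hηR).1 (hB η hη R hR hηR).2
    (hB' η hη R hR hηR).1 (hB' η hη R hR hηR).2
  rw [abs_mul, abs_of_nonneg (by positivity : 0 ≤ (1 + R) ^ (2 * n + 3))] at hbd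
  calc _ ≤ _ := hbd
    _ ≤ K * (3 * (A * (1 + R) ^ (2 * j) * (B * (1 + R) ^ (2 * l)))
        + (A' * (1 + R) ^ (2 * j) / (1 + R) ^ 2 * (B * (1 + R) ^ (2 * l))
          + A * (1 + R) ^ (2 * j) * (B' * (1 + R) ^ (2 * l) / (1 + R) ^ 2)) * (1 + R) ^ 2) := by
      gcongr
    _ = K * (3 * (A * B) + (A' * B + A * B')) * (1 + R) ^ (2 * (j + l)) := by
      rw [mul_add 2 j l, pow_add]
      field_simp

theorem isBigO_jetBoundary_cutoff {n j l : ℕ} (hn : j + l ≤ n) :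
    (fun x => jetBoundary p q n j l x.1 x.2 (cutoff x)) =O[𝓟 lowEnergies] lowWeight 3 := by
  obtain ⟨K, -, hK⟩ := h.exists_abs_jetBoundary_mul_pow_le n j l
  suffices hO : (fun x => jetBoundary p q n j l x.1 x.2 (cutoff x)) =O[𝓟 lowEnergies]
      lowWeight ((2 * n + 3 : ℕ) - (2 * (j + l) : ℕ)) from
    hO.trans (isBigO_lowWeight_of_le Subset.rfl (by omega))
  refine (isBigO_lowWeight_iff Subset.rfl).2 ⟨K, fun x hx => ?_⟩
  have hσ := sqrt_add_pos_of_mem_lowEnergies hx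
  have hle : √x.1 * (1 + cutoff x) ≤ 1 ∧ √x.2 * (1 + cutoff x) ≤ 1 := by
    rw [one_add_cutoff, ← div_eq_mul_inv, ← div_eq_mul_inv, div_le_one hσ, div_le_one hσ]
    exact ⟨Real.sqrt_le_sqrt (le_add_of_nonneg_right hx.2.1.le),
      Real.sqrt_le_sqrt (le_add_of_nonneg_left hx.1.le)⟩
  have key := hK x.1 x.2 hx.1.le hx.2.1.le (cutoff x) (cutoff_nonneg hx) hle.1 hle.2
  rw [one_add_cutoff, inv_pow, inv_pow, ← div_eq_mul_inv, ← div_eq_mul_inv,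
    div_le_div_iff₀ (by positivity) (by positivity)] at key
  rwa [neg_sub, zpow_sub₀ hσ.ne', zpow_natCast, zpow_natCast, ← mul_div_assoc,
    div_le_iff₀ (by positivity)]

theorem isBigO_commLinear_cutoff {n j l : ℕ} (hn : j + l ≤ n) :
    (fun x => commLinear p n (cutoff x) j l x.1 x.2) =O[𝓟 lowEnergies] lowWeight 1 := by
  refine ((isBigO_const_mul_of_ne_zero fun h0 => ?_).sub
    (isBigO_const_mul_of_ne_zero fun h0 => ?_)).const_mul_left 2 <;>
  · have := Nat.cast_ne_zero.1 h0
    exact h.isBigO_pairing_cutoff (m := 0) (by omega)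

theorem isBigO_commConst_cutoff {n j l : ℕ} (hn : j + l ≤ n) :
    (fun x => commConst p n (cutoff x) j l x.1 x.2) =O[𝓟 lowEnergies] lowWeight 3 := by
  have hweight : (fun x : ℝ × ℝ => (x.1 + x.2) * pairingDeriv₂ p n (cutoff x) j l x.1 x.2)
      =O[𝓟 lowEnergies] lowWeight 3 :=
    isBigO_mul_lowWeight (M' := (0 : ℕ) + 1) Subset.rfl isBigO_add_lowEnergies
      (isBigO_pairingDeriv₂ fun n' hn' => h.isBigO_pairing_cutoff (by omega)) (by norm_num)
  have hcomm : (fun x : ℝ × ℝ => commPairing p n (cutoff x) j l x.1 x.2)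
      =O[𝓟 lowEnergies] lowWeight 3 :=
    isBigO_commPairing fun n' hn' => h.isBigO_pairing_cutoff (m := 2) (by omega)
  have hlow {i k : ℕ} (hik : i + k + 2 ≤ j + l) :
      (fun x => pairing p n (cutoff x) i k x.1 x.2) =O[𝓟 lowEnergies] lowWeight 3 :=
    h.isBigO_pairing_cutoff (m := 2) (by omega)
  have hlow₂ {i k : ℕ} (hik : i + k + 1 ≤ j + l) :
      (fun x => pairingDeriv₂ p n (cutoff x) i k x.1 x.2) =O[𝓟 lowEnergies] lowWeight 3 :=
    isBigO_pairingDeriv₂ fun n' hn' => h.isBigO_pairing_cutoff (m := 2) (by omega)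
  refine (((((isBigO_const_mul_of_ne_zero fun h0 => hlow ?_).sub
    (isBigO_const_mul_of_ne_zero fun h0 => hlow ?_)).add
    (isBigO_const_mul_of_ne_zero fun h0 => hlow ?_)).add
    (((hweight.add (isBigO_const_mul_of_ne_zero fun h0 => hlow₂ ?_)).add
      (isBigO_const_mul_of_ne_zero fun h0 => hlow₂ ?_)).const_mul_left 2)).add hcomm) <;>
  · simp only [ne_eq, mul_eq_zero, OfNat.ofNat_ne_zero, Nat.cast_eq_zero, not_or] at h0
    omega

theorem isBigO_pairing_cutoff_lowOffDiagonal {n j l : ℕ} (h2 : 2 ≤ n) (hn : j + l ≤ n) :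
    (fun x => pairing p n (cutoff x) j l x.1 x.2) =O[𝓟 lowOffDiagonal] lowWeight (-1) := by
  have hinv := isBigO_inv_sub_lowOffDiagonal
  have hsub := lowOffDiagonal_subset
  have hmono := principal_mono.2 hsub
  have hquot₁ := isBigO_mul_lowWeight (M'' := -1) hsub hinv
    ((h.isBigO_commLinear_cutoff hn).mono hmono) (by norm_num)
  have hquot₂ := isBigO_mul_lowWeight (M'' := -1) hsub hinv
    (isBigO_mul_lowWeight (M'' := 1) hsub hinv (((h.isBigO_commConst_cutoff hn).add
      (h.isBigO_jetBoundary_cutoff hn)).mono hmono) (by norm_num)) (by norm_num)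
  refine (hquot₁.neg_left.sub hquot₂).congr' (eventually_principal.2 fun x hx => ?_) .rfl
  exact (h.pairing_eq_inv_sub_mul (by omega) (cutoff_nonneg (hsub hx)) hx.1.1 hx.1.2.1
    (ne_of_mem_lowOffDiagonal hx)).symm

theorem isBigO_pairing_sub_cutoff {n j l : ℕ} (h2 : 2 ≤ n) (hn : j + l ≤ n) :
    (fun x => pairing p n 0 j l x.1 x.2 - pairing p n (cutoff x) j l x.1 x.2)
      =O[𝓟 lowEnergies] lowWeight (-1) := by
  obtain ⟨A, hA0, hA⟩ := h.exists_abs_le j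
  obtain ⟨B, hB0, hB⟩ := h.exists_abs_le l
  refine isBigO_principal.2 ⟨4 ^ n * (A * B), fun x hx => ?_⟩
  have hr := cutoff_nonneg hx
  obtain ⟨hξ, hη, -⟩ := hx
  have hint := h.integrableOn_w_pow_mul (n := n) (j := j) (l := l) (by omega) le_rfl hξ hη
  rw [pairing, pairing, intervalIntegral.integral_Ioi_sub_Ioi hint hr]
  refine (intervalIntegral.norm_integral_le_of_norm_le_const (C := 4 ^ n * (A * B))
    fun R hR => ?_).trans ?_
  · rw [uIoc_of_le hr] at hR
    have hR0 : 0 ≤ R := hR.1.le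
    have hprod : |p j x.1 R * p l x.2 R| ≤ A * B * (1 + R) ^ (2 * j + 2 * l) := by
      rw [abs_mul, pow_add, mul_mul_mul_comm]
      exact mul_le_mul (hA _ hξ.le R hR0) (hB _ hη.le R hR0) (abs_nonneg _) (by positivity)
    simpa using abs_w_pow_mul_le (n := n) (m := 0) hR0 (by omega) hprod
  · rw [sub_zero, abs_of_nonneg hr, lowWeight, zpow_neg_one, Real.norm_of_nonneg (by positivity),
      ← one_add_cutoff]
    gcongr
    linarith

theorem isBigO_pairing_lowEnergies {n j l : ℕ} (h2 : 2 ≤ n) (hn : j + l ≤ n) :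
    (fun x => pairing p n 0 j l x.1 x.2) =O[𝓟 lowEnergies] lowWeight (-1) := by
  have htail : (fun x => pairing p n (cutoff x) j l x.1 x.2) =O[𝓟 lowEnergies] lowWeight (-1) := by
    rw [← lowNearDiagonal_union_lowOffDiagonal, ← sup_principal, isBigO_sup]
    exact ⟨h.isBigO_pairing_cutoff_lowNearDiagonal h2 hn,
      h.isBigO_pairing_cutoff_lowOffDiagonal h2 hn⟩
  simpa using (h.isBigO_pairing_sub_cutoff h2 hn).add htail

end IsSpectralJet

/-! ### The kernel -/

theorem U_eq (R : ℝ) : U R = 20 * w R ^ 3 - 10 * w R ^ 2 := by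
  have hx : (0 : ℝ) < 1 + R ^ 2 / 3 := by positivity
  rw [U, w, show 20 * R ^ 2 / 3 = 20 * ((1 + R ^ 2 / 3) - 1) by ring]
  generalize 1 + R ^ 2 / 3 = x at hx
  field_simp
  ring

/-- The derivative `∂_ξ^j ∂_η^l F` of the kernel `F`, with the derivatives falling on the
eigenfunctions; in particular `F = kernelJet p 0 0`. -/
def kernelJet (p : ℕ → ℝ → ℝ → ℝ) (j l : ℕ) (ξ η : ℝ) : ℝ :=
  ∫ R in Ioi (0 : ℝ), U R * p j ξ R * p l η R

theorem kernelJet_comm (p : ℕ → ℝ → ℝ → ℝ) (j l : ℕ) (ξ η : ℝ) :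
    kernelJet p j l ξ η = kernelJet p l j η ξ := by
  simp only [kernelJet, mul_right_comm]

namespace IsSpectralJet

variable {p q : ℕ → ℝ → ℝ → ℝ} (h : IsSpectralJet p q) {j l : ℕ} {ξ η : ℝ}
include h

theorem hasIntegralOn_kernel (hjl : j + l ≤ 2) (hξ : 0 < ξ) (hη : 0 < η) :
    HasIntegralOn (fun R => U R * p j ξ R * p l η R) (Ioi 0)
      (20 * pairing p 3 0 j l ξ η - 10 * pairing p 2 0 j l ξ η) := by
  have hpair (n : ℕ) (hn : 2 ≤ n) :=
    h.hasIntegralOn_pairing (n := n) (j := j) (l := l) (by omega) le_rfl hξ hη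
  convert ((hpair 3 (by norm_num)).const_mul 20).sub ((hpair 2 le_rfl).const_mul 10) using 2 with R
  rw [U_eq]
  ring

theorem kernelJet_eq (hjl : j + l ≤ 2) (hξ : 0 < ξ) (hη : 0 < η) :
    kernelJet p j l ξ η = 20 * pairing p 3 0 j l ξ η - 10 * pairing p 2 0 j l ξ η :=
  (h.hasIntegralOn_kernel hjl hξ hη).2

theorem contDiffOn_kernelJet :
    ContDiffOn ℝ 2 (fun x : ℝ × ℝ => kernelJet p 0 0 x.1 x.2) (Ioi 0 ×ˢ Ioi 0) :=
  ((contDiffOn_const.mul (h.contDiffOn_pairing le_rfl 2 (n := 3) (by norm_num))).sub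
    (contDiffOn_const.mul (h.contDiffOn_pairing le_rfl 2 (n := 2) (by norm_num)))).congr
    fun _ hx => h.kernelJet_eq (by norm_num) hx.1 hx.2

theorem hasDerivAt_kernelJet_fst (hjl : j + l ≤ 1) (hξ : 0 < ξ) (hη : 0 < η) :
    HasDerivAt (fun ξ => kernelJet p j l ξ η) (kernelJet p (j + 1) l ξ η) ξ := by
  rw [h.kernelJet_eq (by omega) hξ hη]
  refine HasDerivAt.congr_of_eventuallyEq
    (((h.hasDerivAt_pairing_fst (by omega) le_rfl hξ hη).const_mul 20).sub
      ((h.hasDerivAt_pairing_fst (by omega) le_rfl hξ hη).const_mul 10)) ?_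
  filter_upwards [lt_mem_nhds hξ] with ζ hζ using h.kernelJet_eq (by omega) hζ hη

theorem hasDerivAt_kernelJet_snd (hjl : j + l ≤ 1) (hξ : 0 < ξ) (hη : 0 < η) :
    HasDerivAt (fun η => kernelJet p j l ξ η) (kernelJet p j (l + 1) ξ η) η := by
  rw [kernelJet_comm p j (l + 1)]
  exact (h.hasDerivAt_kernelJet_fst (by omega) hη hξ).congr_of_eventuallyEq
    (.of_forall fun η => kernelJet_comm p j l ξ η)

theorem deriv_kernelJet_fst (hξ : 0 < ξ) (hη : 0 < η) :
    deriv (fun ξ => kernelJet p 0 0 ξ η) ξ = kernelJet p 1 0 ξ η :=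
  (h.hasDerivAt_kernelJet_fst (by norm_num) hξ hη).deriv

theorem deriv_kernelJet_snd (hξ : 0 < ξ) (hη : 0 < η) :
    deriv (fun η => kernelJet p 0 0 ξ η) η = kernelJet p 0 1 ξ η :=
  (h.hasDerivAt_kernelJet_snd (by norm_num) hξ hη).deriv

theorem deriv_deriv_kernelJet_fst (hξ : 0 < ξ) (hη : 0 < η) :
    deriv (fun ξ' => deriv (fun ξ => kernelJet p 0 0 ξ η) ξ') ξ = kernelJet p 2 0 ξ η :=
  (EventuallyEq.deriv_eq <| by
    filter_upwards [lt_mem_nhds hξ] with ζ hζ using h.deriv_kernelJet_fst hζ hη).trans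
    (h.hasDerivAt_kernelJet_fst (by norm_num) hξ hη).deriv

theorem deriv_deriv_kernelJet_snd (hξ : 0 < ξ) (hη : 0 < η) :
    deriv (fun η' => deriv (fun η => kernelJet p 0 0 ξ η) η') η = kernelJet p 0 2 ξ η :=
  (EventuallyEq.deriv_eq <| by
    filter_upwards [lt_mem_nhds hη] with ζ hζ using h.deriv_kernelJet_snd hξ hζ).trans
    (h.hasDerivAt_kernelJet_snd (by norm_num) hξ hη).deriv

theorem deriv_fst_deriv_snd_kernelJet (hξ : 0 < ξ) (hη : 0 < η) :
    deriv (fun ξ' => deriv (fun η' => kernelJet p 0 0 ξ' η') η) ξ = kernelJet p 1 1 ξ η :=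
  (EventuallyEq.deriv_eq <| by
    filter_upwards [lt_mem_nhds hξ] with ζ hζ using h.deriv_kernelJet_snd hζ hη).trans
    (h.hasDerivAt_kernelJet_fst (by norm_num) hξ hη).deriv

theorem isBigO_kernelJet (hjl : j + l ≤ 2) {s : Set (ℝ × ℝ)} (hs : s ⊆ Ioi 0 ×ˢ Ioi 0)
    {g : ℝ × ℝ → ℝ}
    (hg : ∀ n, 2 ≤ n → (fun x => pairing p n 0 j l x.1 x.2) =O[𝓟 s] g) :
    (fun x => kernelJet p j l x.1 x.2) =O[𝓟 s] g :=
  (((hg 3 (by norm_num)).const_mul_left 20).sub ((hg 2 le_rfl).const_mul_left 10)).congr'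
    (eventually_principal.2 fun _ hx => (h.kernelJet_eq hjl (hs hx).1 (hs hx).2).symm) .rfl

theorem isBigO_kernelJet_zero_zero :
    (fun x => kernelJet p 0 0 x.1 x.2) =O[𝓟 lowEnergies] fun x => x.1 + x.2 := by
  have hle : 𝓟 lowEnergies ≤ 𝓟 (Ici (0 : ℝ) ×ˢ Ici (0 : ℝ)) :=
    principal_mono.2 fun x hx => ⟨hx.1.le, hx.2.1.le⟩
  have hpair (n : ℕ) (hn : 2 ≤ n) := (h.isBigO_pairing_sub_zero (j := 0) (l := 0) hn).mono hle
  refine (((hpair 3 (by norm_num)).const_mul_left 20).sub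
    ((hpair 2 le_rfl).const_mul_left 10)).congr' (eventually_principal.2 fun x hx => ?_) .rfl
  dsimp only
  rw [h.kernelJet_eq (by norm_num) hx.1 hx.2.1]
  linear_combination -h.virial_zero_energy

theorem isBigO_kernelJet_one (hjl : j + l ≤ 1) :
    (fun x => kernelJet p j l x.1 x.2) =O[𝓟 lowEnergies] (1 : ℝ × ℝ → ℝ) :=
  h.isBigO_kernelJet (by omega) (fun _ hx => ⟨hx.1, hx.2.1⟩) fun _ _ =>
    h.isBigO_pairing_one (by omega)

theorem isBigO_kernelJet_lowEnergies (hjl : j + l ≤ 2) :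
    (fun x => kernelJet p j l x.1 x.2) =O[𝓟 lowEnergies] lowWeight (-1) :=
  h.isBigO_kernelJet hjl (fun _ hx => ⟨hx.1, hx.2.1⟩) fun _ hn =>
    h.isBigO_pairing_lowEnergies hn (by omega)

theorem isBigO_kernelJet_highEnergies (N : ℤ) (hjl : j + l ≤ 2) :
    (fun x => kernelJet p j l x.1 x.2) =O[𝓟 highEnergies] decayWeight N (-(2 + j + l)) :=
  h.isBigO_kernelJet hjl (fun _ hx => ⟨hx.1, hx.2.1⟩) fun _ hn => h.isBigO_pairing hn (by omega) N

end IsSpectralJet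

theorem eventually_le_mul_add_of_isBigO {f : ℝ × ℝ → ℝ}
    (hf : f =O[𝓟 lowEnergies] fun x => x.1 + x.2) :
    ∀ᶠ C in atTop, ∀ ξ, 0 < ξ → ∀ η, 0 < η → ξ + η ≤ 1 → f (ξ, η) ≤ C * (ξ + η) := by
  filter_upwards [isBigO_iff_eventually.1 hf] with C hC ξ hξ η hη hσ
  simpa [abs_of_pos (add_pos hξ hη)] using
    (le_abs_self _).trans (eventually_principal.1 hC (ξ, η) ⟨hξ, hη, hσ⟩)

theorem eventually_le_of_isBigO_one {f : ℝ × ℝ → ℝ}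
    (hf : f =O[𝓟 lowEnergies] (1 : ℝ × ℝ → ℝ)) :
    ∀ᶠ C in atTop, ∀ ξ, 0 < ξ → ∀ η, 0 < η → ξ + η ≤ 1 → f (ξ, η) ≤ C := by
  filter_upwards [isBigO_iff_eventually.1 hf] with C hC ξ hξ η hη hσ
  simpa using (le_abs_self _).trans (eventually_principal.1 hC (ξ, η) ⟨hξ, hη, hσ⟩)

theorem eventually_le_div_sqrt_of_isBigO {f : ℝ × ℝ → ℝ}
    (hf : f =O[𝓟 lowEnergies] lowWeight (-1)) :
    ∀ᶠ C in atTop, ∀ ξ, 0 < ξ → ∀ η, 0 < η → ξ + η ≤ 1 → f (ξ, η) ≤ C / √(ξ + η) := by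
  filter_upwards [isBigO_iff_eventually.1 hf] with C hC ξ hξ η hη hσ
  simpa [lowWeight, abs_of_nonneg (Real.sqrt_nonneg _), div_eq_mul_inv] using
    (le_abs_self _).trans (eventually_principal.1 hC (ξ, η) ⟨hξ, hη, hσ⟩)

theorem eventually_le_div_of_isBigO_decayWeight {f : ℝ × ℝ → ℝ} {N k : ℕ}
    (hf : f =O[𝓟 highEnergies] decayWeight (-N) (-k)) :
    ∀ᶠ C in atTop, ∀ ξ, 0 < ξ → ∀ η, 0 < η → 1 ≤ ξ + η →
      f (ξ, η) ≤ C / (√(ξ + η) ^ k * (1 + |√ξ - √η|) ^ N) := by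
  filter_upwards [isBigO_iff_eventually.1 hf] with C hC ξ hξ η hη hσ
  have := (le_abs_self _).trans (eventually_principal.1 hC (ξ, η) ⟨hξ, hη, hσ⟩)
  rwa [Real.norm_of_nonneg (decayWeight_nonneg ..), decayWeight, zpow_neg, zpow_neg, zpow_natCast,
    zpow_natCast, ← mul_inv_rev, ← div_eq_mul_inv] at this

namespace IsSpectralJet

variable {p q : ℕ → ℝ → ℝ → ℝ} (h : IsSpectralJet p q)
include h

theorem eventually_kernelJet_low_bounds :
    ∀ᶠ C in atTop, ∀ ξ, 0 < ξ → ∀ η, 0 < η → ξ + η ≤ 1 →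
      |kernelJet p 0 0 ξ η| ≤ C * (ξ + η) ∧
      |kernelJet p 1 0 ξ η| + |kernelJet p 0 1 ξ η| ≤ C ∧
      |kernelJet p 2 0 ξ η| + |kernelJet p 0 2 ξ η| + |kernelJet p 1 1 ξ η| ≤ C / √(ξ + η) := by
  have hfirst {j l : ℕ} (hjl : j + l ≤ 1) := (h.isBigO_kernelJet_one hjl).abs_left
  have hsecond {j l : ℕ} (hjl : j + l ≤ 2) := (h.isBigO_kernelJet_lowEnergies hjl).abs_left
  filter_upwards [eventually_le_mul_add_of_isBigO h.isBigO_kernelJet_zero_zero.abs_left,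
    eventually_le_of_isBigO_one ((hfirst (j := 1) (l := 0) le_rfl).add
      (hfirst (j := 0) (l := 1) le_rfl)),
    eventually_le_div_sqrt_of_isBigO (((hsecond (j := 2) (l := 0) le_rfl).add
      (hsecond (j := 0) (l := 2) le_rfl)).add (hsecond (j := 1) (l := 1) le_rfl))]
    with C h0 h1 h2 ξ hξ η hη hσ
  exact ⟨h0 ξ hξ η hη hσ, h1 ξ hξ η hη hσ, h2 ξ hξ η hη hσ⟩

theorem eventually_kernelJet_high_bounds (N : ℕ) :
    ∀ᶠ C in atTop, ∀ ξ, 0 < ξ → ∀ η, 0 < η → 1 ≤ ξ + η →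
      |kernelJet p 0 0 ξ η| ≤ C / ((ξ + η) * (1 + |√ξ - √η|) ^ N) ∧
      |kernelJet p 1 0 ξ η| + |kernelJet p 0 1 ξ η|
        ≤ C / ((ξ + η) * √(ξ + η) * (1 + |√ξ - √η|) ^ N) ∧
      |kernelJet p 2 0 ξ η| + |kernelJet p 0 2 ξ η| + |kernelJet p 1 1 ξ η|
        ≤ C / ((ξ + η) ^ 2 * (1 + |√ξ - √η|) ^ N) := by
  have hO {j l : ℕ} (k : ℕ) (hk : k = 2 + j + l) (hjl : j + l ≤ 2) :
      (fun x => |kernelJet p j l x.1 x.2|) =O[𝓟 highEnergies] decayWeight (-N) (-k) := by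
    rw [hk]
    exact mod_cast (h.isBigO_kernelJet_highEnergies (-N) hjl).abs_left
  filter_upwards [eventually_le_div_of_isBigO_decayWeight (hO (j := 0) (l := 0) 2 rfl (by simp)),
    eventually_le_div_of_isBigO_decayWeight ((hO (j := 1) (l := 0) 3 rfl (by simp)).add
      (hO (j := 0) (l := 1) 3 rfl (by simp))),
    eventually_le_div_of_isBigO_decayWeight (((hO (j := 2) (l := 0) 4 rfl le_rfl).add
      (hO (j := 0) (l := 2) 4 rfl le_rfl)).add (hO (j := 1) (l := 1) 4 rfl le_rfl))]
    with C h0 h1 h2 ξ hξ η hη hσ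
  have hsq : √(ξ + η) ^ 2 = ξ + η := Real.sq_sqrt (add_pos hξ hη).le
  have hfour : √(ξ + η) ^ 4 = (ξ + η) ^ 2 := by rw [← hsq, ← pow_mul, hsq]
  refine ⟨?_, ?_, ?_⟩
  · simpa only [hsq] using h0 ξ hξ η hη hσ
  · simpa only [pow_succ _ 2, hsq] using h1 ξ hξ η hη hσ
  · simpa only [hfour] using h2 ξ hξ η hη hσ

end IsSpectralJet

/-- Symmetry, `C²` regularity and pointwise bounds for
`F(ξ,η) = ∫₀^∞ U(R) φ(R,ξ) φ(R,η) dR`. -/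
theorem F_kernel_bounds
    (φ : ℝ → ℝ → ℝ)
    (hφ : ∀ ξ : ℝ,
      φ ξ 0 = 0 ∧ deriv (φ ξ) 0 = 1 ∧
      (∀ R : ℝ, HasDerivAt (φ ξ) (deriv (φ ξ) R) R) ∧
      (∀ R : ℝ, HasDerivAt (deriv (φ ξ)) (deriv (deriv (φ ξ)) R) R) ∧
      (∀ R : ℝ, - deriv (deriv (φ ξ)) R - (5 / (1 + R ^ 2 / 3) ^ 2) * φ ξ R = ξ * φ ξ R)) :
    let F : ℝ → ℝ → ℝ := fun ξ η => ∫ R in Set.Ioi (0 : ℝ), U R * φ ξ R * φ η R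
    -- the defining integral converges
    (∀ ξ : ℝ, 0 < ξ → ∀ η : ℝ, 0 < η →
      IntegrableOn (fun R => U R * φ ξ R * φ η R) (Set.Ioi 0)) ∧
    -- symmetry
    (∀ ξ : ℝ, 0 < ξ → ∀ η : ℝ, 0 < η → F ξ η = F η ξ) ∧
    -- C² regularity on (0,∞) × (0,∞)
    ContDiffOn ℝ 2 (fun p : ℝ × ℝ => F p.1 p.2) (Set.Ioi 0 ×ˢ Set.Ioi 0) ∧
    -- pointwise bounds
    (∀ N : ℕ, ∃ C : ℝ, 0 < C ∧ ∀ ξ : ℝ, 0 < ξ → ∀ η : ℝ, 0 < η →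
      (ξ + η ≤ 1 → |F ξ η| ≤ C * (ξ + η)) ∧
      (1 ≤ ξ + η →
        |F ξ η| ≤ C / ((ξ + η) * (1 + |Real.sqrt ξ - Real.sqrt η|) ^ N)) ∧
      (ξ + η ≤ 1 →
        |deriv (fun ξ' => F ξ' η) ξ| + |deriv (fun η' => F ξ η') η| ≤ C) ∧
      (1 ≤ ξ + η →
        |deriv (fun ξ' => F ξ' η) ξ| + |deriv (fun η' => F ξ η') η|
          ≤ C / ((ξ + η) * Real.sqrt (ξ + η) * (1 + |Real.sqrt ξ - Real.sqrt η|) ^ N)) ∧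
      (ξ + η ≤ 1 →
        |deriv (fun ξ' => deriv (fun ξ'' => F ξ'' η) ξ') ξ|
          + |deriv (fun η' => deriv (fun η'' => F ξ η'') η') η|
          + |deriv (fun ξ' => deriv (fun η' => F ξ' η') η) ξ|
          ≤ C / Real.sqrt (ξ + η)) ∧
      (1 ≤ ξ + η →
        |deriv (fun ξ' => deriv (fun ξ'' => F ξ'' η) ξ') ξ|
          + |deriv (fun η' => deriv (fun η'' => F ξ η'') η') η|
          + |deriv (fun ξ' => deriv (fun η' => F ξ' η') η) ξ|
          ≤ C / ((ξ + η) ^ 2 * (1 + |Real.sqrt ξ - Real.sqrt η|) ^ N))) := by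
  intro F
  have hsol (ξ : ℝ) : IsSolution (coeff ξ) (φ ξ) (deriv (φ ξ)) 0 :=
    ⟨(hφ ξ).2.2.1, fun R => ((hφ ξ).2.2.2.1 R).congr_deriv (by
      rw [coeff_eq, Pi.zero_apply]; linear_combination -(hφ ξ).2.2.2.2 R)⟩
  obtain ⟨p, q, h, rfl⟩ := exists_isSpectralJet hsol (fun ξ => (hφ ξ).1) fun ξ => (hφ ξ).2.1
  refine ⟨fun ξ hξ η hη => (h.hasIntegralOn_kernel (by norm_num) hξ hη).1,
    fun ξ _ η _ => kernelJet_comm p 0 0 ξ η, h.contDiffOn_kernelJet, fun N => ?_⟩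
  obtain ⟨C, hC, hlow, hhigh⟩ := ((eventually_gt_atTop (0 : ℝ)).and
    (h.eventually_kernelJet_low_bounds.and (h.eventually_kernelJet_high_bounds N))).exists
  refine ⟨C, hC, fun ξ hξ η hη => ?_⟩
  have hF : F = kernelJet p 0 0 := rfl
  rw [hF, h.deriv_kernelJet_fst hξ hη, h.deriv_kernelJet_snd hξ hη,
    h.deriv_deriv_kernelJet_fst hξ hη, h.deriv_deriv_kernelJet_snd hξ hη,
    h.deriv_fst_deriv_snd_kernelJet hξ hη]
  exact ⟨fun hσ => (hlow ξ hξ η hη hσ).1, fun hσ => (hhigh ξ hξ η hη hσ).1,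
    fun hσ => (hlow ξ hξ η hη hσ).2.1, fun hσ => (hhigh ξ hξ η hη hσ).2.1,
    fun hσ => (hlow ξ hξ η hη hσ).2.2, fun hσ => (hhigh ξ hξ η hη hσ).2.2⟩

end TransferenceKernel
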